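/- arXiv:1502.03304 — 9 statements merged into one kernel-verified Lean document; each statement's English description precedes it below -/
import Mathlib

section
/- Suppose (π,V) is an irreducible finite-dimensional complex representation of G such that π^{h₀} is equivalent to π. Then: (1) there exists a linear automorphism A of V with A·π(g)·A⁻¹ = π(h₀gh₀⁻¹) for all g ∈ G and A² = π(h₀²); (2) any two such automorphisms A differ by multiplication by ±1; (3) for each such A, the map Π : ᵉG → GL(V) defined by Π(g) = π(g) and Π(g h₀) = π(g)·A for g ∈ G is a group homomorphism extending π to ᵉG. -/
/-!
By Schur's lemma, operators commuting with `π` are scalars. If `T` intertwines `π` with its twist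
by `h₀`, then `π(h₀²)⁻¹ T²` commutes with `π`, so `T² = c π(h₀²)` with `c ≠ 0`; dividing `T` by a
square root of `c` gives `A`. Two normalized intertwiners satisfy `A' = c A` because `A⁻¹ A'`
commutes with `π`, and comparing squares gives `c² = 1`. The extension is `Φ x = π(x)` on `G` and
`Φ x = π(x h₀⁻¹) A` off `G`; multiplicativity is a check on the four pairs of cosets, in which the
intertwining relation moves `A` to the right and `A² = π(h₀²)` absorbs it.
-/

/-- Schur's lemma: an eigenspace of an operator commuting with an irreducible `π` is invariant,
hence everything. -/
lemma schur_scalar {H V : Type*} [Group H] [AddCommGroup V] [Module ℂ V]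
    [FiniteDimensional ℂ V] [Nontrivial V] (π : Representation ℂ H V)
    (hirr : ∀ U : Submodule ℂ V, (∀ (g : H), ∀ v ∈ U, π g v ∈ U) → U = ⊥ ∨ U = ⊤)
    (B : Module.End ℂ V) (hB : ∀ g, B * π g = π g * B) : ∃ c : ℂ, B = c • 1 := by
  obtain ⟨c, hc⟩ := Module.End.exists_eigenvalue B
  refine ⟨c, ?_⟩
  have hinv : ∀ (g : H), ∀ v ∈ B.eigenspace c, π g v ∈ B.eigenspace c := by
    intro g v hv
    rw [Module.End.mem_eigenspace_iff] at hv ⊢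
    have h := LinearMap.congr_fun (hB g) v
    simp only [Module.End.mul_apply] at h
    rw [h, hv, map_smul]
  have htop := (hirr _ hinv).resolve_left hc
  ext v
  have hv : v ∈ B.eigenspace c := htop ▸ Submodule.mem_top
  simpa using Module.End.mem_eigenspace_iff.mp hv

/-- A normalized intertwiner extends `π`. -/
lemma exists_extension {E V : Type*} [Group E] (G : Subgroup E) [G.Normal]
    (hidx : G.index = 2) (h₀ : E) (hh₀ : h₀ ∉ G) (hsq : h₀ * h₀ ∈ G)
    [AddCommGroup V] [Module ℂ V] (π : Representation ℂ G V) (A : Module.End ℂ V)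
    (hA : ∀ g : G, A * π g = π ((MulAut.conjNormal h₀) g) * A)
    (hA2 : A * A = π ⟨h₀ * h₀, hsq⟩) :
    ∃ Φ : E →* Module.End ℂ V,
      (∀ g : G, Φ ↑g = π g) ∧ (∀ g : G, Φ (↑g * h₀) = π g * A) := by
  classical
  have hmem : ∀ x y : E, x * y ∈ G ↔ (x ∈ G ↔ y ∈ G) :=
    fun x y => Subgroup.mul_mem_iff_of_index_two hidx
  have hout : ∀ x : E, x ∉ G → x * h₀⁻¹ ∈ G := fun x hx => by
    rw [hmem, inv_mem_iff]; tauto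
  let F : E → Module.End ℂ V := fun x =>
    if hx : x ∈ G then π ⟨x, hx⟩ else π ⟨x * h₀⁻¹, hout x hx⟩ * A
  have F1 : ∀ g : G, F g = π g := fun g => by simp [F]
  have F2 : ∀ g : G, F (g * h₀) = π g * A := fun g => by
    have : (g : E) * h₀ ∉ G := by rw [hmem]; simp [hh₀]
    simp [F, this]
  have hdec : ∀ x : E, (∃ g : G, x = g) ∨ ∃ g : G, x = g * h₀ := fun x => by
    by_cases hx : x ∈ G
    · exact Or.inl ⟨⟨x, hx⟩, rfl⟩
    · exact Or.inr ⟨⟨x * h₀⁻¹, hout x hx⟩, by simp⟩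
  refine ⟨⟨⟨F, ?_⟩, ?_⟩, F1, F2⟩
  · simpa using F1 1
  · intro x y
    change F (x * y) = F x * F y
    obtain ⟨a, rfl⟩ | ⟨a, rfl⟩ := hdec x <;> obtain ⟨b, rfl⟩ | ⟨b, rfl⟩ := hdec y
    · rw [F1, F1, ← Subgroup.coe_mul, F1, map_mul]
    · rw [F1, F2, ← mul_assoc, ← Subgroup.coe_mul, F2, map_mul, mul_assoc]
    · have e : (a : E) * h₀ * b = ((a * MulAut.conjNormal h₀ b : G) : E) * h₀ := by
        simp [MulAut.conjNormal_apply, mul_assoc]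
      rw [e, F2, F2, F1, map_mul, mul_assoc, mul_assoc, hA]
    · have e : (a : E) * h₀ * (b * h₀) =
          ((a * MulAut.conjNormal h₀ b * ⟨h₀ * h₀, hsq⟩ : G) : E) := by
        simp [MulAut.conjNormal_apply, mul_assoc]
      rw [e, F1, F2, F2, map_mul, map_mul, ← hA2]
      calc _ = π a * (π (MulAut.conjNormal h₀ b) * A) * A := by simp only [mul_assoc]
        _ = _ := by rw [← hA]; simp only [mul_assoc]

/-- Clifford theory, existence and construction of extensions: if `(π,V)` is an
irreducible finite-dimensional complex representation of the index-two normal subgroup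
`G` of `ᵉG` which is equivalent to its twist by `h₀ ∈ ᵉG \ G`, then (1) there is a
bijective intertwiner `A` with `A π(g) A⁻¹ = π(h₀ g h₀⁻¹)` and `A² = π(h₀²)`;
(2) any two such intertwiners differ by `±1`; (3) each such `A` defines an extension
`Π` of `π` to `ᵉG` with `Π(g h₀) = π(g) A`. -/
theorem stmt_1 {E V : Type*} [Group E] (G : Subgroup E) [G.Normal]
    (hidx : G.index = 2) (h₀ : E) (hh₀ : h₀ ∉ G) (hsq : h₀ * h₀ ∈ G)
    [AddCommGroup V] [Module ℂ V] [FiniteDimensional ℂ V] [Nontrivial V]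
    (π : Representation ℂ G V)
    -- irreducibility
    (hirr : ∀ U : Submodule ℂ V, (∀ (g : G), ∀ v ∈ U, π g v ∈ U) → U = ⊥ ∨ U = ⊤)
    -- π^{h₀} is equivalent to π
    (hequiv : ∃ T : V ≃ₗ[ℂ] V, ∀ g : G,
      T.toLinearMap ∘ₗ π g = π ((MulAut.conjNormal h₀) g) ∘ₗ T.toLinearMap) :
    -- (1) existence of a suitably normalized intertwiner
    (∃ A : V →ₗ[ℂ] V, Function.Bijective A ∧
        (∀ g : G, A ∘ₗ π g = π ((MulAut.conjNormal h₀) g) ∘ₗ A) ∧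
        A ∘ₗ A = π ⟨h₀ * h₀, hsq⟩) ∧
    -- (2) uniqueness up to sign
    (∀ A A' : V →ₗ[ℂ] V,
        Function.Bijective A →
        (∀ g : G, A ∘ₗ π g = π ((MulAut.conjNormal h₀) g) ∘ₗ A) →
        A ∘ₗ A = π ⟨h₀ * h₀, hsq⟩ →
        Function.Bijective A' →
        (∀ g : G, A' ∘ₗ π g = π ((MulAut.conjNormal h₀) g) ∘ₗ A') →
        A' ∘ₗ A' = π ⟨h₀ * h₀, hsq⟩ →
        A' = A ∨ A' = -A) ∧
    -- (3) each such A defines a homomorphic extension of π to ᵉG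
    (∀ A : V →ₗ[ℂ] V,
        Function.Bijective A →
        (∀ g : G, A ∘ₗ π g = π ((MulAut.conjNormal h₀) g) ∘ₗ A) →
        A ∘ₗ A = π ⟨h₀ * h₀, hsq⟩ →
        ∃ Φ : E →* Module.End ℂ V,
          (∀ g : G, Φ ↑g = π g) ∧ (∀ g : G, Φ (↑g * h₀) = π g ∘ₗ A)) := by
  refine ⟨?_, ?_, ?_⟩
  · obtain ⟨T, hT⟩ := hequiv
    set S : Module.End ℂ V := T.toLinearMap with hS
    replace hT : ∀ g : G, S * π g = π ((MulAut.conjNormal h₀) g) * S := hT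
    set z : G := ⟨h₀ * h₀, hsq⟩ with hz
    have hconj : ∀ g : G, z⁻¹ * MulAut.conjNormal h₀ (MulAut.conjNormal h₀ g) = g * z⁻¹ := by
      intro g
      ext
      simp [hz, MulAut.conjNormal_apply, mul_assoc]
    have hcomm : ∀ g : G, (π z⁻¹ * (S * S)) * π g = π g * (π z⁻¹ * (S * S)) := by
      intro g
      calc (π z⁻¹ * (S * S)) * π g = π z⁻¹ * (S * (S * π g)) := by simp only [mul_assoc]
        _ = π z⁻¹ * ((S * π (MulAut.conjNormal h₀ g)) * S) := by rw [hT]; simp only [mul_assoc]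
        _ = π (z⁻¹ * MulAut.conjNormal h₀ (MulAut.conjNormal h₀ g)) * (S * S) := by
          rw [hT, map_mul]; simp only [mul_assoc]
        _ = _ := by rw [hconj, map_mul, mul_assoc]
    obtain ⟨c, hc⟩ := schur_scalar π hirr _ hcomm
    have hSS : S * S = c • π z := by
      calc S * S = π z * (π z⁻¹ * (S * S)) := by
            rw [← mul_assoc, ← map_mul, mul_inv_cancel, map_one, one_mul]
        _ = _ := by rw [hc, mul_smul_comm, mul_one]
    have hc0 : c ≠ 0 := by
      rintro rfl
      obtain ⟨v, hv⟩ := exists_ne (0 : V)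
      have h := LinearMap.congr_fun hSS v
      simp [hS] at h
      exact hv h
    obtain ⟨s, hs⟩ := IsAlgClosed.exists_pow_nat_eq c⁻¹ (n := 2) (by norm_num)
    have hs0 : s ≠ 0 := by
      rintro rfl
      exact inv_ne_zero hc0 (by simpa using hs.symm)
    refine ⟨s • S, ?_, ?_, ?_⟩
    · exact (MulAction.bijective (Units.mk0 s hs0)).comp T.bijective
    · intro g
      change (s • S) * π g = π _ * (s • S)
      rw [smul_mul_assoc, mul_smul_comm, hT]
    · change (s • S) * (s • S) = π z
      rw [smul_mul_smul_comm, hSS, smul_smul, ← pow_two, hs, inv_mul_cancel₀ hc0, one_smul]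
  · intro A A' hAb hA hA2 _ hA' hA'2
    let e : V ≃ₗ[ℂ] V := LinearEquiv.ofBijective A hAb
    let C : Module.End ℂ V := e.symm.toLinearMap ∘ₗ A'
    have hAC : ∀ v, A (C v) = A' v := fun v => e.apply_symm_apply (A' v)
    have hC : ∀ g : G, C * π g = π g * C := by
      intro g
      ext v
      apply hAb.1
      have h1 := LinearMap.congr_fun (hA' g) v
      have h2 := LinearMap.congr_fun (hA g) (C v)
      simp only [LinearMap.comp_apply] at h1 h2
      simp only [Module.End.mul_apply]
      rw [hAC, h1, h2, hAC]
    obtain ⟨c, hc⟩ := schur_scalar π hirr C hC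
    have hA'c : A' = c • A := by
      ext v
      rw [← hAC, hc]
      simp
    have hcc : c * c = 1 := by
      obtain ⟨v, hv⟩ := exists_ne (0 : V)
      have hne : A (A v) ≠ 0 := by
        rwa [Ne, map_eq_zero_iff A hAb.1, map_eq_zero_iff A hAb.1]
      have h := LinearMap.congr_fun (hA'2.trans hA2.symm) v
      simp only [hA'c, LinearMap.comp_apply, LinearMap.smul_apply, map_smul, smul_smul] at h
      exact smul_left_injective ℂ hne (by simpa using h)
    rcases mul_self_eq_one_iff.mp hcc with h | h
    · left; rw [hA'c, h, one_smul]
    · right; rw [hA'c, h, neg_smul, one_smul]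
  · intro A _ hA hA2
    exact exists_extension G hidx h₀ hh₀ hsq π A hA hA2
end

section
/- Let θ, δ : L → L be automorphisms with θ² = δ² = id. Suppose λ, τ ∈ M satisfy ᵗδλ − λ = τ − ᵗθτ. Then for every t ∈ L one has the congruences ⟨λ, t + δt⟩ ≡ ⟨τ, t − θt⟩ ≡ ⟨τ, t + θt⟩ (mod 2). Consequently the sign ε := (−1)^{⟨λ, t+δt⟩} is unchanged if t is replaced by t + s + (u − δu) for any s ∈ L with θs = −s and any u ∈ L. -/
/-!
Evaluating the hypothesis at `x` gives `⟨λ, δx⟩ - ⟨λ, x⟩ = ⟨τ, x - θx⟩`. As a sum and a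
difference of two integers have the same parity, taking `x = t` gives both congruences.
For the sign, `x ↦ ⟨λ, x + δx⟩` is additive, vanishes on `u - δu` because `δ² = 1`, and is
even on every `s` with `θs = -s`.
-/

/-- Parity identities for the sign `ε = (−1)^{⟨λ, t+δt⟩}`: if `ᵗδλ − λ = τ − ᵗθτ`
then `⟨λ, t+δt⟩ ≡ ⟨τ, t−θt⟩ ≡ ⟨τ, t+θt⟩ (mod 2)`, and the sign is unchanged when `t`
is replaced by `t + s + (u − δu)` with `θs = −s`. -/
theorem stmt_8 {L : Type*} [AddCommGroup L] [Module ℤ L]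
    [Module.Free ℤ L] [Module.Finite ℤ L]
    (θ δ : L →ₗ[ℤ] L)
    (hθ : θ ∘ₗ θ = LinearMap.id) (hδ : δ ∘ₗ δ = LinearMap.id)
    (lam tau : Module.Dual ℤ L)
    (h : δ.dualMap lam - lam = tau - θ.dualMap tau) :
    ∀ t : L,
      (lam (t + δ t) ≡ tau (t - θ t) [ZMOD 2]) ∧
      (tau (t - θ t) ≡ tau (t + θ t) [ZMOD 2]) ∧
      (∀ s u : L, θ s = -s →
        (-1 : ℂ) ^ (lam ((t + s + (u - δ u)) + δ (t + s + (u - δ u)))) =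
          (-1 : ℂ) ^ (lam (t + δ t))) := by
  have key : ∀ x : L, lam (δ x) - lam x = tau x - tau (θ x) := fun x => by
    simpa using LinearMap.congr_fun h x
  have hδδ : ∀ x : L, δ (δ x) = x := fun x => LinearMap.congr_fun hδ x
  intro t
  refine ⟨?_, ?_, ?_⟩
  · have := key t
    simp only [map_add, map_sub, Int.ModEq]
    omega
  · simp only [map_add, map_sub, Int.ModEq]
    omega
  · intro s u hs
    -- `u - δu` is killed by `1 + δ`, and `s` contributes `2⟨λ,s⟩ + ⟨τ,s-θs⟩ = 2⟨λ+τ,s⟩`.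
    have e : lam ((t + s + (u - δ u)) + δ (t + s + (u - δ u))) =
        lam (t + δ t) + 2 * (lam s + tau s) := by
      have := key s
      rw [hs, map_neg] at this
      simp only [map_add, map_sub, hδδ]
      linarith
    rw [e, zpow_add₀ (by norm_num), zpow_mul]
    norm_num
end

section
/- Let θ, δ : L → L be automorphisms with θ² = δ² = id. Suppose λ, τ ∈ M and ℓ, t ∈ L satisfy ᵗδλ − λ = τ − ᵗθτ and δℓ − ℓ = t + θt. Define z = i^{⟨τ, t+θt⟩}·(−1)^{⟨λ,t⟩} ∈ ℂ and ζ = i^{⟨τ, t+θt⟩}·(−1)^{⟨τ,ℓ⟩} ∈ ℂ, where i denotes the imaginary unit. Then z² = (−1)^{⟨λ, t+δt⟩} and ζ² = (−1)^{⟨λ, t+δt⟩}. -/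
/-!
Since `i² = -1` and signs square to `1`, both `z²` and `ζ²` equal `(-1)^⟨τ,t+θt⟩`. Pairing
`ᵗδλ − λ = τ − ᵗθτ` with `t` shows that `⟨λ,t+δt⟩` and `⟨τ,t+θt⟩` have the same parity.
-/

/-- The numbers `z = i^{⟨τ,t+θt⟩}(−1)^{⟨λ,t⟩}` and `ζ = i^{⟨τ,t+θt⟩}(−1)^{⟨τ,ℓ⟩}` are
both square roots of `ε = (−1)^{⟨λ,t+δt⟩}`. -/
theorem stmt_9 {L : Type*} [AddCommGroup L] [Module ℤ L]
    [Module.Free ℤ L] [Module.Finite ℤ L]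
    (θ δ : L →ₗ[ℤ] L)
    (hθ : θ ∘ₗ θ = LinearMap.id) (hδ : δ ∘ₗ δ = LinearMap.id)
    (lam tau : Module.Dual ℤ L) (ℓ t : L)
    (h1 : δ.dualMap lam - lam = tau - θ.dualMap tau)
    (h2 : δ ℓ - ℓ = t + θ t) :
    (Complex.I ^ (tau (t + θ t)) * (-1 : ℂ) ^ (lam t)) ^ 2 =
      (-1 : ℂ) ^ (lam (t + δ t)) ∧
    (Complex.I ^ (tau (t + θ t)) * (-1 : ℂ) ^ (tau ℓ)) ^ 2 =
      (-1 : ℂ) ^ (lam (t + δ t)) := by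
  -- Evaluating `h1` at `t` gives `⟨λ,t+δt⟩ ≡ ⟨τ,t+θt⟩ mod 2`.
  have key : lam (t + δ t) = tau (t + θ t) + 2 * (lam t - tau (θ t)) := by
    have h := LinearMap.congr_fun h1 t
    simp only [LinearMap.sub_apply, LinearMap.dualMap_apply] at h
    rw [map_add, map_add]
    linarith
  -- The sign factor is irrelevant: it squares to `1`, while `i² = -1`.
  have sq (a b : ℤ) : (Complex.I ^ a * (-1 : ℂ) ^ b) ^ 2 = (-1 : ℂ) ^ a := by
    rw [mul_pow, ← zpow_natCast, ← zpow_natCast, zpow_comm, zpow_comm (-1 : ℂ) b]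
    simp
  have hpar : (-1 : ℂ) ^ (lam (t + δ t)) = (-1 : ℂ) ^ (tau (t + θ t)) := by
    rw [key, zpow_add₀ (by norm_num), zpow_mul]
    simp
  exact ⟨(sq _ _).trans hpar.symm, (sq _ _).trans hpar.symm⟩
end

section
/- Let θ, δ : L → L be commuting automorphisms with θ² = δ² = id. Suppose λ, λ′, τ, τ′ ∈ M and ℓ, ℓ′, t, t′ ∈ L satisfy: ᵗδλ − λ = τ − ᵗθτ; δℓ − ℓ = t + θt; ℓ′ = ℓ + u + θu for some u ∈ L; t′ = t + (δu − u) + ν for some ν ∈ L with θν = −ν; λ′ = λ + ω − ᵗθω for some ω ∈ M; and τ′ = τ + (ᵗδω − ω) + ι for some ι ∈ M with ᵗθι = ι. Define z(λ,τ,ℓ,t) = i^{⟨τ, t+θt⟩}·(−1)^{⟨λ,t⟩} ∈ ℂ, where i is the imaginary unit. Then z(λ,τ,ℓ,t) / z(λ′,τ′,ℓ′,t′) = (−1)^{⟨τ + ᵗδτ, u⟩} · (−1)^{⟨λ, ν⟩} · (−1)^{⟨ι, t′⟩}. -/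
/-!
Since `(-1)^n = i^(2n)`, both sides are powers of `i`, and the claim is a congruence modulo 4
between exponents. Write `N = 1 + θ`. The condition `δℓ - ℓ = Nt` gives `δ(Nt) = -Nt`, and this
passes to `t'`, so `⟨ᵗδω - ω, Nt'⟩ = -2⟨ω, Nt'⟩`; together with `2⟨ω - ᵗθω, t'⟩` it contributes
`-4⟨ω, θt'⟩`. The contributions of `ι` and `ν` double up to multiples of 4. What is left is, modulo
4, `-⟨τ, (1 - θ)(1 + δ)u⟩ = -⟨λ, (δ - 1)(1 + δ)u⟩ = 0`, by the relation between `λ` and `τ`.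
-/

/-- Two products `i^a (-1)^b` and `i^a' (-1)^b'` have quotient `(-1)^p (-1)^q (-1)^r` as soon as the
exponents of `i` agree modulo 4. -/
lemma I_zpow_quotient (a b a' b' p q r : ℤ)
    (h : ∃ k : ℤ, a + 2 * b = a' + 2 * b' + 2 * p + 2 * q + 2 * r + 4 * k) :
    (Complex.I ^ a * (-1 : ℂ) ^ b) / (Complex.I ^ a' * (-1 : ℂ) ^ b') =
      (-1 : ℂ) ^ p * (-1 : ℂ) ^ q * (-1 : ℂ) ^ r := by
  obtain ⟨k, hk⟩ := h
  have hI : Complex.I ≠ 0 := Complex.I_ne_zero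
  have hneg : ∀ n : ℤ, (-1 : ℂ) ^ n = Complex.I ^ (2 * n) := fun n => by
    rw [zpow_mul]; norm_cast; rw [Complex.I_sq]; push_cast; rfl
  have h4 : Complex.I ^ (4 * k) = 1 := by
    rw [zpow_mul]; norm_cast; rw [Complex.I_pow_four, one_zpow]
  simp only [hneg, ← zpow_add₀ hI]
  rw [div_eq_iff (zpow_ne_zero _ hI), ← zpow_add₀ hI, hk, zpow_add₀ hI _ (4 * k), h4, mul_one]
  congr 1
  ring

/-- Change of the scalar `z(λ,τ,ℓ,t) = i^{⟨τ,t+θt⟩}(−1)^{⟨λ,t⟩}` under a change of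
extended parameter: `z(λ,τ,ℓ,t)/z(λ′,τ′,ℓ′,t′) =
(−1)^{⟨τ+ᵗδτ,u⟩}·(−1)^{⟨λ,ν⟩}·(−1)^{⟨ι,t′⟩}`. -/
theorem stmt_10 {L : Type*} [AddCommGroup L] [Module ℤ L]
    [Module.Free ℤ L] [Module.Finite ℤ L]
    (θ δ : L →ₗ[ℤ] L)
    (hθ : θ ∘ₗ θ = LinearMap.id) (hδ : δ ∘ₗ δ = LinearMap.id)
    (hcomm : θ ∘ₗ δ = δ ∘ₗ θ)
    (lam lam' tau tau' : Module.Dual ℤ L) (ℓ ℓ' t t' u ν : L) (ω ι : Module.Dual ℤ L)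
    (h1 : δ.dualMap lam - lam = tau - θ.dualMap tau)
    (h2 : δ ℓ - ℓ = t + θ t)
    (h3 : ℓ' = ℓ + u + θ u)
    (h4 : θ ν = -ν)
    (h5 : t' = t + (δ u - u) + ν)
    (h6 : lam' = lam + ω - θ.dualMap ω)
    (h7 : θ.dualMap ι = ι)
    (h8 : tau' = tau + (δ.dualMap ω - ω) + ι) :
    (Complex.I ^ (tau (t + θ t)) * (-1 : ℂ) ^ (lam t)) /
        (Complex.I ^ (tau' (t' + θ t')) * (-1 : ℂ) ^ (lam' t')) =
      (-1 : ℂ) ^ ((tau + δ.dualMap tau) u) * (-1 : ℂ) ^ (lam ν) * (-1 : ℂ) ^ (ι t') := by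
  have hδ2 : ∀ x, δ (δ x) = x := fun x => LinearMap.congr_fun hδ x
  have hc : ∀ x, θ (δ x) = δ (θ x) := fun x => LinearMap.congr_fun hcomm x
  have hlt : ∀ x, lam (δ x) - lam x = tau x - tau (θ x) := fun x => LinearMap.congr_fun h1 x
  have hι : ∀ x, ι (θ x) = ι x := fun x => LinearMap.congr_fun h7 x
  have hNt : δ t + δ (θ t) = -(t + θ t) := by
    rw [← map_add, ← h2, map_sub, hδ2, neg_sub]
  have hθt' : θ t' = θ t + (δ (θ u) - θ u) - ν := by
    rw [h5, map_add, map_add, map_sub, hc, h4, sub_eq_add_neg _ ν]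
  have hsum : t' + θ t' = t + θ t + (δ u - u) + (δ (θ u) - θ u) := by
    rw [hθt', h5]; abel
  have hNt' : δ (t' + θ t') = -(t' + θ t') := by
    rw [hsum]
    simp only [map_add, map_sub, hδ2]
    rw [hNt]; abel
  have hω : ω (δ (t' + θ t')) = -(ω t' + ω (θ t')) := by
    rw [hNt', map_neg, map_add]
  -- the relation between `lam` and `tau` at `(1 + δ) u`, where `δ - 1` vanishes
  have hzero : tau u + tau (δ u) = tau (θ u) + tau (δ (θ u)) := by
    have e1 := hlt u
    have e2 := hlt (δ u)
    rw [hδ2, hc] at e2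
    linarith
  have htau : tau (t' + θ t') =
      tau (t + θ t) + (tau (δ u) - tau u) + (tau (δ (θ u)) - tau (θ u)) := by
    rw [hsum]; simp only [map_add, map_sub]
  have hlam : lam t' = lam t + (tau u - tau (θ u)) + lam ν := by
    rw [h5, map_add, map_add, map_sub, hlt]
  have htau' : tau' (t' + θ t') =
      tau (t' + θ t') + (ω (δ (t' + θ t')) - (ω t' + ω (θ t'))) + 2 * ι t' := by
    rw [h8]
    simp only [LinearMap.add_apply, LinearMap.sub_apply, LinearMap.dualMap_apply, map_add, hι]
    ring
  have hlam' : lam' t' = lam t' + ω t' - ω (θ t') := by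
    rw [h6]; rfl
  have hp : (tau + δ.dualMap tau) u = tau u + tau (δ u) := rfl
  apply I_zpow_quotient
  refine ⟨ω (θ t') - ι t' - lam ν - tau u - tau (δ u) + tau (θ u), ?_⟩
  rw [htau', hlam', hω, hp, htau, hlam]
  linarith
end

section
/- Let θ, δ : L → L be commuting automorphisms with θ² = δ² = id. Suppose λ, λ′, τ, τ′ ∈ M and ℓ, ℓ′, t, t′ ∈ L satisfy: ᵗδλ − λ = τ − ᵗθτ; δℓ − ℓ = t + θt; ℓ′ = ℓ + u + θu for some u ∈ L; t′ = t + (δu − u) + ν for some ν ∈ L with θν = −ν; λ′ = λ + ω − ᵗθω for some ω ∈ M; and τ′ = τ + (ᵗδω − ω) + ι for some ι ∈ M with ᵗθι = ι. Then the exponents ⟨ᵗδλ − λ, t′−t⟩ + ⟨τ′−τ, δℓ′−ℓ′⟩ and ⟨τ′, δℓ′−ℓ′⟩ − ⟨τ, δℓ−ℓ⟩ are even integers, and one has the equalities i^{⟨ᵗδλ−λ, t′−t⟩ + ⟨τ′−τ, δℓ′−ℓ′⟩}·(−1)^{⟨τ, ℓ′−ℓ⟩}·(−1)^{⟨λ′−λ,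 t′⟩}·(−1)^{⟨τ, t′−t⟩} = i^{⟨τ′, δℓ′−ℓ′⟩ − ⟨τ, δℓ−ℓ⟩}·(−1)^{⟨τ, ℓ′−ℓ⟩}·(−1)^{⟨λ′−λ, t′⟩} = (−1)^{⟨τ + ᵗδτ, u⟩ + ⟨ι, t′⟩}, where i is the imaginary unit. -/
/-!
Put `w = δu − u`. Then `δw = −w` because `δ² = 1`, and `δℓ' − ℓ' = t' + θt'`, so both
exponents of `i` can be halved explicitly: the second one is twice
`ι(t') − ω(t' + θt') − λ(w) + τ(θw)`, and the first differs from it by `−2τ(θ(t' − t))`.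
Since `i^{2k} = (−1)^k`, both equalities become congruences modulo 2 between values of
`λ, τ, ω, ι`. They follow from `θν = −ν`, which makes `τ − ᵗθτ` even on `ν`, and from the
relation `λ(δx) − λ(x) = τ(x) − τ(θx)`, which makes `τ − ᵗθτ` even on `w` and which at
`x = δu` turns `τ(θδu)` into `τ(δu) + λ(w)`.
-/

theorem I_zpow_two_mul (k : ℤ) : Complex.I ^ (2 * k) = (-1 : ℂ) ^ k := by
  rw [zpow_mul]
  norm_num

theorem neg_one_zpow_congr {a b : ℤ} (h : Even (a - b)) : (-1 : ℂ) ^ a = (-1 : ℂ) ^ b := by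
  rw [← sub_add_cancel a b, zpow_add₀ (by norm_num), h.neg_one_zpow, one_mul]

/-- Simplified formula for the sign `sgn(E,E′)`: the two exponents are even, and
`i^{⟨ᵗδλ−λ,t′−t⟩+⟨τ′−τ,δℓ′−ℓ′⟩}(−1)^{⟨τ,ℓ′−ℓ⟩}(−1)^{⟨λ′−λ,t′⟩}(−1)^{⟨τ,t′−t⟩}
= i^{⟨τ′,δℓ′−ℓ′⟩−⟨τ,δℓ−ℓ⟩}(−1)^{⟨τ,ℓ′−ℓ⟩}(−1)^{⟨λ′−λ,t′⟩}
= (−1)^{⟨τ+ᵗδτ,u⟩+⟨ι,t′⟩}`. -/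
theorem stmt_11 {L : Type*} [AddCommGroup L] [Module ℤ L]
    [Module.Free ℤ L] [Module.Finite ℤ L]
    (θ δ : L →ₗ[ℤ] L)
    (hθ : θ ∘ₗ θ = LinearMap.id) (hδ : δ ∘ₗ δ = LinearMap.id)
    (hcomm : θ ∘ₗ δ = δ ∘ₗ θ)
    (lam lam' tau tau' : Module.Dual ℤ L) (ℓ ℓ' t t' u ν : L) (ω ι : Module.Dual ℤ L)
    (h1 : δ.dualMap lam - lam = tau - θ.dualMap tau)
    (h2 : δ ℓ - ℓ = t + θ t)
    (h3 : ℓ' = ℓ + u + θ u)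
    (h4 : θ ν = -ν)
    (h5 : t' = t + (δ u - u) + ν)
    (h6 : lam' = lam + ω - θ.dualMap ω)
    (h7 : θ.dualMap ι = ι)
    (h8 : tau' = tau + (δ.dualMap ω - ω) + ι) :
    Even ((δ.dualMap lam - lam) (t' - t) + (tau' - tau) (δ ℓ' - ℓ')) ∧
    Even (tau' (δ ℓ' - ℓ') - tau (δ ℓ - ℓ)) ∧
    Complex.I ^ ((δ.dualMap lam - lam) (t' - t) + (tau' - tau) (δ ℓ' - ℓ')) *
          (-1 : ℂ) ^ (tau (ℓ' - ℓ)) * (-1 : ℂ) ^ ((lam' - lam) t') *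
          (-1 : ℂ) ^ (tau (t' - t)) =
        Complex.I ^ (tau' (δ ℓ' - ℓ') - tau (δ ℓ - ℓ)) *
          (-1 : ℂ) ^ (tau (ℓ' - ℓ)) * (-1 : ℂ) ^ ((lam' - lam) t') ∧
    Complex.I ^ (tau' (δ ℓ' - ℓ') - tau (δ ℓ - ℓ)) *
          (-1 : ℂ) ^ (tau (ℓ' - ℓ)) * (-1 : ℂ) ^ ((lam' - lam) t') =
        (-1 : ℂ) ^ ((tau + δ.dualMap tau) u + ι t') := by
  have hδδ : ∀ x, δ (δ x) = x := fun x => LinearMap.congr_fun hδ x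
  have hθδ : ∀ x, θ (δ x) = δ (θ x) := fun x => LinearMap.congr_fun hcomm x
  have hlam : ∀ x, lam (δ x) - lam x = tau x - tau (θ x) := fun x => by
    simpa using LinearMap.congr_fun h1 x
  have hι : ∀ x, ι (θ x) = ι x := fun x => LinearMap.congr_fun h7 x
  have hℓ' : δ ℓ' - ℓ' = t' + θ t' := by
    have e : δ ℓ' - ℓ' = (δ ℓ - ℓ) + (δ u - u) + (δ (θ u) - θ u) := by
      rw [h3]; simp only [map_add]; abel
    rw [e, h2, h5]
    simp only [map_add, map_sub, h4, hθδ]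
    abel
  -- `δ` acts by `-1` on the image of `δ - 1`, in particular on `t' + θ t'`.
  have hω : ω (δ (t' + θ t')) = -ω (t' + θ t') := by
    rw [← hℓ', ← map_neg, map_sub, hδδ]
    congr 1; abel
  have htt : t' - t = (δ u - u) + ν := by rw [h5]; abel
  have hll : ℓ' - ℓ = u + θ u := by rw [h3]; abel
  have hτ : tau' - tau = (δ.dualMap ω - ω) + ι := by rw [h8]; abel
  have hlm : lam' - lam = ω - θ.dualMap ω := by rw [h6]; abel
  have k1 := hlam u
  have k2 := hlam (δ u)
  rw [hδδ] at k2
  have hD : tau' (t' + θ t') = tau (t' + θ t') + 2 * (ι t' - ω (t' + θ t')) := by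
    have e := LinearMap.congr_fun hτ (t' + θ t')
    simp only [LinearMap.sub_apply, LinearMap.add_apply, LinearMap.dualMap_apply, hω] at e
    rw [map_add ι, hι] at e
    linarith
  have hT : tau (t' + θ t') - tau (t + θ t)
      = 2 * (tau (θ (δ u)) - tau (θ u) - (lam (δ u) - lam u)) := by
    rw [h5]
    simp only [map_add, map_sub, h4, map_neg]
    linarith
  have hB : tau' (δ ℓ' - ℓ') - tau (δ ℓ - ℓ) = 2 * (ι t' - ω (t' + θ t')
      + (tau (θ (δ u)) - tau (θ u) - (lam (δ u) - lam u))) := by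
    rw [hℓ', h2, hD]
    linarith
  have hA : (δ.dualMap lam - lam) (t' - t) + (tau' - tau) (δ ℓ' - ℓ')
      = 2 * (ι t' - ω (t' + θ t') + (tau ν - (lam (δ u) - lam u))) := by
    rw [hℓ', h1, htt]
    simp only [LinearMap.sub_apply, LinearMap.dualMap_apply, hD]
    simp only [map_add, map_sub, h4, map_neg]
    linarith
  have hne : (-1 : ℂ) ≠ 0 := by norm_num
  rw [hA, hB]
  refine ⟨even_two_mul _, even_two_mul _, ?_, ?_⟩
  · simp only [I_zpow_two_mul, ← zpow_add₀ hne]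
    apply neg_one_zpow_congr
    rw [htt]
    simp only [map_add, map_sub]
    refine ⟨tau ν + lam u - lam (δ u), ?_⟩
    linarith
  · simp only [I_zpow_two_mul, ← zpow_add₀ hne]
    apply neg_one_zpow_congr
    rw [hll, hlm]
    simp only [LinearMap.sub_apply, LinearMap.add_apply, LinearMap.dualMap_apply, map_add]
    refine ⟨-ω (θ t'), ?_⟩
    linarith
end

section
/- Suppose d : V_ℂ → V_ℂ is a linear automorphism with d² = id, which permutes the root system R, preserves the positive system R⁺, and is an automorphism of the root system in the sense that ⟨dx, (dα)^∨⟩ = ⟨x, α^∨⟩ for all x ∈ V_ℂ and α ∈ R. Let γ ∈ V_ℂ, and suppose d preserves the Weyl group orbit W·γ, i.e. d(γ) ∈ W·γ. Then the orbit W·γ contains an integrally dominant element γ′ with d(γ′) = γ′. -/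
/-!
The complex numbers are ordered lexicographically, real part first. Call `x` lex-dominant if
`⟨x, α^∨⟩ ≥ 0` in this order for every positive root `α`. A lex-dominant element is integrally
dominant, because on `ℤ ⊆ ℂ` the lexicographic order is the usual one. Every `W`-orbit contains
exactly one lex-dominant element. Since `d` preserves the pairing and the positive roots, it
preserves lex-dominance; it also preserves `W·γ`, so it fixes the lex-dominant element of `W·γ`.

Existence (`PosSys.exists_lexDominant`): `W` is finite, so some element `x` of the orbit maximizes
`2ρ^∨ = ∑_{β > 0} β^∨`. As `⟨α, 2ρ^∨⟩ > 0` for `α > 0` (`PosSys.twoRhoCheck_pos`), the inequality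
`2ρ^∨(s_α x) ≤ 2ρ^∨(x)` says exactly that `⟨x, α^∨⟩ ≥ 0`.

Uniqueness (`PosSys.act_eq_of_lexDominant`): `W` is generated by the simple reflections
(`PosSys.exists_word`). Suppose `x` and `w x` are lex-dominant and `w = t s_α` is a word in simple
reflections ending in `s_α`. If `t α < 0`, the exchange property (`PosSys.exchange`) gives a
shorter word for `w`. If `t α > 0`, then `⟨w x, (t α)^∨⟩ = -⟨x, α^∨⟩`, so `⟨x, α^∨⟩ = 0`, hence
`s_α x = x` and `w x = t x`. Induction on the length of the word concludes.
-/

/-- The Weyl group of the root system `R` (with coroot pairings given by `coroot`):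
the subgroup of linear automorphisms of `V` generated by the root reflections
`s_α : x ↦ x − ⟨x, α^∨⟩α`. -/
def weylGroup {V : Type*} [AddCommGroup V] [Module ℂ V]
    (R : Finset V) (coroot : V → (V →ₗ[ℂ] ℂ)) : Subgroup (V ≃ₗ[ℂ] V) :=
  Subgroup.closure {w | ∃ α ∈ R, ∀ x : V, w x = x - coroot α x • α}

/-- `γ` is integrally dominant: `⟨γ, α^∨⟩ ∈ ℤ` implies `⟨γ, α^∨⟩ ≥ 0` for every
positive root `α ∈ P`. -/
def IsIntegrallyDominant {V : Type*} [AddCommGroup V] [Module ℂ V]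
    (P : Finset V) (coroot : V → (V →ₗ[ℂ] ℂ)) (γ : V) : Prop :=
  ∀ α ∈ P, ∀ n : ℤ, coroot α γ = (n : ℂ) → 0 ≤ n

open Module

/-- The properties of a root system `R` with positive system `P` that the argument uses. Signs of
the integral pairings between roots are expressed through their real parts. -/
structure PosSys {V : Type*} [AddCommGroup V] [Module ℂ V]
    (R P : Finset V) (coroot : V → (V →ₗ[ℂ] ℂ)) : Prop where
  co2 : ∀ α ∈ R, coroot α α = 2
  crys : ∀ α ∈ R, ∀ β ∈ R, ∃ n : ℤ, coroot α β = (n : ℂ)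
  refl_mem : ∀ α ∈ R, ∀ β ∈ R, β - coroot α β • α ∈ R
  red : ∀ α ∈ R, ∀ c : ℂ, c • α ∈ R → c = 1 ∨ c = -1
  PR : ∀ α ∈ P, α ∈ R
  pos : ∀ α ∈ R, (α ∈ P ↔ ¬(-α ∈ P))
  add_mem_P : ∀ α ∈ P, ∀ β ∈ P, α + β ∈ R → α + β ∈ P
  coroot_refl : ∀ α ∈ R, ∀ β ∈ R, ∀ x,
    coroot (β - coroot α β • α) x = coroot β (x - coroot α x • α)
  sub_mem : ∀ α ∈ R, ∀ β ∈ R, 0 < (coroot β α).re → α ≠ β → α - β ∈ R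
  sign : ∀ α ∈ R, ∀ β ∈ R, 0 < (coroot β α).re → 0 < (coroot α β).re

/-- The data form a Mathlib `RootPairing` between `V` and its dual, whose theory supplies the
behaviour of coroots under reflections and the facts on differences of roots. -/
theorem posSys_of {V : Type*} [AddCommGroup V] [Module ℂ V] [FiniteDimensional ℂ V]
    (R : Finset V) (coroot : V → (V →ₗ[ℂ] ℂ))
    (hspan : Submodule.span ℂ (R : Set V) = ⊤)
    (hco2 : ∀ α ∈ R, coroot α α = 2)
    (hcrys : ∀ α ∈ R, ∀ β ∈ R, ∃ n : ℤ, coroot α β = (n : ℂ))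
    (hrefl : ∀ α ∈ R, ∀ β ∈ R, β - coroot α β • α ∈ R)
    (hred : ∀ α ∈ R, ∀ c : ℂ, c • α ∈ R → c = 1 ∨ c = -1)
    (P : Finset V) (hPR : P ⊆ R)
    (hpos : ∀ α ∈ R, (α ∈ P ↔ ¬(-α ∈ P)))
    (hsum : ∀ α ∈ P, ∀ β ∈ P, α + β ∈ R → α + β ∈ P) : PosSys R P coroot := by
  have : IsAddTorsionFree V := .of_isTorsionFree ℂ V
  have hmaps : ∀ α ∈ R, Set.MapsTo (preReflection α (coroot α)) (R : Set V) (R : Set V) := by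
    intro α hα β hβ
    simpa [preReflection_apply] using hrefl α hα β hβ
  let root : R ↪ V := Function.Embedding.subtype _
  let co : R ↪ Dual ℂ V := ⟨fun i => coroot i, by
    rintro ⟨α, hα⟩ ⟨β, hβ⟩ h
    simp only at h
    refine Subtype.ext ?_
    exact eq_of_mapsTo_reflection_of_mem (f := coroot α) (g := coroot β) R.finite_toSet
      (hco2 α hα) (hco2 β hβ) (by rw [← h]; exact hco2 α hα) (by rw [h]; exact hco2 β hβ)
      (hmaps α hα) (hmaps β hβ) hβ⟩
  have hrange : Set.range root = (R : Set V) := by ext; simp [root]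
  let Q : RootPairing R ℂ V (Dual ℂ V) :=
    RootPairing.mk'' (Dual.eval ℂ V) root co (fun i => hco2 i i.2)
      (fun i => by rw [hrange]; exact hmaps i i.2) (by rw [hrange]; exact hspan)
  have hQroot : ∀ i, Q.root i = (i : V) := fun i => rfl
  have hQp : ∀ i j, Q.pairing i j = coroot j i := fun i j => rfl
  have : Q.IsCrystallographic := ⟨fun i j => by
    obtain ⟨n, hn⟩ := hcrys j j.2 i i.2
    exact ⟨n, by rw [hQp, hn]; simp⟩⟩
  have hre : ∀ i j, ((Q.pairingIn ℤ i j : ℤ) : ℝ) = (coroot j i).re := by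
    intro i j
    have := Q.algebraMap_pairingIn ℤ i j
    rw [hQp] at this
    rw [← this]; simp
  refine ⟨hco2, hcrys, hrefl, hred, hPR, hpos, hsum, ?_, ?_, ?_⟩
  · intro α hα β hβ x
    have h := Q.coroot'_reflection (i := ⟨α, hα⟩) (j := ⟨β, hβ⟩) x
    have h2 := Q.root_reflectionPerm ⟨α, hα⟩ ⟨β, hβ⟩
    rw [RootPairing.reflection_apply] at h h2
    have h3 : ((Q.reflectionPerm ⟨α, hα⟩ ⟨β, hβ⟩ : R) : V) = β - coroot α β • α := h2
    rw [← h3]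
    exact h.symm
  · intro α hα β hβ h hne
    have := Q.root_sub_root_mem_of_pairingIn_pos (i := ⟨α, hα⟩) (j := ⟨β, hβ⟩)
      (by rw [← hre ⟨α, hα⟩ ⟨β, hβ⟩] at h; exact_mod_cast h) (by simpa using hne)
    obtain ⟨k, hk⟩ := this
    have hk' : (k : V) = α - β := hk
    rw [← hk']; exact k.2
  · intro α hα β hβ h
    rw [← hre ⟨α, hα⟩ ⟨β, hβ⟩] at h
    rw [← hre ⟨β, hβ⟩ ⟨α, hα⟩]
    have hlt : 0 < Q.pairingIn ℤ ⟨α, hα⟩ ⟨β, hβ⟩ := by exact_mod_cast h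
    rw [Q.zero_lt_pairingIn_iff' ℤ] at hlt
    exact_mod_cast hlt

/-- The reflection `s_α`. -/
def sRefl {V : Type*} [AddCommGroup V] [Module ℂ V] (coroot : V → (V →ₗ[ℂ] ℂ)) (α : V) :
    V →ₗ[ℂ] V := LinearMap.id - (coroot α).smulRight α

/-- A positive root is simple if it is not a sum of two positive roots. -/
def IsSimpleRoot {V : Type*} [AddCommGroup V] (P : Finset V) (α : V) : Prop :=
  α ∈ P ∧ ∀ β ∈ P, ∀ γ ∈ P, α ≠ β + γ

/-- The product of reflections `s_{α₁} ⋯ s_{αₖ}` attached to the word `[α₁, …, αₖ]`. -/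
def act {V : Type*} [AddCommGroup V] [Module ℂ V] (coroot : V → (V →ₗ[ℂ] ℂ)) :
    List V → V → V
  | [], x => x
  | α :: l, x => sRefl coroot α (act coroot l x)

/-- The functional `2ρ^∨`, the sum of the positive coroots. -/
def twoRhoCheck {V : Type*} [AddCommGroup V] [Module ℂ V] (P : Finset V)
    (coroot : V → (V →ₗ[ℂ] ℂ)) : V →ₗ[ℂ] ℂ := ∑ β ∈ P, coroot β

/-- Nonnegativity in the lexicographic order on `ℂ`, real part first. -/
def LexNonneg (c : ℂ) : Prop := 0 < c.re ∨ (0 = c.re ∧ 0 ≤ c.im)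

/-- Dominance with respect to the lexicographic order on `ℂ`. -/
def LexDominant {V : Type*} [AddCommGroup V] [Module ℂ V] (P : Finset V)
    (coroot : V → (V →ₗ[ℂ] ℂ)) (x : V) : Prop := ∀ α ∈ P, LexNonneg (coroot α x)

theorem LexNonneg.eq_zero {c : ℂ} (h : LexNonneg c) (h' : LexNonneg (-c)) : c = 0 := by
  unfold LexNonneg at h h'
  simp only [Complex.neg_re, Complex.neg_im] at h'
  apply Complex.ext
  · rcases h with h | h <;> rcases h' with h' | h' <;> simp <;> linarith
  · rcases h with h | h <;> rcases h' with h' | h' <;> simp <;> linarith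

namespace PosSys

variable {V : Type*} [AddCommGroup V] [Module ℂ V] {R P : Finset V}
  {coroot : V → (V →ₗ[ℂ] ℂ)}

theorem sRefl_apply (α x : V) : sRefl coroot α x = x - coroot α x • α := by
  simp [sRefl]

/-! ### Reflections and signs of pairings -/

theorem sRefl_self (h : PosSys R P coroot) {α : V} (hα : α ∈ R) : sRefl coroot α α = -α := by
  rw [sRefl_apply, h.co2 α hα]; module

theorem sRefl_sRefl (h : PosSys R P coroot) {α : V} (hα : α ∈ R) (x : V) :
    sRefl coroot α (sRefl coroot α x) = x := by
  rw [sRefl_apply, sRefl_apply, map_sub, map_smul, h.co2 α hα, smul_eq_mul]; module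

theorem sRefl_mem (h : PosSys R P coroot) {α β : V} (hα : α ∈ R) (hβ : β ∈ R) :
    sRefl coroot α β ∈ R := by
  rw [sRefl_apply]; exact h.refl_mem α hα β hβ

theorem neg_mem (h : PosSys R P coroot) {α : V} (hα : α ∈ R) : -α ∈ R := by
  rw [← h.sRefl_self hα]; exact h.sRefl_mem hα hα

theorem coroot_sRefl (h : PosSys R P coroot) {α β : V} (hα : α ∈ R) (hβ : β ∈ R) (x : V) :
    coroot (sRefl coroot α β) x = coroot β (sRefl coroot α x) := by
  rw [sRefl_apply, sRefl_apply]; exact h.coroot_refl α hα β hβ x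

theorem coroot_neg (h : PosSys R P coroot) {α : V} (hα : α ∈ R) (x : V) :
    coroot (-α) x = -coroot α x := by
  rw [← h.sRefl_self hα, h.coroot_sRefl hα hα, sRefl_apply, map_sub, map_smul, h.co2 α hα,
    smul_eq_mul]
  ring

theorem add_mem (h : PosSys R P coroot) {α β : V} (hα : α ∈ R) (hβ : β ∈ R)
    (hn : (coroot α β).re < 0) (hne : β ≠ -α) : β + α ∈ R := by
  have := h.sub_mem β hβ (-α) (h.neg_mem hα) (by rw [h.coroot_neg hα]; simpa using hn) hne
  simpa using this

theorem neg_mem_P (h : PosSys R P coroot) {α : V} (hα : α ∈ R) (hn : α ∉ P) : -α ∈ P := by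
  by_contra hc
  exact hn ((h.pos α hα).2 hc)

theorem ne_neg (h : PosSys R P coroot) {α β : V} (hα : α ∈ P) (hβ : β ∈ P) : β ≠ -α := by
  rintro rfl
  exact (h.pos α (h.PR α hα)).1 hα hβ

theorem add_mem' (h : PosSys R P coroot) {α β : V} (hα : α ∈ P) (hβ : β ∈ P)
    (hn : (coroot α β).re < 0) : β + α ∈ P :=
  h.add_mem_P β hβ α hα (h.add_mem (h.PR α hα) (h.PR β hβ) hn (h.ne_neg hα hβ))

/-- Adding `α` to whichever of `β`, `δ` pairs negatively with `α^∨` keeps it positive and lowers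
`k`, until `β + δ = 0`. -/
theorem no_zero (h : PosSys R P coroot) {α : V} (hα : α ∈ P) (k : ℕ) :
    ∀ β ∈ P, ∀ δ ∈ P, β + δ + (k : ℂ) • α ≠ 0 := by
  induction k with
  | zero =>
    intro β hβ δ hδ h0
    exact h.ne_neg hδ hβ (eq_neg_of_add_eq_zero_left (by simpa using h0))
  | succ k ih =>
    intro β hβ δ hδ h0
    have h1 : (coroot α β).re + (coroot α δ).re + (k + 1) * 2 = 0 := by
      have := congrArg (fun v => (coroot α v).re) h0
      simpa [h.co2 α (h.PR α hα)] using this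
    have hk : (0 : ℝ) ≤ k := Nat.cast_nonneg k
    push_cast at h0
    by_cases hb : (coroot α β).re < 0
    · exact ih _ (h.add_mem' hα hβ hb) δ hδ (by rw [← h0]; module)
    · exact ih β hβ _ (h.add_mem' hα hδ (by linarith)) (by rw [← h0]; module)

/-- `⟨α, 2ρ^∨⟩` is a positive integer for `α > 0`: the terms of the positive roots that `s_α` keeps
positive cancel in pairs, and every positive root `β` with `s_α β < 0` has `⟨α, β^∨⟩ > 0`. -/
theorem twoRhoCheck_pos (h : PosSys R P coroot) {α : V} (hα : α ∈ P) :
    ∃ n : ℕ, 0 < n ∧ twoRhoCheck P coroot α = n := by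
  classical
  have hαR := h.PR α hα
  have happ : twoRhoCheck P coroot α = ∑ β ∈ P, coroot β α := by simp [twoRhoCheck]
  have hint : ∃ n : ℤ, twoRhoCheck P coroot α = n := by
    have : ∀ β, ∃ n : ℤ, β ∈ P → coroot β α = n := by
      intro β
      by_cases hβ : β ∈ P
      · obtain ⟨n, hn⟩ := h.crys β (h.PR β hβ) α hαR
        exact ⟨n, fun _ => hn⟩
      · exact ⟨0, fun h => absurd h hβ⟩
    choose c hc using this
    refine ⟨∑ β ∈ P, c β, ?_⟩
    rw [happ]; push_cast
    exact Finset.sum_congr rfl hc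
  have hpos : 0 < (twoRhoCheck P coroot α).re := by
    rw [happ, ← Finset.sum_filter_add_sum_filter_not P (fun β => sRefl coroot α β ∈ P)]
    have hA : ∑ β ∈ P.filter (fun β => sRefl coroot α β ∈ P), coroot β α = 0 := by
      have hanti : ∀ β ∈ P, coroot (sRefl coroot α β) α = -coroot β α := by
        intro β hβ
        rw [h.coroot_sRefl hαR (h.PR β hβ), h.sRefl_self hαR, map_neg]
      refine Finset.sum_involution (fun β _ => sRefl coroot α β) ?_ ?_ ?_ ?_
      · intro β hβ
        rw [hanti β (Finset.mem_filter.1 hβ).1]; ring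
      · intro β hβ h0 heq
        have := hanti β (Finset.mem_filter.1 hβ).1
        rw [heq] at this
        exact h0 (self_eq_neg.1 this)
      · intro β hβ
        rw [Finset.mem_filter] at hβ ⊢
        exact ⟨hβ.2, by rw [h.sRefl_sRefl hαR]; exact hβ.1⟩
      · intro β _
        exact h.sRefl_sRefl hαR β
    rw [hA, zero_add, Complex.re_sum]
    refine Finset.sum_pos ?_ ⟨α, ?_⟩
    · intro β hβ
      rw [Finset.mem_filter] at hβ
      have hβR := h.PR β hβ.1
      refine h.sign β hβR α hαR ?_
      by_contra hle
      have hδ := h.neg_mem_P (h.sRefl_mem hαR hβR) hβ.2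
      obtain ⟨n, hn⟩ := h.crys α hαR β hβR
      rw [hn] at hle
      have hn0 : n ≤ 0 := by
        have : ((n : ℂ)).re = (n : ℝ) := by simp
        rw [this] at hle
        exact_mod_cast not_lt.1 hle
      obtain ⟨k, hk⟩ := Int.eq_ofNat_of_zero_le (neg_nonneg.2 hn0)
      refine h.no_zero hα k β hβ.1 _ hδ ?_
      have hk' : (k : ℂ) = -(n : ℂ) := by exact_mod_cast hk.symm
      rw [sRefl_apply, hn, hk']; module
    · rw [Finset.mem_filter, h.sRefl_self hαR]
      exact ⟨hα, (h.pos α hαR).1 hα⟩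
  obtain ⟨n, hn⟩ := hint
  have hn0 : 0 < n := by
    rw [hn] at hpos
    simpa using hpos
  obtain ⟨m, rfl⟩ := Int.eq_ofNat_of_zero_le hn0.le
  exact ⟨m, by exact_mod_cast hn0, by simpa using hn⟩

/-! ### Simple roots -/

theorem sub_simple (h : PosSys R P coroot) {β γ : V} (hβ : IsSimpleRoot P β) (hγ : γ ∈ P)
    (hne : γ ≠ β) (hp : 0 < (coroot β γ).re) : γ - β ∈ P := by
  have hR := h.sub_mem γ (h.PR γ hγ) β (h.PR β hβ.1) hp hne
  by_contra hc
  exact hβ.2 γ hγ _ (h.neg_mem_P hR hc) (by module)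

theorem ne_two_smul (h : PosSys R P coroot) {β γ : V} (hβ : β ∈ R) (hγ : γ ∈ R) :
    γ - β ≠ β := by
  intro he
  have : (2 : ℂ) • β = γ := by rw [two_smul]; nth_rewrite 1 [← he]; module
  have := h.red β hβ 2 (by rw [this]; exact hγ)
  norm_num at this

/-- Subtracting `β` from whichever of `γ`, `δ` pairs positively with `β^∨` lowers `n`. -/
theorem no_mul (h : PosSys R P coroot) {β : V} (hβ : IsSimpleRoot P β) (n : ℕ) :
    ∀ γ ∈ P, ∀ δ ∈ P, γ ≠ β → δ ≠ β → γ + δ ≠ (n : ℂ) • β := by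
  induction n with
  | zero =>
    intro γ hγ δ hδ _ _ h0
    exact h.ne_neg hδ hγ (eq_neg_of_add_eq_zero_left (by simpa using h0))
  | succ n ih =>
    intro γ hγ δ hδ h1 h2 h0
    have hβR := h.PR β hβ.1
    have h3 : (coroot β γ).re + (coroot β δ).re = (n + 1) * 2 := by
      have := congrArg (fun v => (coroot β v).re) h0
      simpa [h.co2 β hβR] using this
    have hk : (0 : ℝ) ≤ n := Nat.cast_nonneg n
    push_cast at h0
    by_cases hb : 0 < (coroot β γ).re
    · refine ih _ (h.sub_simple hβ hγ h1 hb) δ hδ (h.ne_two_smul hβR (h.PR γ hγ)) h2 ?_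
      rw [sub_add_eq_add_sub, h0]; module
    · refine ih γ hγ _ (h.sub_simple hβ hδ h2 (by linarith)) h1
        (h.ne_two_smul hβR (h.PR δ hδ)) ?_
      rw [← add_sub_assoc, h0]; module

/-- A simple reflection keeps the positive roots other than its own positive. -/
theorem sRefl_mem_P (h : PosSys R P coroot) {β γ : V} (hβ : IsSimpleRoot P β) (hγ : γ ∈ P)
    (hne : γ ≠ β) : sRefl coroot β γ ∈ P := by
  have hβR := h.PR β hβ.1
  have hγR := h.PR γ hγ
  by_contra hc
  have hδ := h.neg_mem_P (h.sRefl_mem hβR hγR) hc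
  obtain ⟨n, hn⟩ := h.crys β hβR γ hγR
  have hsum : γ + -sRefl coroot β γ = (n : ℂ) • β := by rw [sRefl_apply, hn]; module
  rcases le_total 0 n with h0 | h0
  · obtain ⟨k, rfl⟩ := Int.eq_ofNat_of_zero_le h0
    refine h.no_mul hβ k γ hγ _ hδ hne ?_ (by simpa using hsum)
    intro he
    -- `s_β γ = -β` forces `γ = β`
    have := h.sRefl_sRefl hβR γ
    rw [neg_eq_iff_eq_neg.1 he, map_neg, h.sRefl_self hβR, neg_neg] at this
    exact hne this.symm
  · obtain ⟨k, hk⟩ := Int.eq_ofNat_of_zero_le (neg_nonneg.2 h0)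
    have hk' : (k : ℂ) = -(n : ℂ) := by exact_mod_cast hk.symm
    refine h.no_zero hβ.1 k γ hγ _ hδ ?_
    rw [hsum, hk']; module

/-- A functional that is positive on a positive root is positive on some simple root. -/
theorem exists_simple_pos (h : PosSys R P coroot) (φ : V →ₗ[ℂ] ℂ) (n : ℕ) :
    ∀ α ∈ P, twoRhoCheck P coroot α = n → 0 < (φ α).re →
      ∃ β, IsSimpleRoot P β ∧ 0 < (φ β).re := by
  induction n using Nat.strong_induction_on with
  | _ n ih =>
    intro α hα hn hφ
    by_cases hs : IsSimpleRoot P α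
    · exact ⟨α, hs, hφ⟩
    · have : ∃ β ∈ P, ∃ γ ∈ P, α = β + γ := by
        by_contra hc
        push Not at hc
        exact hs ⟨hα, hc⟩
      obtain ⟨β, hβ, γ, hγ, rfl⟩ := this
      obtain ⟨b, hb0, hb⟩ := h.twoRhoCheck_pos hβ
      obtain ⟨c, hc0, hc⟩ := h.twoRhoCheck_pos hγ
      have hbc : b + c = n := by
        rw [map_add, hb, hc] at hn
        exact_mod_cast hn
      rw [map_add, Complex.add_re] at hφ
      by_cases hp : 0 < (φ β).re
      · exact ih b (by omega) β hβ hb hp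
      · exact ih c (by omega) γ hγ hc (by linarith)

/-! ### Words in simple reflections -/

theorem act_append (l m : List V) (x : V) :
    act coroot (l ++ m) x = act coroot l (act coroot m x) := by
  induction l with
  | nil => rfl
  | cons a l ih => simp [act, ih]

theorem act_reverse (h : PosSys R P coroot) (l : List V) (hl : ∀ α ∈ l, IsSimpleRoot P α) (x : V) :
    act coroot l.reverse (act coroot l x) = x := by
  induction l generalizing x with
  | nil => rfl
  | cons a l ih =>
    rw [List.reverse_cons, act_append]
    simp only [act]
    rw [h.sRefl_sRefl (h.PR a (hl a (by simp)).1)]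
    exact ih (fun α hα => hl α (by simp [hα])) x

theorem act_mem (h : PosSys R P coroot) (l : List V) (hl : ∀ α ∈ l, IsSimpleRoot P α) {β : V}
    (hβ : β ∈ R) : act coroot l β ∈ R := by
  induction l with
  | nil => exact hβ
  | cons a l ih =>
    exact h.sRefl_mem (h.PR a (hl a (by simp)).1) (ih (fun α hα => hl α (by simp [hα])))

theorem coroot_act (h : PosSys R P coroot) (l : List V) (hl : ∀ α ∈ l, IsSimpleRoot P α) {β : V}
    (hβ : β ∈ R) (x : V) : coroot (act coroot l β) (act coroot l x) = coroot β x := by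
  induction l with
  | nil => rfl
  | cons a l ih =>
    have haR := h.PR a (hl a (by simp)).1
    have hl' : ∀ α ∈ l, IsSimpleRoot P α := fun α hα => hl α (by simp [hα])
    simp only [act]
    rw [h.coroot_sRefl haR (h.act_mem l hl' hβ), h.sRefl_sRefl haR]
    exact ih hl'

theorem act_sub_smul (l : List V) (x y : V) (c : ℂ) :
    act coroot l (x - c • y) = act coroot l x - c • act coroot l y := by
  induction l with
  | nil => rfl
  | cons a l ih => simp only [act]; rw [ih, map_sub, map_smul]

theorem act_sRefl (h : PosSys R P coroot) (l : List V) (hl : ∀ α ∈ l, IsSimpleRoot P α) {β : V}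
    (hβ : β ∈ R) (x : V) :
    act coroot l (sRefl coroot β x) = sRefl coroot (act coroot l β) (act coroot l x) := by
  rw [sRefl_apply, sRefl_apply, act_sub_smul, h.coroot_act l hl hβ]

/-- The exchange property: if the word `l` sends the simple root `α` to a negative root, then
`l s_α` equals a word shorter than `l`, obtained by deleting one letter. -/
theorem exchange (h : PosSys R P coroot) {α : V} (hα : IsSimpleRoot P α) (l : List V)
    (hl : ∀ β ∈ l, IsSimpleRoot P β) (hn : act coroot l α ∉ P) :
    ∃ l' : List V, (∀ β ∈ l', IsSimpleRoot P β) ∧ l'.length < l.length ∧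
      ∀ x, act coroot l (sRefl coroot α x) = act coroot l' x := by
  induction l with
  | nil => exact absurd hα.1 hn
  | cons b t ih =>
    have hb : IsSimpleRoot P b := hl b (by simp)
    have ht : ∀ β ∈ t, IsSimpleRoot P β := fun β hβ => hl β (by simp [hβ])
    by_cases hp : act coroot t α ∈ P
    · -- `s_b` makes `t α > 0` negative, so `t α = b` and `t s_α = s_b t`
      have he : act coroot t α = b := by
        by_contra hne
        exact hn (h.sRefl_mem_P hb hp hne)
      refine ⟨t, ht, by simp, fun x => ?_⟩
      simp only [act]
      rw [h.act_sRefl t ht (h.PR α hα.1), he, h.sRefl_sRefl (h.PR b hb.1)]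
    · obtain ⟨t', ht', hlen, heq⟩ := ih ht hp
      refine ⟨b :: t', ?_, by simpa using hlen, fun x => ?_⟩
      · intro β hβ
        rcases List.mem_cons.1 hβ with rfl | hβ
        · exact hb
        · exact ht' β hβ
      · simp only [act]; rw [heq]

/-- Two lex-dominant elements related by a word in simple reflections are equal. -/
theorem act_eq_of_lexDominant (h : PosSys R P coroot) {x : V} (hx : LexDominant P coroot x)
    (n : ℕ) : ∀ l : List V, l.length = n → (∀ β ∈ l, IsSimpleRoot P β) →
      LexDominant P coroot (act coroot l x) → act coroot l x = x := by
  induction n using Nat.strong_induction_on with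
  | _ n ih =>
    intro l hlen hl hdom
    rcases List.eq_nil_or_concat l with rfl | ⟨t, α, rfl⟩
    · rfl
    rw [List.concat_eq_append] at hlen hl hdom ⊢
    have hα : IsSimpleRoot P α := hl α (by simp)
    have ht : ∀ β ∈ t, IsSimpleRoot P β := fun β hβ => hl β (by simp [hβ])
    rw [List.length_append, List.length_singleton] at hlen
    rw [act_append] at hdom ⊢
    simp only [act] at hdom ⊢
    by_cases hp : act coroot t α ∈ P
    · have hαR := h.PR α hα.1
      have h1 := hdom _ hp
      rw [h.coroot_act t ht hαR, sRefl_apply, map_sub, map_smul, h.co2 α hαR] at h1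
      have h2 : coroot α x = 0 := (hx α hα.1).eq_zero (by
        convert h1 using 1
        rw [smul_eq_mul]; ring)
      have h3 : sRefl coroot α x = x := by rw [sRefl_apply, h2]; simp
      rw [h3] at hdom ⊢
      exact ih t.length (by omega) t rfl ht hdom
    · obtain ⟨t', ht', hlen', heq⟩ := h.exchange hα t ht hp
      rw [heq] at hdom ⊢
      exact ih t'.length (by omega) t' rfl ht' hdom

/-- Reflections in positive roots are products of simple reflections: if `α` is positive and not
simple, some simple `β` lowers `⟨α, 2ρ^∨⟩`, and `s_α = s_β s_{s_β α} s_β`. -/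
theorem exists_word_pos (h : PosSys R P coroot) (n : ℕ) :
    ∀ α ∈ P, twoRhoCheck P coroot α = n →
      ∃ l : List V, (∀ β ∈ l, IsSimpleRoot P β) ∧ ∀ x, sRefl coroot α x = act coroot l x := by
  induction n using Nat.strong_induction_on with
  | _ n ih =>
    intro α hα hn
    have hαR := h.PR α hα
    obtain ⟨β, hβ, hβα⟩ := h.exists_simple_pos (coroot α) n α hα hn (by rw [h.co2 α hαR]; norm_num)
    have hβR := h.PR β hβ.1
    by_cases he : α = β
    · subst he
      exact ⟨[α], by simpa using hβ, fun x => rfl⟩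
    have hmem := h.sRefl_mem_P hβ hα he
    obtain ⟨m, hm0, hm⟩ := h.twoRhoCheck_pos hmem
    obtain ⟨b, hb0, hb⟩ := h.twoRhoCheck_pos hβ.1
    have hmn : m < n := by
      have h1 := h.sign β hβR α hαR hβα
      have h2 : (m : ℝ) = n - (coroot β α).re * b := by
        have := congrArg Complex.re hm
        rw [sRefl_apply, map_sub, map_smul, hn, hb] at this
        simpa using this.symm
      have hb' : (0 : ℝ) < b := by exact_mod_cast hb0
      have : (m : ℝ) < n := by nlinarith [mul_pos h1 hb']
      exact_mod_cast this
    obtain ⟨l, hl, hle⟩ := ih m hmn _ hmem hm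
    refine ⟨β :: (l ++ [β]), ?_, fun x => ?_⟩
    · intro δ hδ
      simp only [List.mem_cons, List.mem_append, List.not_mem_nil, or_false] at hδ
      rcases hδ with rfl | hδ | rfl
      · exact hβ
      · exact hl δ hδ
      · exact hβ
    · simp only [act]
      rw [act_append]
      simp only [act]
      rw [← hle]
      have h1 := h.act_sRefl [β] (by simpa using hβ) hαR x
      simp only [act] at h1
      rw [← h1, h.sRefl_sRefl hβR]

theorem exists_word (h : PosSys R P coroot) {w : V ≃ₗ[ℂ] V} (hw : w ∈ weylGroup R coroot) :
    ∃ l : List V, (∀ β ∈ l, IsSimpleRoot P β) ∧ ∀ x, w x = act coroot l x := by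
  induction hw using Subgroup.closure_induction with
  | mem w hw =>
    obtain ⟨α, hα, hwα⟩ := hw
    by_cases hp : α ∈ P
    · obtain ⟨n, -, hn⟩ := h.twoRhoCheck_pos hp
      obtain ⟨l, hl, hle⟩ := h.exists_word_pos n α hp hn
      exact ⟨l, hl, fun x => by rw [hwα, ← hle, sRefl_apply]⟩
    · have hp' := h.neg_mem_P hα hp
      obtain ⟨n, -, hn⟩ := h.twoRhoCheck_pos hp'
      obtain ⟨l, hl, hle⟩ := h.exists_word_pos n _ hp' hn
      exact ⟨l, hl, fun x => by rw [hwα, ← hle, sRefl_apply, h.coroot_neg hα]; module⟩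
  | one => exact ⟨[], by simp, fun x => rfl⟩
  | mul u v _ _ hu hv =>
    obtain ⟨l, hl, hle⟩ := hu
    obtain ⟨m, hm, hme⟩ := hv
    refine ⟨l ++ m, ?_, fun x => ?_⟩
    · intro β hβ
      rcases List.mem_append.1 hβ with hβ | hβ
      · exact hl β hβ
      · exact hm β hβ
    · rw [act_append, ← hme, ← hle]; rfl
  | inv u _ hu =>
    obtain ⟨l, hl, hle⟩ := hu
    refine ⟨l.reverse, fun β hβ => hl β (by simpa using hβ), fun x => ?_⟩
    have h1 := h.act_reverse l hl (u⁻¹ x)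
    rw [← hle] at h1
    have h2 : u (u⁻¹ x) = x := u.apply_symm_apply x
    rw [h2] at h1
    exact h1.symm

/-! ### Existence of a lex-dominant element -/

theorem weyl_mem (h : PosSys R P coroot) {w : V ≃ₗ[ℂ] V} (hw : w ∈ weylGroup R coroot) {β : V}
    (hβ : β ∈ R) : w β ∈ R := by
  obtain ⟨l, hl, hle⟩ := h.exists_word hw
  rw [hle]; exact h.act_mem l hl hβ

/-- The Weyl group acts faithfully on the finite spanning set `R`. -/
theorem finite_weylGroup (h : PosSys R P coroot)
    (hspan : Submodule.span ℂ (R : Set V) = ⊤) : Finite (weylGroup R coroot) := by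
  refine Finite.of_injective
    (fun (w : weylGroup R coroot) (r : R) => (⟨w.1 r, h.weyl_mem w.2 r.2⟩ : R)) ?_
  intro u v huv
  apply Subtype.ext
  apply LinearEquiv.toLinearMap_injective
  refine LinearMap.ext_on hspan ?_
  intro r hr
  exact congrArg Subtype.val (congrFun huv ⟨r, hr⟩)

theorem exists_refl_weyl (h : PosSys R P coroot) {α : V} (hα : α ∈ R) :
    ∃ s ∈ weylGroup R coroot, ∀ x, s x = sRefl coroot α x := by
  refine ⟨LinearEquiv.ofInvolutive (sRefl coroot α) (h.sRefl_sRefl hα),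
    Subgroup.subset_closure ⟨α, hα, fun x => ?_⟩, fun x => rfl⟩
  rw [← sRefl_apply]; rfl

theorem exists_lexDominant (h : PosSys R P coroot)
    (hspan : Submodule.span ℂ (R : Set V) = ⊤) (γ : V) :
    ∃ w ∈ weylGroup R coroot, LexDominant P coroot (w γ) := by
  have := h.finite_weylGroup hspan
  let F : V → ℝ ×ₗ ℝ := fun x =>
    toLex ((twoRhoCheck P coroot x).re, (twoRhoCheck P coroot x).im)
  obtain ⟨w, hw⟩ := Finite.exists_max (fun w : weylGroup R coroot => F (w.1 γ))
  refine ⟨w.1, w.2, fun α hα => ?_⟩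
  obtain ⟨s, hs, hsx⟩ := h.exists_refl_weyl (h.PR α hα)
  obtain ⟨n, hn0, hn⟩ := h.twoRhoCheck_pos hα
  have h1 := hw ⟨s * w.1, mul_mem hs w.2⟩
  have h2 : twoRhoCheck P coroot ((s * w.1) γ)
      = twoRhoCheck P coroot (w.1 γ) - coroot α (w.1 γ) * n := by
    rw [LinearEquiv.mul_apply, hsx, sRefl_apply, map_sub, map_smul, hn, smul_eq_mul]
  have hn' : (0 : ℝ) < n := by exact_mod_cast hn0
  simp only [F, Prod.Lex.toLex_le_toLex, h2, Complex.sub_re, Complex.sub_im, Complex.mul_re,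
    Complex.mul_im, Complex.natCast_re, Complex.natCast_im, mul_zero, sub_zero, zero_add] at h1
  rcases h1 with h1 | ⟨h1, h3⟩
  · left
    exact pos_of_mul_pos_left (b := (n : ℝ)) (by linarith) hn'.le
  · right
    constructor
    · have : (coroot α (w.1 γ)).re * n = 0 := by linarith
      rcases mul_eq_zero.1 this with h | h
      · exact h.symm
      · exact absurd h hn'.ne'
    · exact nonneg_of_mul_nonneg_left (b := (n : ℝ)) (by linarith) hn'

end PosSys

/-- `d` normalizes the Weyl group: `d s_α = s_{dα} d`. -/
theorem weyl_conj {V : Type*} [AddCommGroup V] [Module ℂ V]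
    (R : Finset V) (coroot : V → (V →ₗ[ℂ] ℂ))
    (hs : ∀ α ∈ R, ∃ s ∈ weylGroup R coroot, ∀ x, s x = sRefl coroot α x)
    (d : V →ₗ[ℂ] V) (hdR : ∀ α ∈ R, d α ∈ R)
    (hdco : ∀ α ∈ R, ∀ x : V, coroot (d α) (d x) = coroot α x)
    {u : V ≃ₗ[ℂ] V} (hu : u ∈ weylGroup R coroot) :
    ∃ u' ∈ weylGroup R coroot, ∀ x, d (u x) = u' (d x) := by
  induction hu using Subgroup.closure_induction with
  | mem w hw =>
    obtain ⟨α, hα, hwα⟩ := hw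
    obtain ⟨s, hs, hsx⟩ := hs (d α) (hdR α hα)
    exact ⟨s, hs, fun x => by
      rw [hwα, hsx, PosSys.sRefl_apply, map_sub, map_smul, hdco α hα]⟩
  | one => exact ⟨1, one_mem _, fun x => rfl⟩
  | mul u v _ _ hu hv =>
    obtain ⟨u', hu', hue⟩ := hu
    obtain ⟨v', hv', hve⟩ := hv
    exact ⟨u' * v', mul_mem hu' hv', fun x => by
      rw [LinearEquiv.mul_apply, hue, hve, LinearEquiv.mul_apply]⟩
  | inv u _ hu =>
    obtain ⟨u', hu', hue⟩ := hu
    refine ⟨u'⁻¹, inv_mem hu', fun x => ?_⟩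
    have h1 := hue (u⁻¹ x)
    have h2 : u (u⁻¹ x) = x := u.apply_symm_apply x
    rw [h2] at h1
    rw [h1]
    exact (u'.symm_apply_apply _).symm

/-- If the involutive root-system automorphism `d` preserves the positive system and
preserves the Weyl group orbit of `γ`, then that orbit contains an integrally dominant
element fixed by `d`. -/
theorem stmt_13 {V : Type*} [AddCommGroup V] [Module ℂ V] [FiniteDimensional ℂ V]
    (R : Finset V) (coroot : V → (V →ₗ[ℂ] ℂ))
    -- R is a finite reduced crystallographic root system spanning V
    (hspan : Submodule.span ℂ (R : Set V) = ⊤)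
    (hco2 : ∀ α ∈ R, coroot α α = 2)
    (hcrys : ∀ α ∈ R, ∀ β ∈ R, ∃ n : ℤ, coroot α β = (n : ℂ))
    (hrefl : ∀ α ∈ R, ∀ β ∈ R, β - coroot α β • α ∈ R)
    (hred : ∀ α ∈ R, ∀ c : ℂ, c • α ∈ R → c = 1 ∨ c = -1)
    -- P is a positive system in R
    (P : Finset V) (hPR : P ⊆ R)
    (hpos : ∀ α ∈ R, (α ∈ P ↔ ¬(-α ∈ P)))
    (hsum : ∀ α ∈ P, ∀ β ∈ P, α + β ∈ R → α + β ∈ P)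
    -- d is an involutive automorphism of the root system preserving P
    (d : V →ₗ[ℂ] V) (hd2 : d ∘ₗ d = LinearMap.id)
    (hdR : ∀ α ∈ R, d α ∈ R) (hdP : ∀ α ∈ P, d α ∈ P)
    (hdco : ∀ α ∈ R, ∀ x : V, coroot (d α) (d x) = coroot α x)
    -- d preserves the Weyl group orbit of γ
    (γ : V) (horb : ∃ w ∈ weylGroup R coroot, w γ = d γ) :
    ∃ γ' : V, (∃ w ∈ weylGroup R coroot, w γ = γ') ∧
      IsIntegrallyDominant P coroot γ' ∧ d γ' = γ' := by
  have h : PosSys R P coroot :=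
    posSys_of R coroot hspan hco2 hcrys hrefl hred P hPR hpos hsum
  obtain ⟨u, hu, hdom⟩ := h.exists_lexDominant hspan γ
  refine ⟨u γ, ⟨u, hu, rfl⟩, ?_, ?_⟩
  · intro α hα n hn
    have h1 := hdom α hα
    rw [hn] at h1
    rcases h1 with h1 | ⟨h1, -⟩
    · have : (0 : ℝ) < n := by simpa using h1
      exact_mod_cast this.le
    · have : (0 : ℝ) = n := by simpa using h1
      exact_mod_cast this.le
  · have hdd : ∀ x, d (d x) = x := fun x => LinearMap.congr_fun hd2 x
    have hdom' : LexDominant P coroot (d (u γ)) := by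
      intro α hα
      have h1 := hdco (d α) (hdR α (hPR hα)) (u γ)
      rw [hdd] at h1
      rw [h1]
      exact hdom _ (hdP α hα)
    obtain ⟨u', hu', hue⟩ := weyl_conj R coroot (fun α hα => h.exists_refl_weyl hα) d hdR hdco hu
    obtain ⟨w, hw, hwγ⟩ := horb
    obtain ⟨l, hl, hle⟩ := h.exists_word (mul_mem (mul_mem hu' hw) (inv_mem hu))
    have h2 : d (u γ) = act coroot l (u γ) := by
      rw [← hle, hue, ← hwγ, LinearEquiv.mul_apply, LinearEquiv.mul_apply]
      congr 2
      exact (u.symm_apply_apply γ).symm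
    rw [h2] at hdom' ⊢
    exact h.act_eq_of_lexDominant hdom l.length l rfl hl hdom'
end

section
/- Let ID ⊆ V_ℂ denote the set of integrally dominant elements. For w ∈ W and γ ∈ ID, let w*γ be the unique integrally dominant element of the orbit W(wγ)·(wγ). Then: (1) the map (w, γ) ↦ w*γ is an action of the group W on ID; (2) for γ ∈ ID, the stabilizer of γ under this action is exactly W(γ), so the orbit of γ is in bijection with W/W(γ); (3) w*γ = x·(wγ) for some x ∈ W(wγ); (4) if α is a simple root of R⁺, then s_α*γ = γ when α ∈ R(γ), and s_α*γ = s_α(γ) when α ∉ R(γ). -/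
/-- The integral Weyl group `W(γ)`: generated by the reflections in the roots `α ∈ R`
with `⟨γ, α^∨⟩ ∈ ℤ`. -/
def intWeylGroup {V : Type*} [AddCommGroup V] [Module ℂ V]
    (R : Finset V) (coroot : V → (V →ₗ[ℂ] ℂ)) (γ : V) : Subgroup (V ≃ₗ[ℂ] V) :=
  Subgroup.closure
    {w | ∃ α ∈ R, (∃ n : ℤ, coroot α γ = (n : ℂ)) ∧ ∀ x : V, w x = x - coroot α x • α}

namespace IntDom

/-! ### Root systems, reflections and coroots -/

/-- `R` is a finite reduced crystallographic root system spanning `V`, with coroots given by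
`coroot` (whose values outside `R` are irrelevant). -/
structure IsRootSystem {V : Type*} [AddCommGroup V] [Module ℂ V]
    (R : Finset V) (coroot : V → (V →ₗ[ℂ] ℂ)) : Prop where
  span : Submodule.span ℂ (R : Set V) = ⊤
  co2 : ∀ α ∈ R, coroot α α = 2
  crys : ∀ α ∈ R, ∀ β ∈ R, ∃ n : ℤ, coroot α β = (n : ℂ)
  refl : ∀ α ∈ R, ∀ β ∈ R, β - coroot α β • α ∈ R
  red : ∀ α ∈ R, ∀ c : ℂ, c • α ∈ R → c = 1 ∨ c = -1

variable {V : Type*} [AddCommGroup V] [Module ℂ V] {R : Finset V} {coroot : V → (V →ₗ[ℂ] ℂ)}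

open Classical in
/-- The reflection `s_α`, made total by the value `1` when `⟨α, α^∨⟩ ≠ 2`. -/
noncomputable def rf (coroot : V → (V →ₗ[ℂ] ℂ)) (α : V) : V ≃ₗ[ℂ] V :=
  if h : coroot α α = 2 then Module.reflection h else 1

/-- The group generated by the reflections in the elements of `T`. -/
def reflGroup (coroot : V → (V →ₗ[ℂ] ℂ)) (T : Set V) : Subgroup (V ≃ₗ[ℂ] V) :=
  Subgroup.closure (Set.image (rf coroot) T)

lemma rf_mem_reflGroup {T : Set V} {α : V} (h : α ∈ T) : rf coroot α ∈ reflGroup coroot T :=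
  Subgroup.subset_closure ⟨α, h, rfl⟩

lemma reflGroup_mono {T T' : Set V} (h : T ⊆ T') : reflGroup coroot T ≤ reflGroup coroot T' :=
  Subgroup.closure_mono (Set.image_mono h)

/-- The invariant bilinear form `(x, y) = ∑_{δ ∈ R} ⟨x, δ^∨⟩⟨y, δ^∨⟩`. -/
noncomputable def form (R : Finset V) (coroot : V → (V →ₗ[ℂ] ℂ)) (x y : V) : ℂ :=
  ∑ δ ∈ R, coroot δ x * coroot δ y

lemma form_add_right (x y z : V) :
    form R coroot x (y + z) = form R coroot x y + form R coroot x z := by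
  simp [form, mul_add, Finset.sum_add_distrib]

lemma form_comm (x y : V) : form R coroot x y = form R coroot y x := by
  simp [form, mul_comm]

namespace IsRootSystem

lemma rf_apply (H : IsRootSystem R coroot)
    {α : V} (hα : α ∈ R) (x : V) : rf coroot α x = x - coroot α x • α := by
  rw [rf, dif_pos (H.co2 α hα), Module.reflection_apply]

lemma rf_unique (H : IsRootSystem R coroot)
    {α : V} (hα : α ∈ R) {w : V ≃ₗ[ℂ] V} (hw : ∀ x, w x = x - coroot α x • α) :
    w = rf coroot α := by
  ext x
  rw [hw, H.rf_apply hα]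

lemma rf_mul_self (H : IsRootSystem R coroot)
    {α : V} (hα : α ∈ R) : rf coroot α * rf coroot α = 1 := by
  ext x
  rw [rf, dif_pos (H.co2 α hα), LinearEquiv.mul_apply]
  exact Module.involutive_reflection _ x

lemma rf_rf (H : IsRootSystem R coroot)
    {α : V} (hα : α ∈ R) (x : V) : rf coroot α (rf coroot α x) = x := by
  rw [← LinearEquiv.mul_apply, H.rf_mul_self hα]; rfl

lemma rf_inv (H : IsRootSystem R coroot) {α : V} (hα : α ∈ R) : (rf coroot α)⁻¹ = rf coroot α :=
  inv_eq_of_mul_eq_one_left (H.rf_mul_self hα)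

lemma rf_self (H : IsRootSystem R coroot) {α : V} (hα : α ∈ R) : rf coroot α α = -α := by
  rw [H.rf_apply hα, H.co2 α hα, two_smul]; abel

lemma rf_mem (H : IsRootSystem R coroot)
    {α β : V} (hα : α ∈ R) (hβ : β ∈ R) : rf coroot α β ∈ R := by
  rw [H.rf_apply hα]; exact H.refl α hα β hβ

lemma neg_mem (H : IsRootSystem R coroot)
    {α : V} (hα : α ∈ R) : -α ∈ R := H.rf_self hα ▸ H.rf_mem hα hα

/-- Coroots are uniquely determined by the roots, hence equivariant under reflections. -/
lemma coroot_rf (H : IsRootSystem R coroot) {α β : V} (hα : α ∈ R) (hβ : β ∈ R) (v : V) :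
    coroot (rf coroot β α) (rf coroot β v) = coroot α v := by
  have key : coroot (rf coroot β α) = coroot α ∘ₗ (rf coroot β).toLinearMap := by
    refine Module.Dual.eq_of_preReflection_mapsTo (x := rf coroot β α) (Φ := (R : Set V))
      R.finite_toSet H.span (H.co2 _ (H.rf_mem hβ hα)) ?_ ?_ ?_
    · intro x hx
      exact H.refl _ (H.rf_mem hβ hα) x hx
    · simp [H.rf_rf hβ, H.co2 α hα]
    · intro x hx
      have h1 := H.rf_mem hβ (H.rf_mem hα (H.rf_mem hβ hx))
      rw [H.rf_apply hα, map_sub, map_smul, H.rf_rf hβ] at h1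
      exact h1
  rw [key]
  simp [H.rf_rf hβ]

lemma map_mem_of_mem_reflGroup (H : IsRootSystem R coroot) {S : Set V} (hSR : S ⊆ R)
    (hS : ∀ α ∈ S, ∀ β ∈ S, rf coroot α β ∈ S) {x : V ≃ₗ[ℂ] V}
    (hx : x ∈ reflGroup coroot S) : ∀ α ∈ S, x α ∈ S := by
  induction hx using Subgroup.closure_induction'' with
  | mem x hx => obtain ⟨β, hβ, rfl⟩ := hx; exact hS β hβ
  | inv_mem x hx =>
    obtain ⟨β, hβ, rfl⟩ := hx
    rw [H.rf_inv (hSR hβ)]; exact hS β hβ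
  | one => exact fun α hα => hα
  | mul x y _ _ hx hy => exact fun α hα => hx _ (hy α hα)

lemma weyl_mem (H : IsRootSystem R coroot)
    {x : V ≃ₗ[ℂ] V} (hx : x ∈ reflGroup coroot (R : Set V)) {α : V} (hα : α ∈ R) :
    x α ∈ R :=
  H.map_mem_of_mem_reflGroup (S := (R : Set V)) subset_rfl
    (fun _ h _ h' => H.rf_mem h h') hx α hα

lemma coroot_weyl (H : IsRootSystem R coroot)
    {x : V ≃ₗ[ℂ] V} (hx : x ∈ reflGroup coroot (R : Set V)) :
    ∀ {α : V}, α ∈ R → ∀ v, coroot (x α) (x v) = coroot α v := by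
  induction hx using Subgroup.closure_induction'' with
  | mem x hx => obtain ⟨β, hβ, rfl⟩ := hx; exact fun hα => H.coroot_rf hα hβ
  | inv_mem x hx =>
    obtain ⟨β, hβ, rfl⟩ := hx
    rw [H.rf_inv hβ]; exact fun hα => H.coroot_rf hα hβ
  | one => exact fun hα v => rfl
  | mul x y hx' hy' hx hy =>
    intro α hα v
    rw [LinearEquiv.mul_apply, LinearEquiv.mul_apply, hx (H.weyl_mem hy' hα), hy hα]

lemma rf_weyl (H : IsRootSystem R coroot)
    {x : V ≃ₗ[ℂ] V} (hx : x ∈ reflGroup coroot (R : Set V)) {α : V} (hα : α ∈ R) :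
    rf coroot (x α) = x * rf coroot α * x⁻¹ := by
  rw [eq_mul_inv_iff_mul_eq]
  ext v
  simp [H.rf_apply hα, H.rf_apply (H.weyl_mem hx hα), H.coroot_weyl hx hα]

lemma coroot_neg (H : IsRootSystem R coroot)
    {α : V} (hα : α ∈ R) (v : V) : coroot (-α) v = -coroot α v := by
  have := H.coroot_rf hα hα (rf coroot α v)
  rw [H.rf_rf hα, H.rf_self hα] at this
  rw [this, H.rf_apply hα, map_sub, map_smul, H.co2 α hα, smul_eq_mul]
  ring

lemma rf_neg (H : IsRootSystem R coroot) {α : V} (hα : α ∈ R) : rf coroot (-α) = rf coroot α := by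
  ext v
  rw [H.rf_apply hα, H.rf_apply (H.neg_mem hα), H.coroot_neg hα]
  simp

/-! ### The invariant form -/

lemma form_rf (H : IsRootSystem R coroot) {β : V} (hβ : β ∈ R) (x y : V) :
    form R coroot (rf coroot β x) (rf coroot β y) = form R coroot x y := by
  unfold form
  refine Finset.sum_nbij' (rf coroot β) (rf coroot β) (fun δ h => H.rf_mem hβ h)
    (fun δ h => H.rf_mem hβ h) (fun δ _ => H.rf_rf hβ δ) (fun δ _ => H.rf_rf hβ δ) ?_
  intro δ hδ
  rw [← H.coroot_rf hδ hβ (rf coroot β x), ← H.coroot_rf hδ hβ (rf coroot β y), H.rf_rf hβ,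
    H.rf_rf hβ]

lemma two_mul_form (H : IsRootSystem R coroot) {β : V} (hβ : β ∈ R) (x : V) :
    2 * form R coroot x β = coroot β x * form R coroot β β := by
  have h := H.form_rf hβ x β
  rw [H.rf_self hβ, H.rf_apply hβ] at h
  have h2 : form R coroot (x - coroot β x • β) (-β)
      = -form R coroot x β + coroot β x * form R coroot β β := by
    simp only [form, map_sub, map_smul, map_neg, Finset.mul_sum, ← Finset.sum_neg_distrib,
      ← Finset.sum_add_distrib, smul_eq_mul]
    exact Finset.sum_congr rfl fun _ _ => by ring
  rw [h2] at h
  linear_combination -h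

/-- The form is real and non-negative on sums of two roots. -/
lemma form_add_self_nonneg (H : IsRootSystem R coroot) {α β : V} (hα : α ∈ R) (hβ : β ∈ R) :
    ∃ r : ℝ, 0 ≤ r ∧ form R coroot (α + β) (α + β) = r := by
  choose! n hn using H.crys
  refine ⟨∑ δ ∈ R, ((n δ α + n δ β : ℤ) : ℝ) ^ 2, Finset.sum_nonneg fun _ _ => sq_nonneg _, ?_⟩
  unfold form
  push_cast
  refine Finset.sum_congr rfl fun δ hδ => ?_
  rw [map_add, hn δ hδ α hα, hn δ hδ β hβ]
  ring

lemma form_self_pos (H : IsRootSystem R coroot) {α : V} (hα : α ∈ R) :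
    ∃ r : ℝ, 0 < r ∧ form R coroot α α = r := by
  choose! n hn using H.crys
  refine ⟨∑ δ ∈ R, ((n δ α : ℤ) : ℝ) ^ 2, ?_, ?_⟩
  · refine Finset.sum_pos' (fun _ _ => sq_nonneg _) ⟨α, hα, ?_⟩
    have h2 := hn α hα α hα
    rw [H.co2 α hα] at h2
    have : n α α = 2 := by exact_mod_cast h2.symm
    rw [this]; norm_num
  · unfold form
    push_cast
    refine Finset.sum_congr rfl fun δ hδ => ?_
    rw [hn δ hδ α hα]
    ring

/-- `⟨β, α^∨⟩` and `⟨α, β^∨⟩` have the same sign, both being positive multiples of `(α, β)`. -/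
lemma pairing_symm (H : IsRootSystem R coroot)
    {α β : V} (hα : α ∈ R) (hβ : β ∈ R) {m n : ℤ} (hm : coroot α β = m)
    (hn : coroot β α = n) : m < 0 ↔ n < 0 := by
  obtain ⟨a, ha, ha'⟩ := H.form_self_pos hα
  obtain ⟨b, hb, hb'⟩ := H.form_self_pos hβ
  have h1 := H.two_mul_form hα β
  have h2 := H.two_mul_form hβ α
  rw [form_comm, h2, hm, hn, ha', hb'] at h1
  have h3 : (n : ℝ) * b = m * a := by exact_mod_cast h1
  constructor
  · intro h
    have : (m : ℝ) < 0 := by exact_mod_cast h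
    have : (n : ℝ) < 0 := by
      by_contra! h'
      nlinarith [mul_nonneg h' hb.le, mul_neg_of_neg_of_pos this ha]
    exact_mod_cast this
  · intro h
    have : (n : ℝ) < 0 := by exact_mod_cast h
    have : (m : ℝ) < 0 := by
      by_contra! h'
      nlinarith [mul_nonneg h' ha.le, mul_neg_of_neg_of_pos this hb]
    exact_mod_cast this

/-- If `⟨β, α^∨⟩ < 0` then, unless `β = -α`, one of the two pairings of `α` and `β` is `-1`. -/
lemma pairing_neg (H : IsRootSystem R coroot)
    {α β : V} (hα : α ∈ R) (hβ : β ∈ R) {m : ℤ} (hm : coroot α β = m)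
    (hm0 : m < 0) : β = -α ∨ coroot α β = -1 ∨ coroot β α = -1 := by
  obtain ⟨n, hn⟩ := H.crys β hβ α hα
  have hn0 := (H.pairing_symm hα hβ hm hn).1 hm0
  by_cases hm1 : m = -1
  · right; left; rw [hm, hm1]; norm_num
  by_cases hn1 : n = -1
  · right; right; rw [hn, hn1]; norm_num
  left
  obtain ⟨a, ha, ha'⟩ := H.form_self_pos hα
  obtain ⟨b, hb, hb'⟩ := H.form_self_pos hβ
  obtain ⟨c, hc, hc'⟩ := H.form_add_self_nonneg hα hβ
  have h1 := H.two_mul_form hα β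
  have h2 := H.two_mul_form hβ α
  have h3 : form R coroot (α + β) (α + β)
      = form R coroot α α + form R coroot α β + (form R coroot β α + form R coroot β β) := by
    rw [form_add_right, form_comm (α + β) α, form_comm (α + β) β, form_add_right, form_add_right]
  have h4 : (2 * c : ℝ) = (2 + m) * a + (2 + n) * b := by
    have : (2 * c : ℂ) = (2 + m) * a + (2 + n) * b := by
      rw [hm, ha'] at h1
      rw [hn, hb'] at h2
      rw [hc', ha', hb'] at h3
      linear_combination 2 * h3 + h1 + h2
    exact_mod_cast this
  -- both pairings are at most `-2`, and positivity of the form forces equality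
  have hm2 : m + 2 ≤ 0 := by omega
  have hn2 : n + 2 ≤ 0 := by omega
  have hm2' : (2 + m : ℝ) ≤ 0 := by rw [add_comm]; exact_mod_cast hm2
  have hn2' : (2 + n : ℝ) ≤ 0 := by rw [add_comm]; exact_mod_cast hn2
  have hA := mul_nonpos_of_nonpos_of_nonneg hm2' ha.le
  have hB := mul_nonpos_of_nonpos_of_nonneg hn2' hb.le
  have hA' : (2 + m : ℝ) * a = 0 := by linarith
  have hB' : (2 + n : ℝ) * b = 0 := by linarith
  have hA2 : (2 + m : ℝ) = 0 := (mul_eq_zero.1 hA').resolve_right ha.ne'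
  have hB2 : (2 + n : ℝ) = 0 := (mul_eq_zero.1 hB').resolve_right hb.ne'
  have hm3 : (2 + m : ℂ) = 0 := by exact_mod_cast hA2
  have hn3 : (2 + n : ℂ) = 0 := by exact_mod_cast hB2
  have : IsAddTorsionFree V := .of_isTorsionFree ℂ V
  have hβ' := H.neg_mem hβ
  rw [eq_comm, neg_eq_iff_eq_neg]
  refine Module.eq_of_mapsTo_reflection_of_mem (f := coroot α) (g := coroot (-β))
    (Φ := (R : Set V)) R.finite_toSet (H.co2 α hα) (H.co2 _ hβ') ?_ ?_
    (fun x hx => H.refl α hα x hx) (fun x hx => H.refl _ hβ' x hx) hβ'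
  · rw [H.coroot_neg hβ, hn]; linear_combination -hn3
  · rw [map_neg, hm]; linear_combination -hm3

end IsRootSystem

/-! ### Positive systems in reflection subsystems -/

/-- `S` is a subset of `R` stable under its own reflections, and `Q` is a positive system in `S`.
`S` need not contain every root of `R` that is a sum of two elements of `S`; this is why `Q` is only
required to be closed under sums lying in `S`. -/
structure IsPosSystem (R : Finset V) (coroot : V → (V →ₗ[ℂ] ℂ)) (S Q : Set V) : Prop where
  sub : S ⊆ R
  refl : ∀ α ∈ S, ∀ β ∈ S, rf coroot α β ∈ S
  pos_sub : Q ⊆ S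
  pos : ∀ α ∈ S, (α ∈ Q ↔ ¬(-α ∈ Q))
  sum : ∀ α ∈ Q, ∀ β ∈ Q, α + β ∈ S → α + β ∈ Q

/-- The simple roots of a positive system: its indecomposable elements. -/
def simples (Q : Set V) : Set V := {α ∈ Q | ¬∃ β ∈ Q, ∃ β' ∈ Q, α = β + β'}

/-- The product of the reflections in the roots of the list `l`. -/
noncomputable def word (coroot : V → (V →ₗ[ℂ] ℂ)) (l : List V) : V ≃ₗ[ℂ] V :=
  (l.map (rf coroot)).prod

namespace IsPosSystem

variable {S Q : Set V}

lemma neg_mem (T : IsPosSystem R coroot S Q) (H : IsRootSystem R coroot) {α : V} (hα : α ∈ S) :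
    -α ∈ S := by
  rw [← H.rf_self (T.sub hα)]
  exact T.refl α hα α hα

lemma neg_mem_pos (T : IsPosSystem R coroot S Q) {α : V} (hα : α ∈ S)
    (h : α ∉ Q) : -α ∈ Q := by
  by_contra h'
  exact h ((T.pos α hα).2 h')

lemma neg_notMem_pos (T : IsPosSystem R coroot S Q) {α : V} (hα : α ∈ Q) : -α ∉ Q :=
  (T.pos α (T.pos_sub hα)).1 hα

lemma add_mem (T : IsPosSystem R coroot S Q) (H : IsRootSystem R coroot) {α β : V} (hα : α ∈ S)
    (hβ : β ∈ S) {m : ℤ} (hm : coroot α β = m) (hm0 : m < 0) (hne : β ≠ -α) : α + β ∈ S := by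
  rcases H.pairing_neg (T.sub hα) (T.sub hβ) hm hm0 with h | h | h
  · exact absurd h hne
  · have := T.refl α hα β hβ
    rw [H.rf_apply (T.sub hα), h] at this
    convert this using 1
    module
  · have := T.refl β hβ α hα
    rw [H.rf_apply (T.sub hβ), h] at this
    convert this using 1
    module

/-- If `α` is simple and `β`, `β - α` are roots with `β` positive, then `β - α` is positive. -/
lemma sub_mem_pos (T : IsPosSystem R coroot S Q) {α β : V} (hα : α ∈ simples Q) (hβ : β ∈ Q)
    (h : β - α ∈ S) : β - α ∈ Q := by
  by_contra h'
  exact hα.2 ⟨β, hβ, _, T.neg_mem_pos h h', by abel⟩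

lemma simple_refl_nonpos (T : IsPosSystem R coroot S Q) (H : IsRootSystem R coroot) {α : V}
    (hα : α ∈ Q) (k : ℕ) : ∀ β ∈ Q, coroot α β = -(k : ℂ) → rf coroot α β ∈ Q := by
  induction k using Nat.strong_induction_on with
  | _ k ih =>
  intro β hβ hk
  have hαS := T.pos_sub hα
  have hβS := T.pos_sub hβ
  have hαR := T.sub hαS
  have hs := T.refl α hαS β hβS
  rcases Nat.eq_zero_or_pos k with rfl | hk0
  · rw [H.rf_apply hαR, hk]
    simpa using hβ
  have hsum : α + β ∈ Q := by
    refine T.sum α hα β hβ (T.add_mem H hαS hβS (m := -(k : ℤ)) (by rw [hk]; simp) (by omega) ?_)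
    rintro rfl
    exact T.neg_notMem_pos hα hβ
  rcases Nat.eq_or_lt_of_le hk0 with hk1 | hk1
  · rw [H.rf_apply hαR, hk, ← hk1]
    convert hsum using 1
    simp; abel
  · have := ih (k - 2) (by omega) _ hsum (by
      rw [map_add, hk, H.co2 α hαR, Nat.cast_sub (by omega)]; push_cast; ring)
    rw [map_add, H.rf_self hαR] at this
    have h2 := T.sum _ this _ hα (by convert hs using 1; abel)
    convert h2 using 1; abel

lemma simple_refl_nonneg (T : IsPosSystem R coroot S Q) (H : IsRootSystem R coroot) {α : V}
    (hα : α ∈ simples Q) (k : ℕ) :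
    ∀ β ∈ Q, β ≠ α → coroot α β = (k : ℂ) → rf coroot α β ∈ Q := by
  induction k using Nat.strong_induction_on with
  | _ k ih =>
  intro β hβ hne hk
  have hαS := T.pos_sub hα.1
  have hβS := T.pos_sub hβ
  have hαR := T.sub hαS
  have hs := T.refl α hαS β hβS
  rcases Nat.eq_zero_or_pos k with rfl | hk0
  · rw [H.rf_apply hαR, hk]
    simpa using hβ
  have hsub : β - α ∈ Q := by
    refine T.sub_mem_pos hα hβ ?_
    rw [sub_eq_neg_add]
    refine T.add_mem H (T.neg_mem H hαS) hβS (m := -(k : ℤ)) ?_ (by omega) (by simpa using hne)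
    rw [H.coroot_neg hαR, hk]; simp
  rcases Nat.eq_or_lt_of_le hk0 with hk1 | hk1
  · rw [H.rf_apply hαR, hk, ← hk1]
    simpa using hsub
  · have := ih (k - 2) (by omega) _ hsub ?_ (by
      rw [map_sub, hk, H.co2 α hαR, Nat.cast_sub (by omega)]; push_cast; ring)
    · rw [map_sub, H.rf_self hαR] at this
      have h2 := T.sub_mem_pos hα this (by convert hs using 1; abel)
      convert h2 using 1; abel
    · intro h
      -- `β = 2α` is excluded because `R` is reduced
      have h2 : (2 : ℂ) • α = β := by rw [two_smul]; nth_rw 1 [← h]; abel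
      have := H.red α hαR 2 (h2 ▸ T.sub hβS)
      norm_num at this

/-- A simple reflection permutes the positive roots other than the simple root itself. -/
lemma simple_refl (T : IsPosSystem R coroot S Q) (H : IsRootSystem R coroot) {α β : V}
    (hα : α ∈ simples Q) (hβ : β ∈ Q) (hne : β ≠ α) : rf coroot α β ∈ Q := by
  obtain ⟨n, hn⟩ := H.crys α (T.sub (T.pos_sub hα.1)) β (T.sub (T.pos_sub hβ))
  obtain ⟨k, rfl | rfl⟩ := n.eq_nat_or_neg
  · exact T.simple_refl_nonneg H hα k β hβ hne (by simpa using hn)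
  · exact T.simple_refl_nonpos H hα.1 k β hβ (by simpa using hn)

/-- No non-empty sum of positive roots vanishes: in a vanishing sum two terms pair negatively, and
replacing them by their sum, a positive root, gives a shorter vanishing sum. -/
lemma multiset_sum_ne_zero (T : IsPosSystem R coroot S Q) (H : IsRootSystem R coroot) (k : ℕ) :
    ∀ s : Multiset V, s.card = k + 1 → (∀ α ∈ s, α ∈ Q) → s.sum ≠ 0 := by
  induction k with
  | zero =>
    intro s hs hQ h0
    obtain ⟨α, rfl⟩ := Multiset.card_eq_one.1 hs
    have hα := T.sub (T.pos_sub (hQ α (by simp)))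
    have := H.co2 α hα
    rw [Multiset.sum_singleton] at h0
    rw [h0, map_zero] at this
    norm_num at this
  | succ k ih =>
    intro s hs hQ h0
    classical
    obtain ⟨α, hαs⟩ := Multiset.card_pos_iff_exists_mem.1 (by omega : 0 < s.card)
    obtain ⟨t, rfl⟩ := Multiset.exists_cons_of_mem hαs
    have hαQ := hQ α (by simp)
    have hα := T.sub (T.pos_sub hαQ)
    have hneg : ∃ β ∈ t, ((coroot α β).re < 0) := by
      by_contra! hcon
      have h1 : 0 ≤ (t.map fun β => (coroot α β).re).sum :=
        Multiset.sum_nonneg (by simpa using hcon)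
      have h2 : (coroot α t.sum).re = (t.map fun β => (coroot α β).re).sum := by
        have := map_multiset_sum (Complex.reLm.toAddMonoidHom.comp (coroot α).toAddMonoidHom) t
        simpa using this
      rw [Multiset.sum_cons] at h0
      have h3 := congrArg (fun v => (coroot α v).re) h0
      simp [H.co2 α hα, h2] at h3
      linarith
    obtain ⟨β, hβt, hβ⟩ := hneg
    have hβQ := hQ β (by simp [hβt])
    obtain ⟨m, hm⟩ := H.crys α hα β (T.sub (T.pos_sub hβQ))
    have hsum : α + β ∈ Q := by
      refine T.sum α hαQ β hβQ (T.add_mem H (T.pos_sub hαQ) (T.pos_sub hβQ) hm ?_ ?_)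
      · rw [hm] at hβ
        simpa using hβ
      · rintro rfl
        exact T.neg_notMem_pos hαQ hβQ
    refine ih ((α + β) ::ₘ t.erase β) ?_ ?_ ?_
    · rw [Multiset.card_cons] at hs ⊢
      rw [Multiset.card_erase_of_mem hβt]
      have : 0 < t.card := by omega
      rw [Nat.pred_eq_sub_one]; omega
    · intro δ hδ
      rcases Multiset.mem_cons.1 hδ with rfl | hδ
      · exact hsum
      · exact hQ δ (by simp [Multiset.mem_of_mem_erase hδ])
    · rw [← h0, Multiset.sum_cons, Multiset.sum_cons, add_assoc, ← Multiset.sum_cons,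
        Multiset.cons_erase hβt]

/-- The cone generated by the positive roots is pointed. -/
lemma eq_zero_of_mem_of_neg_mem (T : IsPosSystem R coroot S Q) (H : IsRootSystem R coroot) {v : V}
    (h1 : v ∈ AddSubmonoid.closure Q) (h2 : -v ∈ AddSubmonoid.closure Q) : v = 0 := by
  obtain ⟨s, hs, hsv⟩ := AddSubmonoid.exists_multiset_of_mem_closure h1
  obtain ⟨t, ht, htv⟩ := AddSubmonoid.exists_multiset_of_mem_closure h2
  rcases Multiset.empty_or_exists_mem s with rfl | ⟨α, hα⟩
  · rw [← hsv, Multiset.sum_zero]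
  · have hc := Multiset.card_pos_iff_exists_mem.2 ⟨α, hα⟩
    refine absurd ?_ (T.multiset_sum_ne_zero H ((s + t).card - 1) (s + t) ?_ ?_)
    · rw [Multiset.sum_add, hsv, htv, add_neg_cancel]
    · rw [Multiset.card_add]; omega
    · intro δ hδ
      rcases Multiset.mem_add.1 hδ with h | h
      exacts [hs δ h, ht δ h]

/-- Induction on positive roots along the order in which `β' < β` means that `β - β'` is a non-zero
sum of positive roots. -/
lemma pos_induction (T : IsPosSystem R coroot S Q) (H : IsRootSystem R coroot) {p : V → Prop}
    (ih : ∀ β ∈ Q, (∀ β' ∈ Q, β - β' ∈ AddSubmonoid.closure Q → β' ≠ β → p β') → p β) :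
    ∀ β ∈ Q, p β := by
  have hfin : Q.Finite := R.finite_toSet.subset (T.pos_sub.trans T.sub)
  let D : V → Set V := fun β => {δ ∈ Q | β - δ ∈ AddSubmonoid.closure Q}
  have hD : ∀ β, (D β).Finite := fun β => hfin.subset (Set.sep_subset _ _)
  suffices h : ∀ n : ℕ, ∀ β ∈ Q, (D β).ncard = n → p β from fun β hβ => h _ β hβ rfl
  intro n
  induction n using Nat.strong_induction_on with
  | _ n ihn =>
  rintro β hβ rfl
  refine ih β hβ fun β' hβ' hle hne => ihn _ (Set.ncard_lt_ncard ?_ (hD β)) β' hβ' rfl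
  refine ⟨fun δ hδ => ⟨hδ.1, ?_⟩, fun hsub => hne ?_⟩
  · rw [← sub_add_sub_cancel β β' δ]
    exact AddMemClass.add_mem hle hδ.2
  · have hmem : β ∈ D β' := hsub ⟨hβ, by rw [sub_self]; exact zero_mem _⟩
    have := T.eq_zero_of_mem_of_neg_mem H hle (by rw [neg_sub]; exact hmem.2)
    exact (sub_eq_zero.1 this).symm

lemma mem_closure_simples (T : IsPosSystem R coroot S Q) (H : IsRootSystem R coroot) :
    ∀ β ∈ Q, β ∈ AddSubmonoid.closure (simples Q) := by
  have h0 : ∀ β ∈ Q, β ≠ 0 := by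
    rintro β hβ rfl
    have := H.co2 0 (T.sub (T.pos_sub hβ))
    simp at this
  refine T.pos_induction H fun β hβ ih => ?_
  by_cases hs : ∃ β₁ ∈ Q, ∃ β₂ ∈ Q, β = β₁ + β₂
  · obtain ⟨β₁, h₁, β₂, h₂, rfl⟩ := hs
    refine AddMemClass.add_mem (ih β₁ h₁ ?_ ?_) (ih β₂ h₂ ?_ ?_)
    · rw [add_sub_cancel_left]; exact AddSubmonoid.subset_closure h₂
    · simpa using h0 β₂ h₂
    · rw [add_sub_cancel_right]; exact AddSubmonoid.subset_closure h₁
    · simpa using h0 β₁ h₁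
  · exact AddSubmonoid.subset_closure ⟨hβ, hs⟩

lemma exists_simple_pairing_pos (T : IsPosSystem R coroot S Q) (H : IsRootSystem R coroot) {β : V}
    (hβ : β ∈ Q) : ∃ α ∈ simples Q, ∃ n : ℕ, 0 < n ∧ coroot α β = n := by
  have hβR := T.sub (T.pos_sub hβ)
  have h1 : ∃ α ∈ simples Q, 0 < (coroot β α).re := by
    by_contra! hcon
    have : ∀ v ∈ AddSubmonoid.closure (simples Q), (coroot β v).re ≤ 0 := by
      intro v hv
      induction hv using AddSubmonoid.closure_induction with
      | mem v hv => exact hcon v hv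
      | zero => simp
      | add v w _ _ h h' => rw [map_add, Complex.add_re]; linarith
    have := this β (T.mem_closure_simples H β hβ)
    rw [H.co2 β hβR] at this
    norm_num at this
  obtain ⟨α, hα, hpos⟩ := h1
  have hαR := T.sub (T.pos_sub hα.1)
  obtain ⟨m, hm⟩ := H.crys β hβR α hαR
  obtain ⟨n, hn⟩ := H.crys α hαR β hβR
  have hm0 : 0 < m := by rw [hm] at hpos; simpa using hpos
  have hs := H.pairing_symm (H.neg_mem hβR) hαR (m := -m) (n := -n)
    (by rw [H.coroot_neg hβR, hm]; simp) (by rw [map_neg, hn]; simp)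
  have hn0 : 0 < n := by have := hs.1 (by omega); omega
  lift n to ℕ using hn0.le
  exact ⟨α, hα, n, by exact_mod_cast hn0, by simpa using hn⟩

/-- Every reflection is a product of simple reflections. -/
lemma rf_mem_reflGroup_simples (T : IsPosSystem R coroot S Q) (H : IsRootSystem R coroot) :
    ∀ β ∈ Q, rf coroot β ∈ reflGroup coroot (simples Q) := by
  refine T.pos_induction H fun β hβ ih => ?_
  by_cases hs : β ∈ simples Q
  · exact rf_mem_reflGroup hs
  obtain ⟨α, hα, n, hn, hαβ⟩ := T.exists_simple_pairing_pos H hβ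
  have hαR := T.sub (T.pos_sub hα.1)
  have hβR := T.sub (T.pos_sub hβ)
  have hαW : rf coroot α ∈ reflGroup coroot (R : Set V) := rf_mem_reflGroup hαR
  have hαD := rf_mem_reflGroup (coroot := coroot) hα
  have hsub : β - rf coroot α β = n • α := by
    rw [H.rf_apply hαR, hαβ, sub_sub_cancel, Nat.cast_smul_eq_nsmul]
  have h1 := ih (rf coroot α β) (T.simple_refl H hα hβ (by rintro rfl; exact hs hα)) (by
    rw [hsub]; exact nsmul_mem (AddSubmonoid.subset_closure hα.1) n) (by
    intro h
    rw [h, sub_self] at hsub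
    have h2 := congrArg (coroot α) hsub
    rw [map_zero, map_nsmul, H.co2 α hαR, nsmul_eq_mul] at h2
    have : (n : ℂ) = 0 := by simpa using h2.symm
    have : n = 0 := by exact_mod_cast this
    omega)
  rw [H.rf_weyl hαW hβR] at h1
  have h2 := mul_mem (mul_mem (inv_mem hαD) h1) hαD
  simpa [mul_assoc] using h2

lemma reflGroup_eq (T : IsPosSystem R coroot S Q) (H : IsRootSystem R coroot) :
    reflGroup coroot S = reflGroup coroot (simples Q) := by
  apply le_antisymm
  · refine (Subgroup.closure_le _).2 ?_
    rintro _ ⟨β, hβ, rfl⟩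
    by_cases hQ : β ∈ Q
    · exact T.rf_mem_reflGroup_simples H β hQ
    · rw [← H.rf_neg (T.sub hβ)]
      exact T.rf_mem_reflGroup_simples H _ (T.neg_mem_pos hβ hQ)
  · exact reflGroup_mono fun α hα => T.pos_sub hα.1

/-! ### Words in simple reflections -/

lemma exists_word (T : IsPosSystem R coroot S Q) (H : IsRootSystem R coroot) {x : V ≃ₗ[ℂ] V}
    (hx : x ∈ reflGroup coroot S) : ∃ l : List V, (∀ α ∈ l, α ∈ simples Q) ∧ x = word coroot l := by
  rw [T.reflGroup_eq H] at hx
  induction hx using Subgroup.closure_induction'' with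
  | mem x hx => obtain ⟨β, hβ, rfl⟩ := hx; exact ⟨[β], by simpa using hβ, by simp [word]⟩
  | inv_mem x hx =>
    obtain ⟨β, hβ, rfl⟩ := hx
    exact ⟨[β], by simpa using hβ, by simp [word, H.rf_inv (T.sub (T.pos_sub hβ.1))]⟩
  | one => exact ⟨[], by simp, by simp [word]⟩
  | mul x y _ _ hx hy =>
    obtain ⟨l, hl, rfl⟩ := hx
    obtain ⟨l', hl', rfl⟩ := hy
    refine ⟨l ++ l', fun α hα => ?_, by simp [word]⟩
    rcases List.mem_append.1 hα with h | h
    exacts [hl α h, hl' α h]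

lemma word_mem (T : IsPosSystem R coroot S Q) {l : List V} (hl : ∀ α ∈ l, α ∈ simples Q) :
    word coroot l ∈ reflGroup coroot S := by
  refine list_prod_mem fun x hx => ?_
  obtain ⟨α, hα, rfl⟩ := List.mem_map.1 hx
  exact rf_mem_reflGroup (T.pos_sub (hl α hα).1)

/-- The exchange condition: if the word `l` sends the simple root `α` to a negative root, then
multiplying `l` on the right by `s_α` amounts to deleting a letter of `l`. -/
lemma exchange (T : IsPosSystem R coroot S Q) (H : IsRootSystem R coroot) {α : V}
    (hα : α ∈ simples Q) (l : List V) (hl : ∀ β ∈ l, β ∈ simples Q)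
    (hneg : word coroot l α ∉ Q) :
    ∃ l' : List V, (∀ β ∈ l', β ∈ simples Q) ∧ l'.length + 1 = l.length ∧
      word coroot l * rf coroot α = word coroot l' := by
  induction l with
  | nil => exact absurd hα.1 hneg
  | cons β t ih =>
    have hβ := hl β (by simp)
    have ht : ∀ δ ∈ t, δ ∈ simples Q := fun δ hδ => hl δ (by simp [hδ])
    have hcons : word coroot (β :: t) = rf coroot β * word coroot t := by simp [word]
    by_cases hQ : word coroot t α ∈ Q
    · -- the last sign change happens at `β`, so the reflection in `β` is conjugate to that in `α`
      have heq : word coroot t α = β := by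
        by_contra hne
        rw [hcons, LinearEquiv.mul_apply] at hneg
        exact hneg (T.simple_refl H hβ hQ hne)
      have hW := reflGroup_mono T.sub (T.word_mem ht)
      have hconj := H.rf_weyl hW (T.sub (T.pos_sub hα.1))
      refine ⟨t, ht, by simp, ?_⟩
      rw [heq] at hconj
      have h2 := H.rf_mul_self (T.sub (T.pos_sub hα.1))
      rw [hcons, hconj]
      simp [mul_assoc, h2]
    · obtain ⟨l', hl', hlen, hw⟩ := ih ht hQ
      refine ⟨β :: l', ?_, by simp [hlen], ?_⟩
      · intro δ hδ
        rcases List.mem_cons.1 hδ with rfl | h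
        exacts [hβ, hl' δ h]
      · rw [hcons, mul_assoc, hw]; simp [word]

end IsPosSystem

/-! ### Lexicographically dominant elements -/

/-- Positivity for the lexicographic order on `ℂ = ℝ + ℝi`. -/
def LexPos (z : ℂ) : Prop := 0 < z.re ∨ (z.re = 0 ∧ 0 < z.im)

/-- Non-negativity for the lexicographic order on `ℂ`. -/
def LexNonneg (z : ℂ) : Prop := LexPos z ∨ z = 0

lemma LexPos.not_neg {z : ℂ} (h : LexPos z) : ¬LexPos (-z) := by
  simp only [LexPos, Complex.neg_re, Complex.neg_im] at *
  rintro (h' | h') <;> rcases h with h | h <;> linarith [h, h']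

lemma lex_trichotomy (z : ℂ) : LexPos z ∨ z = 0 ∨ LexPos (-z) := by
  simp only [LexPos, Complex.neg_re, Complex.neg_im, Complex.ext_iff, Complex.zero_re,
    Complex.zero_im]
  rcases lt_trichotomy z.re 0 with h | h | h <;> rcases lt_trichotomy z.im 0 with h' | h' | h' <;>
    simp [h, h']

lemma LexPos.add {z w : ℂ} (h : LexPos z) (h' : LexPos w) : LexPos (z + w) := by
  simp only [LexPos, Complex.add_re, Complex.add_im] at *
  rcases h with h | ⟨h, k⟩ <;> rcases h' with h' | ⟨h', k'⟩
  · left; linarith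
  · left; linarith
  · left; linarith
  · right; constructor <;> linarith

lemma lexPos_mul_real {z : ℂ} {r : ℝ} (hr : 0 < r) : LexPos (z * r) ↔ LexPos z := by
  simp [LexPos, hr, hr.ne']

lemma lexPos_real_mul {z : ℂ} {r : ℝ} (hr : 0 < r) : LexPos (r * z) ↔ LexPos z := by
  rw [mul_comm, lexPos_mul_real hr]

lemma LexNonneg.eq_zero {z : ℂ} (h : LexNonneg z) (h' : LexNonneg (-z)) : z = 0 := by
  rcases h with h | h
  · rcases h' with h' | h'
    · exact absurd h' h.not_neg
    · simpa using h'
  · exact h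

lemma lexNonneg_int {n : ℤ} (h : 0 ≤ n) : LexNonneg (n : ℂ) := by
  rcases h.eq_or_lt with rfl | h
  · right; simp
  · left; left; simpa using h

variable {S Q : Set V}

/-- If `γ` and `xγ` are both dominant for the positive system `Q`, with `x` a product of simple
reflections, then `x` is a product of reflections fixing `γ`. Write `x = y s_α` with `y`
a shorter word. Either `yα` is negative and the exchange condition shortens the word, or `yα` is
positive, in which case dominance of `γ` and `xγ` gives `⟨γ, α^∨⟩ ≥ 0` and `-⟨γ, α^∨⟩ ≥ 0`. -/
lemma word_mem_of_dominant (T : IsPosSystem R coroot S Q) (H : IsRootSystem R coroot) {γ : V}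
    (hγ : ∀ α ∈ Q, LexNonneg (coroot α γ)) (k : ℕ) :
    ∀ l : List V, l.length = k → (∀ α ∈ l, α ∈ simples Q) →
      (∀ α ∈ Q, LexNonneg (coroot α (word coroot l γ))) →
      word coroot l ∈ reflGroup coroot {α ∈ S | coroot α γ = 0} := by
  induction k using Nat.strong_induction_on with
  | _ k ih =>
  intro l hk hl hdom
  rcases List.eq_nil_or_concat l with rfl | ⟨t, α, rfl⟩
  · exact one_mem _
  rw [List.concat_eq_append] at *
  have hα := hl α (by simp)
  have hαS := T.pos_sub hα.1
  have ht : ∀ δ ∈ t, δ ∈ simples Q := fun δ hδ => hl δ (by simp [hδ])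
  have hlen : t.length + 1 = k := by simpa using hk
  have hw : word coroot (t ++ [α]) = word coroot t * rf coroot α := by simp [word]
  have hW := reflGroup_mono T.sub (T.word_mem ht)
  by_cases hQ : word coroot t α ∈ Q
  · have h1 := hdom _ hQ
    rw [hw, LinearEquiv.mul_apply, H.coroot_weyl hW (T.sub hαS), H.rf_apply (T.sub hαS), map_sub,
      map_smul, H.co2 α (T.sub hαS)] at h1
    have h0 : coroot α γ = 0 := by
      refine (hγ α hα.1).eq_zero ?_
      convert h1 using 1
      rw [smul_eq_mul]; ring
    have hfix : rf coroot α γ = γ := by rw [H.rf_apply (T.sub hαS), h0]; simp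
    rw [hw]
    refine mul_mem (ih t.length (by omega) t rfl ht ?_) (rf_mem_reflGroup ⟨hαS, h0⟩)
    rw [hw, LinearEquiv.mul_apply, hfix] at hdom
    exact hdom
  · obtain ⟨l', hl', hlen', hw'⟩ := T.exchange H hα t ht hQ
    rw [hw, hw']
    refine ih l'.length (by omega) l' rfl hl' ?_
    rw [← hw', ← hw]; exact hdom

lemma mem_of_dominant (T : IsPosSystem R coroot S Q) (H : IsRootSystem R coroot) {γ : V}
    (hγ : ∀ α ∈ Q, LexNonneg (coroot α γ)) {x : V ≃ₗ[ℂ] V} (hx : x ∈ reflGroup coroot S)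
    (hxγ : ∀ α ∈ Q, LexNonneg (coroot α (x γ))) :
    x ∈ reflGroup coroot {α ∈ S | coroot α γ = 0} := by
  obtain ⟨l, hl, rfl⟩ := T.exists_word H hx
  exact word_mem_of_dominant T H hγ _ l rfl hl hxγ

/-! ### Stabilizers -/

lemma IsRootSystem.apply_eq_of_mem (H : IsRootSystem R coroot) {γ : V} {U : Set V} (hU : U ⊆ R)
    (h0 : ∀ α ∈ U, coroot α γ = 0) {x : V ≃ₗ[ℂ] V} (hx : x ∈ reflGroup coroot U) : x γ = γ := by
  have hrf : ∀ α ∈ U, rf coroot α γ = γ := fun α hα => by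
    rw [H.rf_apply (hU hα), h0 α hα, zero_smul, sub_zero]
  induction hx using Subgroup.closure_induction'' with
  | mem x hx => obtain ⟨β, hβ, rfl⟩ := hx; exact hrf β hβ
  | inv_mem x hx =>
    obtain ⟨β, hβ, rfl⟩ := hx
    rw [H.rf_inv (hU hβ)]; exact hrf β hβ
  | one => rfl
  | mul x y _ _ hx hy => rw [LinearEquiv.mul_apply, hy, hx]

/-- For any `γ`, the roots `α` with `⟨γ, α^∨⟩ > 0` lexicographically, together with the elements
of `P` orthogonal to `γ`, form a positive system, for which `γ` is dominant. -/
lemma isPosSystem_lex (H : IsRootSystem R coroot) {P : Set V}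
    (T : IsPosSystem R coroot (R : Set V) P) (γ : V) :
    IsPosSystem R coroot (R : Set V)
      {α | α ∈ R ∧ (LexPos (coroot α γ) ∨ (coroot α γ = 0 ∧ α ∈ P))} where
  sub := subset_rfl
  refl := fun α hα β hβ => H.rf_mem hα hβ
  pos_sub := fun α hα => hα.1
  pos := by
    intro α hα
    have hα' : α ∈ R := hα
    simp only [Set.mem_ofPred_eq, H.coroot_neg hα', hα', H.neg_mem hα', true_and, neg_eq_zero]
    have hp := T.pos α hα
    rcases lex_trichotomy (coroot α γ) with h | h | h
    · have h0 : coroot α γ ≠ 0 := by intro h0; simp [h0, LexPos] at h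
      simp [h, h0, h.not_neg]
    · have h1 : ¬LexPos 0 := by simp [LexPos]
      simp [h, h1, hp]
    · have h0 : coroot α γ ≠ 0 := by intro h0; simp [h0, LexPos] at h
      have := h.not_neg
      rw [neg_neg] at this
      simp [h, h0, this]
  sum := by
    -- the sign of `⟨γ, α^∨⟩` is that of `(γ, α)`, which is additive in `α`
    have key : ∀ α ∈ R, (LexPos (coroot α γ) ↔ LexPos (form R coroot γ α)) ∧
        (coroot α γ = 0 ↔ form R coroot γ α = 0) := by
      intro α hα
      obtain ⟨a, ha, ha'⟩ := H.form_self_pos hα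
      have h := H.two_mul_form hα γ
      rw [ha'] at h
      have ha0 : (a : ℂ) ≠ 0 := by exact_mod_cast ha.ne'
      constructor
      · rw [← lexPos_mul_real ha, ← h, ← lexPos_real_mul (z := form R coroot γ α) two_pos]
        norm_num
      · constructor
        · intro h0
          rw [h0] at h
          simpa using h
        · intro h0
          rw [h0] at h
          simpa [ha0] using h.symm
    rintro α ⟨hα, hα'⟩ β ⟨hβ, hβ'⟩ hsum
    refine ⟨hsum, ?_⟩
    rw [(key α hα).1, (key α hα).2] at hα'
    rw [(key β hβ).1, (key β hβ).2] at hβ'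
    rw [(key _ hsum).1, (key _ hsum).2, form_add_right]
    rcases hα' with h | ⟨h, h'⟩ <;> rcases hβ' with k | ⟨k, k'⟩
    · exact Or.inl (h.add k)
    · rw [k, add_zero]; exact Or.inl h
    · rw [h, zero_add]; exact Or.inl k
    · rw [h, k, add_zero]; exact Or.inr ⟨rfl, T.sum α h' β k' hsum⟩

/-- The stabilizer of `γ` in the Weyl group is generated by the reflections fixing `γ`. -/
lemma stabilizer_le (H : IsRootSystem R coroot) {P : Set V}
    (T : IsPosSystem R coroot (R : Set V) P) {γ : V} {w : V ≃ₗ[ℂ] V}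
    (hw : w ∈ reflGroup coroot (R : Set V)) (hγ : w γ = γ) :
    w ∈ reflGroup coroot {α ∈ (R : Set V) | coroot α γ = 0} := by
  have hdom : ∀ α ∈ {α | α ∈ R ∧ (LexPos (coroot α γ) ∨ (coroot α γ = 0 ∧ α ∈ P))},
      LexNonneg (coroot α γ) := fun α hα => hα.2.imp id And.left
  exact mem_of_dominant (isPosSystem_lex H T γ) H hdom hw (by rw [hγ]; exact hdom)

/-! ### Integral root systems -/

/-- The integral root system `R(γ)`. -/
def intRoots (R : Finset V) (coroot : V → (V →ₗ[ℂ] ℂ)) (γ : V) : Set V :=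
  {α | α ∈ R ∧ ∃ n : ℤ, coroot α γ = n}

lemma intRoots_sub (γ : V) : intRoots R coroot γ ⊆ R := fun _ h => h.1

lemma weylGroup_eq (H : IsRootSystem R coroot) :
    weylGroup R coroot = reflGroup coroot (R : Set V) := by
  unfold weylGroup reflGroup
  congr 1
  ext w
  constructor
  · rintro ⟨α, hα, hw⟩
    exact ⟨α, hα, (H.rf_unique hα hw).symm⟩
  · rintro ⟨α, hα, rfl⟩
    exact ⟨α, hα, H.rf_apply hα⟩

lemma intWeylGroup_eq (H : IsRootSystem R coroot) (γ : V) :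
    intWeylGroup R coroot γ = reflGroup coroot (intRoots R coroot γ) := by
  unfold intWeylGroup reflGroup
  congr 1
  ext w
  constructor
  · rintro ⟨α, hα, hn, hw⟩
    exact ⟨α, ⟨hα, hn⟩, (H.rf_unique hα hw).symm⟩
  · rintro ⟨α, ⟨hα, hn⟩, rfl⟩
    exact ⟨α, hα, hn, H.rf_apply hα⟩

lemma intRoots_rf (H : IsRootSystem R coroot) {γ β : V} (hβ : β ∈ intRoots R coroot γ) :
    intRoots R coroot (rf coroot β γ) = intRoots R coroot γ := by
  ext α
  refine and_congr_right fun hα => ?_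
  obtain ⟨hβR, n, hn⟩ := hβ
  obtain ⟨m, hm⟩ := H.crys α hα β hβR
  rw [H.rf_apply hβR, map_sub, map_smul, hn, hm, smul_eq_mul]
  constructor
  · rintro ⟨k, hk⟩
    exact ⟨k + n * m, by push_cast; linear_combination hk⟩
  · rintro ⟨k, hk⟩
    exact ⟨k - n * m, by push_cast; linear_combination hk⟩

/-- `R(xγ) = R(γ)` for `x ∈ W(γ)`. -/
lemma intRoots_apply (H : IsRootSystem R coroot) {γ : V} {x : V ≃ₗ[ℂ] V}
    (hx : x ∈ reflGroup coroot (intRoots R coroot γ)) :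
    intRoots R coroot (x γ) = intRoots R coroot γ := by
  -- the induction needs the claim for every `v` with the same integral root system
  suffices h : ∀ v, intRoots R coroot v = intRoots R coroot γ →
      intRoots R coroot (x v) = intRoots R coroot γ from h γ rfl
  induction hx using Subgroup.closure_induction'' with
  | mem x hx =>
    obtain ⟨β, hβ, rfl⟩ := hx
    exact fun v hv => (intRoots_rf H (hv ▸ hβ)).trans hv
  | inv_mem x hx =>
    obtain ⟨β, hβ, rfl⟩ := hx
    rw [H.rf_inv hβ.1]
    exact fun v hv => (intRoots_rf H (hv ▸ hβ)).trans hv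
  | one => exact fun v hv => hv
  | mul x y _ _ hx hy => exact fun v hv => hx _ (hy v hv)

/-- `w W(γ) w⁻¹ ⊆ W(wγ)`. -/
lemma conj_mem (H : IsRootSystem R coroot) {γ : V} {w x : V ≃ₗ[ℂ] V}
    (hw : w ∈ reflGroup coroot (R : Set V)) (hx : x ∈ reflGroup coroot (intRoots R coroot γ)) :
    w * x * w⁻¹ ∈ reflGroup coroot (intRoots R coroot (w γ)) := by
  have key : ∀ β ∈ intRoots R coroot γ,
      w * rf coroot β * w⁻¹ ∈ reflGroup coroot (intRoots R coroot (w γ)) := by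
    rintro β ⟨hβ, n, hn⟩
    rw [← H.rf_weyl hw hβ]
    exact rf_mem_reflGroup ⟨H.weyl_mem hw hβ, n, by rw [H.coroot_weyl hw hβ, hn]⟩
  induction hx using Subgroup.closure_induction'' with
  | mem x hx => obtain ⟨β, hβ, rfl⟩ := hx; exact key β hβ
  | inv_mem x hx =>
    obtain ⟨β, hβ, rfl⟩ := hx
    rw [H.rf_inv hβ.1]; exact key β hβ
  | one => simp
  | mul x y _ _ hx hy =>
    have := mul_mem hx hy
    simpa [mul_assoc] using this

lemma isPosSystem_int (H : IsRootSystem R coroot) {P : Finset V}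
    (T : IsPosSystem R coroot (R : Set V) (P : Set V)) (γ : V) :
    IsPosSystem R coroot (intRoots R coroot γ) ((P : Set V) ∩ intRoots R coroot γ) where
  sub := intRoots_sub γ
  refl := by
    rintro α hα β ⟨hβ, n, hn⟩
    rw [← intRoots_rf H hα]
    exact ⟨H.rf_mem hα.1 hβ, n, by rw [H.coroot_rf hβ hα.1, hn]⟩
  pos_sub := Set.inter_subset_right
  pos := by
    intro α hα
    have hneg : -α ∈ intRoots R coroot γ := by
      obtain ⟨hα, n, hn⟩ := hα
      exact ⟨H.neg_mem hα, -n, by rw [H.coroot_neg hα, hn]; simp⟩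
    have := T.pos α hα.1
    simp only [Set.mem_inter_iff, hα, hneg, and_true]
    exact this
  sum := fun α hα β hβ h => ⟨T.sum α hα.1 β hβ.1 h.1, h⟩

/-- An orbit `W(δ)δ` contains at most one integrally dominant element. -/
lemma dominant_unique (H : IsRootSystem R coroot) {P : Finset V}
    (T : IsPosSystem R coroot (R : Set V) (P : Set V)) {δ : V} {x y : V ≃ₗ[ℂ] V}
    (hx : x ∈ reflGroup coroot (intRoots R coroot δ))
    (hy : y ∈ reflGroup coroot (intRoots R coroot δ))
    (hxd : IsIntegrallyDominant P coroot (x δ)) (hyd : IsIntegrallyDominant P coroot (y δ)) :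
    x δ = y δ := by
  have hRx := intRoots_apply H hx
  have hRy := intRoots_apply H hy
  have hz : (y * x⁻¹) (x δ) = y δ := by simp [LinearEquiv.mul_apply]
  have hmem := mem_of_dominant (isPosSystem_int H T (x δ)) H (γ := x δ) (x := y * x⁻¹) ?_ ?_ ?_
  · rw [← hz]
    exact (H.apply_eq_of_mem (fun α h => h.1.1) (fun α h => h.2) hmem).symm
  · rintro α ⟨hα, -, n, hn⟩
    rw [hn]
    exact lexNonneg_int (hxd α hα n hn)
  · rw [hRx]; exact mul_mem hy (inv_mem hx)
  · rw [hz, hRx, ← hRy]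
    rintro α ⟨hα, -, n, hn⟩
    rw [hn]
    exact lexNonneg_int (hyd α hα n hn)

end IntDom

/-- Properties of the `*`-action of `W` on the set `ID` of integrally dominant
elements, where `w*γ` is the unique integrally dominant element of `W(wγ)·(wγ)`:
it is a group action; the stabilizer of `γ` is `W(γ)` (so the orbit is `W/W(γ)`);
`w*γ = x(wγ)` for some `x ∈ W(wγ)`; and for a simple root `α`, `s_α*γ = γ` if
`α ∈ R(γ)` while `s_α*γ = s_α(γ)` otherwise. -/
theorem stmt_15 {V : Type*} [AddCommGroup V] [Module ℂ V] [FiniteDimensional ℂ V]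
    (R : Finset V) (coroot : V → (V →ₗ[ℂ] ℂ))
    -- R is a finite reduced crystallographic root system spanning V
    (hspan : Submodule.span ℂ (R : Set V) = ⊤)
    (hco2 : ∀ α ∈ R, coroot α α = 2)
    (hcrys : ∀ α ∈ R, ∀ β ∈ R, ∃ n : ℤ, coroot α β = (n : ℂ))
    (hrefl : ∀ α ∈ R, ∀ β ∈ R, β - coroot α β • α ∈ R)
    (hred : ∀ α ∈ R, ∀ c : ℂ, c • α ∈ R → c = 1 ∨ c = -1)
    -- P is a positive system in R
    (P : Finset V) (hPR : P ⊆ R)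
    (hpos : ∀ α ∈ R, (α ∈ P ↔ ¬(-α ∈ P)))
    (hsum : ∀ α ∈ P, ∀ β ∈ P, α + β ∈ R → α + β ∈ P)
    -- star w γ is the unique integrally dominant element of W(wγ)·(wγ)
    (star : (V ≃ₗ[ℂ] V) → V → V)
    (hstar : ∀ w ∈ weylGroup R coroot, ∀ γ : V, IsIntegrallyDominant P coroot γ →
      IsIntegrallyDominant P coroot (star w γ) ∧
      ∃ x ∈ intWeylGroup R coroot (w γ), x (w γ) = star w γ) :
    -- (1) star is an action of W on the integrally dominant elements
    ((∀ γ : V, IsIntegrallyDominant P coroot γ → star 1 γ = γ) ∧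
     (∀ w ∈ weylGroup R coroot, ∀ w' ∈ weylGroup R coroot,
        ∀ γ : V, IsIntegrallyDominant P coroot γ →
          star (w * w') γ = star w (star w' γ))) ∧
    -- (2) the stabilizer of γ is W(γ), and the orbit of γ is in bijection with W/W(γ)
    ((∀ γ : V, IsIntegrallyDominant P coroot γ →
        ∀ w ∈ weylGroup R coroot, (star w γ = γ ↔ w ∈ intWeylGroup R coroot γ)) ∧
     (∀ γ : V, IsIntegrallyDominant P coroot γ →
        ∀ w ∈ weylGroup R coroot, ∀ w' ∈ weylGroup R coroot,
          (star w γ = star w' γ ↔ w⁻¹ * w' ∈ intWeylGroup R coroot γ))) ∧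
    -- (3) star w γ = x (w γ) for some x ∈ W(wγ)
    (∀ w ∈ weylGroup R coroot, ∀ γ : V, IsIntegrallyDominant P coroot γ →
      ∃ x ∈ intWeylGroup R coroot (w γ), star w γ = x (w γ)) ∧
    -- (4) action of a simple reflection
    (∀ γ : V, IsIntegrallyDominant P coroot γ →
      ∀ α ∈ P, (¬∃ β ∈ P, ∃ β' ∈ P, α = β + β') →
        ∀ s : V ≃ₗ[ℂ] V, (∀ x : V, s x = x - coroot α x • α) →
          ((∃ n : ℤ, coroot α γ = (n : ℂ)) → star s γ = γ) ∧
          ((¬∃ n : ℤ, coroot α γ = (n : ℂ)) → star s γ = s γ)) := by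
  have H : IntDom.IsRootSystem R coroot := ⟨hspan, hco2, hcrys, hrefl, hred⟩
  have T : IntDom.IsPosSystem R coroot (R : Set V) (P : Set V) :=
    ⟨subset_rfl, fun α hα β hβ => H.rf_mem hα hβ, fun α hα => hPR hα, hpos, hsum⟩
  simp only [IntDom.weylGroup_eq H, IntDom.intWeylGroup_eq H] at hstar ⊢
  -- `w * γ` is characterized by dominance and membership in the orbit
  have huniq : ∀ w ∈ IntDom.reflGroup coroot (R : Set V), ∀ γ : V,
      IsIntegrallyDominant P coroot γ →
      ∀ x ∈ IntDom.reflGroup coroot (IntDom.intRoots R coroot (w γ)),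
      IsIntegrallyDominant P coroot (x (w γ)) → star w γ = x (w γ) := by
    intro w hw γ hγ x hx hd
    obtain ⟨h1, y, hy, hy'⟩ := hstar w hw γ hγ
    rw [← hy'] at h1 ⊢
    exact IntDom.dominant_unique H T hy hx h1 hd
  have hone : ∀ γ : V, IsIntegrallyDominant P coroot γ → star 1 γ = γ := fun γ hγ =>
    huniq 1 (one_mem _) γ hγ 1 (one_mem _) hγ
  have hmul : ∀ w ∈ IntDom.reflGroup coroot (R : Set V),
      ∀ w' ∈ IntDom.reflGroup coroot (R : Set V), ∀ γ : V, IsIntegrallyDominant P coroot γ →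
        star (w * w') γ = star w (star w' γ) := by
    intro w hw w' hw' γ hγ
    obtain ⟨h1, x, hx, hx'⟩ := hstar w' hw' γ hγ
    obtain ⟨h2, y, hy, hy'⟩ := hstar w hw _ h1
    have hc := IntDom.conj_mem H hw hx
    have he : (w * x * w⁻¹) ((w * w') γ) = w (star w' γ) := by
      rw [← hx']; simp [LinearEquiv.mul_apply]
    have hc' : w * x * w⁻¹ ∈
        IntDom.reflGroup coroot (IntDom.intRoots R coroot ((w * w') γ)) := hc
    have hR := IntDom.intRoots_apply H hc'
    rw [he] at hR
    rw [hR] at hy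
    have h3 : (y * (w * x * w⁻¹)) ((w * w') γ) = star w (star w' γ) := by
      rw [LinearEquiv.mul_apply, he, hy']
    rw [← h3]
    refine huniq _ (mul_mem hw hw') γ hγ _ (mul_mem hy hc') ?_
    rw [h3]; exact h2
  have hstab : ∀ γ : V, IsIntegrallyDominant P coroot γ →
      ∀ w ∈ IntDom.reflGroup coroot (R : Set V),
        (star w γ = γ ↔ w ∈ IntDom.reflGroup coroot (IntDom.intRoots R coroot γ)) := by
    intro γ hγ w hw
    constructor
    · intro h
      obtain ⟨-, x, hx, hx'⟩ := hstar w hw γ hγ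
      rw [h] at hx'
      -- `x = w y w⁻¹` with `y ∈ W(γ)`, and `x w = w y` fixes `γ`
      have hy := IntDom.conj_mem H (inv_mem hw) hx
      have hγ' : w⁻¹ (w γ) = γ := by simp
      rw [hγ', inv_inv] at hy
      have hxW := IntDom.reflGroup_mono (IntDom.intRoots_sub _) hx
      have hs := IntDom.stabilizer_le H T (mul_mem hxW hw) hx'
      have hs' : x * w ∈ IntDom.reflGroup coroot (IntDom.intRoots R coroot γ) :=
        IntDom.reflGroup_mono (T' := IntDom.intRoots R coroot γ)
          (fun α hα => show α ∈ R ∧ _ from ⟨hα.1, 0, by rw [hα.2]; simp⟩) hs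
      have := mul_mem hs' (inv_mem hy)
      simpa [mul_assoc] using this
    · intro h
      have hR := IntDom.intRoots_apply H h
      have := huniq w hw γ hγ w⁻¹ (by rw [hR]; exact inv_mem h) (by simpa using hγ)
      simpa using this
  refine ⟨⟨hone, hmul⟩, ⟨hstab, ?_⟩, ?_, ?_⟩
  · intro γ hγ w hw w' hw'
    rw [← hstab γ hγ _ (mul_mem (inv_mem hw) hw'), hmul _ (inv_mem hw) _ hw' γ hγ]
    constructor
    · intro h
      rw [← h, ← hmul _ (inv_mem hw) _ hw γ hγ, inv_mul_cancel, hone γ hγ]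
    · intro h
      have hd := (hstar w' hw' γ hγ).1
      have h2 := hmul w hw w⁻¹ (inv_mem hw) _ hd
      rw [h, mul_inv_cancel, hone _ hd] at h2
      exact h2.symm
  · intro w hw γ hγ
    obtain ⟨-, x, hx, hx'⟩ := hstar w hw γ hγ
    exact ⟨x, hx, hx'.symm⟩
  · intro γ hγ α hα hsimple s hs
    have hαR := hPR hα
    obtain rfl := H.rf_unique hαR hs
    have hW : IntDom.rf coroot α ∈ IntDom.reflGroup coroot (R : Set V) :=
      IntDom.rf_mem_reflGroup hαR
    refine ⟨fun h => (hstab γ hγ _ hW).2 (IntDom.rf_mem_reflGroup ⟨hαR, h⟩), fun h => ?_⟩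
    refine huniq _ hW γ hγ 1 (one_mem _) ?_
    -- `s_α` permutes the positive roots other than `α`, so `s_α γ` is still integrally dominant
    intro β hβ n hn
    have hn' : coroot β (IntDom.rf coroot α γ) = n := hn
    have h1 := H.coroot_rf (hPR hβ) hαR (IntDom.rf coroot α γ)
    rw [H.rf_rf hαR, hn'] at h1
    have hne : β ≠ α := by
      rintro rfl
      rw [H.rf_self hαR, H.coroot_neg hαR] at h1
      exact h ⟨-n, by push_cast; linear_combination -h1⟩
    exact hγ _ (T.simple_refl H ⟨hα, hsimple⟩ hβ hne) n h1
end

section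
/- For every γ ∈ V_ℂ, the integral Weyl group W(γ) coincides with the set {w ∈ W : wγ − γ ∈ ℤR}, where ℤR ⊆ V ⊆ V_ℂ is the root lattice (the ℤ-span of R). -/
/-! ### Reflection groups with positivity -/

/-- A group generated by reflections of a (possibly infinite) reduced root system with a chosen
notion of positivity. The group `G` acts on an abelian group `M` containing the set `Φ` of roots;
`r a` is the reflection attached to the root `a`, acting on roots by `b ↦ b - n a b • a`; a root is
positive when its image under `val`, which lies in a totally ordered group, is positive. -/
structure ReflData (G M Γ : Type*) [Group G] [AddCommGroup M] [DistribMulAction G M]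
    [AddCommGroup Γ] [LinearOrder Γ] [IsOrderedAddMonoid Γ] where
  /-- the set of roots -/
  Φ : Set M
  /-- the reflection attached to a root -/
  r : M → G
  /-- the Cartan integers -/
  n : M → M → ℤ
  /-- the additive map whose sign decides positivity -/
  val : M →+ Γ
  smul_mem : ∀ g : G, ∀ a ∈ Φ, g • a ∈ Φ
  r_smul : ∀ a ∈ Φ, ∀ b ∈ Φ, r a • b = b - n a b • a
  n_self : ∀ a ∈ Φ, n a a = 2
  n_le : ∀ a ∈ Φ, ∀ b ∈ Φ, n a b ≤ 3
  r_conj : ∀ g : G, ∀ a ∈ Φ, r (g • a) = g * r a * g⁻¹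
  r_mul_self : ∀ a ∈ Φ, r a * r a = 1
  r_neg : ∀ a ∈ Φ, r (-a) = r a
  gen : Subgroup.closure (r '' Φ) = ⊤
  red : ∀ a ∈ Φ, ∀ b ∈ Φ, ∀ k : ℤ, (2 : ℤ) • a = k • b → a = b ∨ a = -b
  val_ne : ∀ a ∈ Φ, val a ≠ 0
  /-- root strings; the last alternative is that of an imaginary root `b - a` -/
  str : ∀ a ∈ Φ, ∀ b ∈ Φ, 0 < n a b → a ≠ b →
    b - a ∈ Φ ∨ (val (b - a) ≠ 0 ∧ ∀ g : G, g • (b - a) = b - a)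
  fin : ∀ g : G, {a | a ∈ Φ ∧ ¬ (0 < val a ↔ 0 < val (g⁻¹ • a))}.Finite

namespace ReflData

variable {G M Γ : Type*} [Group G] [AddCommGroup M] [DistribMulAction G M]
    [AddCommGroup Γ] [LinearOrder Γ] [IsOrderedAddMonoid Γ] (D : ReflData G M Γ)

/-- The roots whose sign differs from that of their image under `g⁻¹`, that is, the (signed)
hyperplanes separating the base chamber from its image under `g`. -/
def N (g : G) : Set M := {a | a ∈ D.Φ ∧ ¬ (0 < D.val a ↔ 0 < D.val (g⁻¹ • a))}

/-- A root is simple when its hyperplane is the only one separating the base chamber from its image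
under the reflection. -/
def Simple (a : M) : Prop := a ∈ D.Φ ∧ ∀ b, b ∈ D.N (D.r a) ↔ b = a ∨ b = -a

variable {D}

lemma r_self {a : M} (ha : a ∈ D.Φ) : D.r a • a = -a := by
  rw [D.r_smul a ha a ha, D.n_self a ha, two_zsmul]; abel

lemma neg_mem {a : M} (ha : a ∈ D.Φ) : -a ∈ D.Φ := r_self ha ▸ D.smul_mem _ _ ha

lemma r_inv {a : M} (ha : a ∈ D.Φ) : (D.r a)⁻¹ = D.r a :=
  inv_eq_of_mul_eq_one_left (D.r_mul_self a ha)

lemma pos_neg {a : M} (ha : a ∈ D.Φ) : 0 < D.val (-a) ↔ ¬ 0 < D.val a := by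
  have := D.val_ne a ha
  rw [map_neg, neg_pos, not_lt]
  exact ⟨le_of_lt, fun h => lt_of_le_of_ne h this⟩

lemma neg_mem_N {g : G} {a : M} (ha : a ∈ D.N g) : -a ∈ D.N g := by
  refine ⟨neg_mem ha.1, ?_⟩
  rw [smul_neg, pos_neg ha.1, pos_neg (D.smul_mem _ _ ha.1)]
  have := ha.2
  tauto

lemma mem_N_mul {g h : G} {a : M} :
    a ∈ D.N (g * h) ↔ (a ∈ D.N g ∧ g⁻¹ • a ∉ D.N h) ∨ (a ∉ D.N g ∧ g⁻¹ • a ∈ D.N h) := by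
  by_cases ha : a ∈ D.Φ
  · have := D.smul_mem g⁻¹ a ha
    simp only [N, Set.mem_ofPred_eq, ha, this, true_and, mul_inv_rev, mul_smul]
    tauto
  · have : g⁻¹ • a ∉ D.Φ := fun h => ha (by simpa using D.smul_mem g _ h)
    simp [N, ha, this]

lemma mem_N_r {a : M} (ha : a ∈ D.Φ) : a ∈ D.N (D.r a) := by
  refine ⟨ha, ?_⟩
  rw [r_inv ha, r_self ha, pos_neg ha]
  tauto

lemma mem_N_r_smul {a b : M} (ha : a ∈ D.Φ) (hb : b ∈ D.N (D.r a)) :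
    D.r a • b ∈ D.N (D.r a) := by
  refine ⟨D.smul_mem _ _ hb.1, ?_⟩
  have := hb.2
  rw [r_inv ha] at this ⊢
  rw [← mul_smul, D.r_mul_self a ha, one_smul]
  tauto

/-- If the positive root `a` is not simple, a root `b` witnessing this gives rise to a
decomposition of `a` as a sum of two positive elements, each a real or an imaginary root. They are
consecutive members, up to sign, of the `a`-string through `b`. -/
lemma exists_decomp {a b : M} (ha : a ∈ D.Φ) (hb : b ∈ D.Φ) (pa : 0 < D.val a)
    (pb : 0 < D.val b) (hab : a ≠ b) (hN : ¬ 0 < D.val (D.r a • b)) :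
    ∃ x y, a = x + y ∧ 0 < D.val x ∧ 0 < D.val y ∧ x ∈ D.Φ ∧
      (y ∈ D.Φ ∨ ∀ g : G, g • y = y) := by
  have hrb := D.r_smul a ha b hb
  set n := D.n a b with hn
  set c := -(D.r a • b) with hc
  have hcΦ : c ∈ D.Φ := neg_mem (D.smul_mem _ _ hb)
  have pc : 0 < D.val c := (pos_neg (D.smul_mem _ _ hb)).2 hN
  have hc' : c = n • a - b := by rw [hc, hrb]; abel
  have hvc : n • D.val a = D.val b + D.val c := by rw [hc']; simp
  have npos : 0 < n := by
    by_contra h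
    have : n • D.val a ≤ 0 := by
      have := zsmul_le_zsmul_left pa.le (not_lt.1 h)
      simpa using this
    rw [hvc] at this
    exact absurd this (not_le.2 (add_pos pb pc))
  have hn3 : n ≤ 3 := D.n_le a ha b hb
  -- if `b' - a` is negative for a positive root `b'`, then `a = b' + (a - b')` will do
  have key : ∀ b' ∈ D.Φ, 0 < D.val b' → (b' - a ∈ D.Φ ∨ (D.val (b' - a) ≠ 0 ∧
      ∀ g : G, g • (b' - a) = b' - a)) → ¬ 0 < D.val (b' - a) →
      ∃ x y, a = x + y ∧ 0 < D.val x ∧ 0 < D.val y ∧ x ∈ D.Φ ∧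
      (y ∈ D.Φ ∨ ∀ g : G, g • y = y) := by
    intro b' hb' pb' hs hneg
    refine ⟨b', a - b', by abel, pb', ?_, hb', ?_⟩
    · have : D.val (b' - a) ≠ 0 := hs.elim (D.val_ne _) And.left
      rw [← neg_sub, map_neg, neg_pos]
      exact lt_of_le_of_ne (not_lt.1 hneg) this
    · rw [← neg_sub]
      exact hs.imp neg_mem fun h g => by rw [smul_neg, h.2 g]
  have hsb := D.str a ha b hb npos hab
  obtain h | h | h : n = 1 ∨ n = 2 ∨ n = 3 := by omega
  · exact ⟨b, c, by rw [hc', h]; simp, pb, pc, hb, Or.inl hcΦ⟩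
  · by_cases hd : 0 < D.val (b - a)
    · refine ⟨c, b - a, ?_, pc, hd, hcΦ, hsb.imp_right And.right⟩
      rw [hc', h, two_zsmul]; abel
    · exact key b hb pb hsb hd
  · have hac : a ≠ c := by
      intro h'
      have h2 : (2 : ℤ) • a = (1 : ℤ) • b := by
        rw [hc', h] at h'
        have : a + b = (3 : ℤ) • a := by nth_rw 1 [h']; abel
        have : b = (3 : ℤ) • a - a := by rw [← this]; abel
        rw [this]; abel
      rcases D.red a ha b hb 1 h2 with h3 | h3
      · exact hab h3
      · rw [h3] at pa
        exact (pos_neg hb).1 pa pb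
    have hnc : D.n a c = 3 := by
      have h1 := D.r_smul a ha c hcΦ
      have h2 : D.r a • c = -b := by
        rw [hc, smul_neg, ← mul_smul, D.r_mul_self a ha, one_smul]
      have h3 : (D.n a c) • a = (3 : ℤ) • a := by
        rw [← h]
        have : D.n a c • a = c + b := by
          rw [h2, eq_sub_iff_add_eq, neg_add_eq_sub, sub_eq_iff_eq_add] at h1
          exact h1
        rw [this, hc']; abel
      have h4 := congrArg D.val h3
      rw [map_zsmul, map_zsmul] at h4
      exact (zsmul_left_strictMono pa).injective h4
    have hsc := D.str a ha c hcΦ (by omega) hac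
    by_cases hd : 0 < D.val (b - a)
    · by_cases he : 0 < D.val (c - a)
      · have hsum : a = (b - a) + (c - a) := by rw [hc', h]; abel
        rcases hsb with hsb | hsb
        · exact ⟨_, _, hsum, hd, he, hsb, hsc.imp_right And.right⟩
        · rcases hsc with hsc | hsc
          · exact ⟨_, _, hsum.trans (add_comm _ _), he, hd, hsc, Or.inr hsb.2⟩
          · -- `a` would be fixed by its own reflection
            exfalso
            have h1 : D.r a • a = a := by
              nth_rw 2 [hsum]; rw [smul_add, hsb.2, hsc.2, ← hsum]
            rw [r_self ha] at h1
            have := (pos_neg ha).1 (h1.symm ▸ pa)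
            exact this pa
      · exact key c hcΦ pc hsc he
    · exact key b hb pb hsb hd

/-- A nontrivial separating set contains a simple root: take the one of least value. -/
lemma exists_simple {g : G} (hg : (D.N g).Nonempty) : ∃ a ∈ D.N g, D.Simple a := by
  have hfin : {a ∈ D.N g | 0 < D.val a}.Finite := (D.fin g).subset fun a h => h.1
  have hne : {a ∈ D.N g | 0 < D.val a}.Nonempty := by
    obtain ⟨a, ha⟩ := hg
    by_cases h : 0 < D.val a
    · exact ⟨a, ha, h⟩
    · exact ⟨-a, neg_mem_N ha, (pos_neg ha.1).2 h⟩
  obtain ⟨a, ⟨haN, pa⟩, hmin⟩ := Set.exists_min_image _ D.val hfin hne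
  have ha := haN.1
  refine ⟨a, haN, ha, ?_⟩
  have hneg : ¬ 0 < D.val (g⁻¹ • a) := by
    have := haN.2; tauto
  have main : ∀ b ∈ D.N (D.r a), 0 < D.val b → b = a := by
    intro b hb pb
    by_contra hab
    have hb2 : ¬ 0 < D.val (D.r a • b) := by
      have := hb.2; rw [r_inv ha] at this; tauto
    obtain ⟨x, y, hxy, px, py, hx, hy⟩ := exists_decomp ha hb.1 pa pb (Ne.symm hab) hb2
    -- a positive root of smaller value than `a` keeps its sign
    have small : ∀ z ∈ D.Φ, 0 < D.val z → D.val z < D.val a → 0 < D.val (g⁻¹ • z) := by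
      intro z hz pz hlt
      by_contra hc
      exact absurd (hmin z ⟨⟨hz, by tauto⟩, pz⟩) (not_le.2 hlt)
    have hv : D.val a = D.val x + D.val y := by rw [hxy, map_add]
    have h1 := small x hx px (by rw [hv]; exact lt_add_of_pos_right _ py)
    have h2 : 0 < D.val (g⁻¹ • y) := by
      rcases hy with hy | hy
      · exact small y hy py (by rw [hv]; exact lt_add_of_pos_left _ px)
      · rw [hy]; exact py
    apply hneg
    rw [hxy, smul_add, map_add]
    exact add_pos h1 h2
  intro b
  constructor
  · intro hb
    by_cases pb : 0 < D.val b
    · exact Or.inl (main b hb pb)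
    · right
      have := main (-b) (neg_mem_N hb) ((pos_neg hb.1).2 pb)
      rw [← this, neg_neg]
  · rintro (rfl | rfl)
    · exact mem_N_r ha
    · exact neg_mem_N (mem_N_r ha)

/-- Left multiplication by a simple reflection whose root lies in `N g` shortens `g`. -/
lemma card_lt {g : G} {a : M} (hs : D.Simple a) (ha : a ∈ D.N g) :
    (D.N (D.r a * g)).ncard < (D.N g).ncard := by
  have hΦ := hs.1
  rw [← Set.ncard_image_of_injective (D.N (D.r a * g)) (MulAction.injective (D.r a))]
  refine Set.ncard_lt_ncard ?_ (D.fin g)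
  rw [Set.ssubset_iff_of_subset]
  · refine ⟨a, ha, ?_⟩
    rintro ⟨b, hb, hba⟩
    have hb' : b = -a := by
      have h1 : D.r a • D.r a • b = D.r a • a := congrArg (D.r a • ·) hba
      rwa [← mul_smul, D.r_mul_self a hΦ, one_smul, r_self hΦ] at h1
    rw [mem_N_mul, r_inv hΦ, hs.2, hb', smul_neg, r_self hΦ, neg_neg] at hb
    tauto
  · rintro _ ⟨b, hb, rfl⟩
    rw [mem_N_mul, r_inv hΦ, hs.2] at hb
    rcases hb with ⟨h1, h2⟩ | ⟨-, h2⟩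
    · exfalso
      rcases h1 with rfl | rfl
      · rw [r_self hΦ] at h2; exact h2 (neg_mem_N ha)
      · rw [smul_neg, r_self hΦ, neg_neg] at h2; exact h2 ha
    · exact h2

/-- The simple reflections generate all reflections: conjugating `r b` by a simple reflection
occurring in `N (r b)` makes `N (r b)` smaller. -/
lemma r_mem_closure (m : ℕ) : ∀ b ∈ D.Φ, (D.N (D.r b)).ncard ≤ m →
    D.r b ∈ Subgroup.closure (D.r '' {a | D.Simple a}) := by
  induction m with
  | zero =>
    intro b hb h
    have := (Set.ncard_eq_zero (D.fin _)).1 (Nat.le_zero.1 h)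
    exact absurd (mem_N_r hb) (by rw [N, this]; simp)
  | succ m ih =>
    intro b hb h
    obtain ⟨a, haN, hs⟩ := exists_simple ⟨b, mem_N_r hb⟩
    have ha := hs.1
    have hra : D.r a ∈ Subgroup.closure (D.r '' {a | D.Simple a}) :=
      Subgroup.subset_closure ⟨a, hs, rfl⟩
    by_cases h1 : a = b
    · rw [← h1]; exact hra
    by_cases h2 : a = -b
    · rw [← D.r_neg b hb, ← h2]; exact hra
    have hne1 : D.r b • a ≠ a := by
      intro h3
      have := haN.2
      rw [r_inv hb, h3] at this
      tauto
    have hne2 : D.r b • a ≠ -a := by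
      intro h3
      have h4 := D.r_smul b hb a ha
      rw [h3] at h4
      rcases D.red a ha b hb (D.n b a) (by
        rw [eq_sub_iff_add_eq] at h4
        rw [two_zsmul, ← sub_eq_zero]
        rw [← sub_eq_zero] at h4
        rw [← neg_eq_zero, ← h4]; abel) with h5 | h5
      · exact h1 h5
      · exact h2 h5
    have hmem : ∀ c, c ∈ D.N (D.r b * D.r a) ↔ c ∈ D.N (D.r b) ∧
        ¬ (D.r b • c = a ∨ D.r b • c = -a) := by
      intro c
      rw [mem_N_mul, hs.2, r_inv hb]
      have : (D.r b • c = a ∨ D.r b • c = -a) → c ∈ D.N (D.r b) := by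
        intro h
        have : D.r b • c ∈ D.N (D.r b) := by
          rcases h with h | h <;> rw [h]
          exacts [haN, neg_mem_N haN]
        have := mem_N_r_smul hb this
        rwa [← mul_smul, D.r_mul_self b hb, one_smul] at this
      tauto
    have hle : (D.N (D.r b * D.r a)).ncard ≤ (D.N (D.r b)).ncard :=
      Set.ncard_le_ncard (fun c hc => ((hmem c).1 hc).1) (D.fin _)
    have hlt := card_lt hs (g := D.r b * D.r a) ((hmem a).2 ⟨haN, by tauto⟩)
    have hc := D.r_conj (D.r a) b hb
    rw [r_inv ha, mul_assoc] at hc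
    have h3 := ih (D.r a • b) (D.smul_mem _ _ hb) (by rw [hc]; omega)
    rw [hc] at h3
    have h4 := mul_mem (mul_mem hra h3) hra
    rwa [← mul_assoc, ← mul_assoc, D.r_mul_self a ha, one_mul, mul_assoc,
      D.r_mul_self a ha, mul_one] at h4

/-- The exchange property. -/
lemma exchange (L : List M) (hL : ∀ b ∈ L, D.Simple b) :
    ∀ a ∈ D.N (L.map D.r).prod, ∃ L' : List M, (∀ b ∈ L', D.Simple b) ∧
      L'.length < L.length ∧ D.r a * (L.map D.r).prod = (L'.map D.r).prod := by
  induction L with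
  | nil =>
    intro a ha
    simp [N] at ha
  | cons b L ih =>
    intro a ha
    have hsb := hL b (by simp)
    have hb := hsb.1
    have hL1 : ∀ c ∈ L, D.Simple c := fun c hc => hL c (by simp [hc])
    have haΦ := ha.1
    rw [List.map_cons, List.prod_cons] at ha ⊢
    by_cases hab : a = b ∨ a = -b
    · refine ⟨L, hL1, by simp, ?_⟩
      have : D.r a = D.r b := by
        rcases hab with h | h <;> rw [h]
        exact D.r_neg b hb
      rw [this, ← mul_assoc, D.r_mul_self b hb, one_mul]
    · rw [mem_N_mul, hsb.2, r_inv hb] at ha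
      obtain ⟨L', h1, h2, h3⟩ := ih hL1 (D.r b • a) (by tauto)
      refine ⟨b :: L', ?_, by simpa using h2, ?_⟩
      · intro c hc
        rcases List.mem_cons.1 hc with rfl | hc
        exacts [hsb, h1 c hc]
      · rw [List.map_cons, List.prod_cons, ← h3, D.r_conj _ _ haΦ, r_inv hb]
        simp only [← mul_assoc]
        rw [D.r_mul_self b hb, one_mul]

lemma prod_eq_one (m : ℕ) : ∀ L : List M, L.length ≤ m → (∀ b ∈ L, D.Simple b) →
    D.N (L.map D.r).prod = ∅ → (L.map D.r).prod = 1 := by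
  induction m with
  | zero =>
    intro L hL _ _
    rw [List.length_eq_zero_iff.1 (Nat.le_zero.1 hL)]; simp
  | succ m ih =>
    intro L hL hs hN
    cases L with
    | nil => simp
    | cons a L =>
      have hsa := hs a (by simp)
      have ha : a ∈ D.N (L.map D.r).prod := by
        have h1 : (L.map D.r).prod = D.r a * ((a :: L).map D.r).prod := by
          rw [List.map_cons, List.prod_cons, ← mul_assoc, D.r_mul_self a hsa.1, one_mul]
        rw [h1, mem_N_mul, hN]
        exact Or.inl ⟨mem_N_r hsa.1, by simp⟩
      obtain ⟨L', h1, h2, h3⟩ := exchange L (fun c hc => hs c (by simp [hc])) a ha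
      rw [List.map_cons, List.prod_cons] at hN ⊢
      rw [h3] at hN ⊢
      simp only [List.length_cons] at hL
      exact ih L' (by omega) h1 hN

/-- Only the identity fixes the base chamber. -/
lemma eq_one_of_N_eq_empty {g : G} (hg : D.N g = ∅) : g = 1 := by
  have hmem : g ∈ Subgroup.closure (D.r '' {a | D.Simple a}) := by
    have : (⊤ : Subgroup G) ≤ Subgroup.closure (D.r '' {a | D.Simple a}) := by
      rw [← D.gen, Subgroup.closure_le]
      rintro _ ⟨b, hb, rfl⟩
      exact r_mem_closure _ b hb le_rfl
    exact this trivial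
  obtain ⟨L, hL, rfl⟩ : ∃ L : List M, (∀ b ∈ L, D.Simple b) ∧ (L.map D.r).prod = g := by
    have step : ∀ x ∈ D.r '' {a | D.Simple a}, ∀ y : G,
        (∃ L : List M, (∀ b ∈ L, D.Simple b) ∧ (L.map D.r).prod = y) →
        ∃ L : List M, (∀ b ∈ L, D.Simple b) ∧ (L.map D.r).prod = x * y := by
      rintro _ ⟨a, ha, rfl⟩ _ ⟨L, hL, rfl⟩
      exact ⟨a :: L, List.forall_mem_cons.2 ⟨ha, hL⟩, by simp⟩
    clear hg
    induction hmem using Subgroup.closure_induction_left with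
    | one => exact ⟨[], by simp, by simp⟩
    | mul_left x hx y _ ih => exact step x hx y ih
    | inv_mul_cancel x hx y _ ih =>
      have hx' : x⁻¹ = x := by
        obtain ⟨a, ha, rfl⟩ := hx
        exact r_inv ha.1
      rw [hx']
      exact step x hx y ih
  exact prod_eq_one _ L le_rfl hL hg

/-- If the separating sets of the elements of a subgroup `S` only involve roots whose reflections
lie in `K ≤ S`, then `S = K`. -/
lemma le_of_forall_mem_N {S K : Subgroup G} (hKS : K ≤ S)
    (h : ∀ g ∈ S, ∀ a ∈ D.N g, D.r a ∈ K) : S ≤ K := by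
  suffices ∀ m : ℕ, ∀ g ∈ S, (D.N g).ncard ≤ m → g ∈ K from fun g hg => this _ g hg le_rfl
  intro m
  induction m with
  | zero =>
    intro g _ hm
    rw [eq_one_of_N_eq_empty ((Set.ncard_eq_zero (D.fin _)).1 (Nat.le_zero.1 hm))]
    exact one_mem K
  | succ m ih =>
    intro g hg hm
    rcases (D.N g).eq_empty_or_nonempty with h0 | h0
    · rw [eq_one_of_N_eq_empty h0]; exact one_mem K
    · obtain ⟨a, haN, hs⟩ := exists_simple h0
      have hK := h g hg a haN
      have hlt := card_lt hs haN
      have := ih (D.r a * g) (mul_mem (hKS hK) hg) (by omega)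
      exact (Subgroup.mul_mem_cancel_left K hK).1 this

end ReflData

/-! ### Coroots of a finite reduced root system -/

/-- The properties of a reduced root system used for the affine reflection group: besides the
axioms, coroots are distinct and permuted by reflections, the coroot string property holds, Cartan
integers are at most `3`, and proportional coroots agree up to sign. -/
structure CorootFacts {V : Type*} [AddCommGroup V] [Module ℂ V]
    (R : Finset V) (coroot : V → (V →ₗ[ℂ] ℂ)) : Prop where
  two : ∀ α ∈ R, coroot α α = 2
  crys : ∀ α ∈ R, ∀ β ∈ R, ∃ n : ℤ, coroot α β = (n : ℂ)
  refl : ∀ α ∈ R, ∀ β ∈ R, β - coroot α β • α ∈ R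
  inj : ∀ α ∈ R, ∀ β ∈ R, coroot α = coroot β → α = β
  corefl : ∀ α ∈ R, ∀ β ∈ R,
    coroot (β - coroot α β • α) = coroot β - coroot β α • coroot α
  str : ∀ α ∈ R, ∀ β ∈ R, ∀ n : ℤ, coroot β α = n → 0 < n → α ≠ β →
      ∃ δ ∈ R, coroot δ = coroot β - coroot α
  le_three : ∀ α ∈ R, ∀ β ∈ R, ∀ n : ℤ, coroot β α = n → n ≤ 3
  red : ∀ α ∈ R, ∀ β ∈ R, ∀ k : ℤ,
    (2 : ℂ) • coroot α = (k : ℂ) • coroot β → k = 2 ∨ k = -2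

section Finite

open Module Set

variable {V : Type*} [AddCommGroup V] [Module ℂ V] [FiniteDimensional ℂ V]
    {R : Finset V} {coroot : V → (V →ₗ[ℂ] ℂ)}

omit [FiniteDimensional ℂ V] in
lemma coroot_injOn
    (hco2 : ∀ α ∈ R, coroot α α = 2)
    (hrefl : ∀ α ∈ R, ∀ β ∈ R, β - coroot α β • α ∈ R)
    {α β : V} (hα : α ∈ R) (hβ : β ∈ R) (h : coroot α = coroot β) : α = β := by
  have : IsAddTorsionFree V := .of_isTorsionFree ℂ V
  exact Module.eq_of_mapsTo_reflection_of_mem (f := coroot α) (g := coroot β) R.finite_toSet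
    (hco2 α hα) (hco2 β hβ) (h ▸ hco2 α hα) (h ▸ hco2 β hβ) (hrefl α hα) (hrefl β hβ) hβ

/-- The Mathlib root pairing attached to the data of the theorem. -/
noncomputable def toRootPairing
    (hspan : Submodule.span ℂ (R : Set V) = ⊤)
    (hco2 : ∀ α ∈ R, coroot α α = 2)
    (hrefl : ∀ α ∈ R, ∀ β ∈ R, β - coroot α β • α ∈ R) :
    RootPairing R ℂ V (Dual ℂ V) :=
  RootPairing.mk'' (Dual.eval ℂ V) ⟨fun i : R => (i : V), Subtype.val_injective⟩
    ⟨fun i : R => coroot i, fun i j h => Subtype.ext (coroot_injOn hco2 hrefl i.2 j.2 h)⟩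
    (fun i => hco2 i i.2)
    (by
      rintro i _ ⟨j, rfl⟩
      exact ⟨⟨_, hrefl i i.2 j j.2⟩, rfl⟩)
    (by simpa using hspan)

lemma corootFacts
    (hspan : Submodule.span ℂ (R : Set V) = ⊤)
    (hco2 : ∀ α ∈ R, coroot α α = 2)
    (hcrys : ∀ α ∈ R, ∀ β ∈ R, ∃ n : ℤ, coroot α β = (n : ℂ))
    (hrefl : ∀ α ∈ R, ∀ β ∈ R, β - coroot α β • α ∈ R)
    (hred : ∀ α ∈ R, ∀ c : ℂ, c • α ∈ R → c = 1 ∨ c = -1) :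
    CorootFacts R coroot := by
  set P := toRootPairing hspan hco2 hrefl with hP
  have hroot : ∀ i : R, P.root i = i := fun i => rfl
  have hcoroot : ∀ i : R, P.coroot i = coroot i := fun i => rfl
  have hpair : ∀ i j : R, P.pairing i j = coroot j i := fun i j => rfl
  have hC : P.IsCrystallographic := ⟨fun i j => by
    obtain ⟨n, hn⟩ := hcrys j j.2 i i.2
    exact ⟨n, by rw [hpair, hn]; simp⟩⟩
  have hR : P.IsReduced := ⟨fun i j h => by
    have hi0 : P.root i ≠ 0 := P.ne_zero i
    rw [LinearIndependent.pair_iff' hi0] at h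
    push Not at h
    obtain ⟨c, hc⟩ := h
    rw [hroot, hroot] at hc ⊢
    rcases hred i i.2 c (hc ▸ j.2) with h | h
    · left; rw [← hc, h, one_smul]
    · right; rw [← hc, h]; simp⟩
  have hpairInt : ∀ i j : R, ((P.pairingIn ℤ i j : ℤ) : ℂ) = coroot j i := fun i j => by
    rw [← hpair, ← P.algebraMap_pairingIn ℤ]; simp
  refine ⟨hco2, hcrys, hrefl, fun α hα β hβ => coroot_injOn hco2 hrefl hα hβ, ?_, ?_, ?_, ?_⟩
  · intro α hα β hβ
    have h1 := P.root_reflectionPerm ⟨α, hα⟩ ⟨β, hβ⟩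
    have h2 := P.coroot_reflectionPerm ⟨α, hα⟩ ⟨β, hβ⟩
    rw [RootPairing.reflection_apply_root, hpair, hroot, hroot, hroot] at h1
    rw [RootPairing.coreflection_apply_coroot, hpair, hcoroot, hcoroot, hcoroot] at h2
    rw [← h2, h1]
  · intro α hα β hβ n hn hpos hne
    have h1 : P.pairingIn ℤ ⟨α, hα⟩ ⟨β, hβ⟩ = n := by
      have := hpairInt ⟨α, hα⟩ ⟨β, hβ⟩
      rw [hn] at this
      exact_mod_cast this
    have := P.flip.root_sub_root_mem_of_pairingIn_pos (i := ⟨β, hβ⟩) (j := ⟨α, hα⟩)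
      (by
        have h2 : P.flip.pairingIn ℤ ⟨β, hβ⟩ ⟨α, hα⟩ = P.pairingIn ℤ ⟨α, hα⟩ ⟨β, hβ⟩ := by
          apply FaithfulSMul.algebraMap_injective ℤ ℂ
          rw [P.flip.algebraMap_pairingIn, P.algebraMap_pairingIn, RootPairing.pairing_flip]
        rwa [h2, h1])
      (by simpa using hne.symm)
    obtain ⟨δ, hδ⟩ := this
    exact ⟨δ, δ.2, hδ⟩
  · intro α hα β hβ n hn
    have h1 : P.pairingIn ℤ ⟨α, hα⟩ ⟨β, hβ⟩ = n := by
      have := hpairInt ⟨α, hα⟩ ⟨β, hβ⟩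
      rw [hn] at this
      exact_mod_cast this
    have := P.pairingIn_pairingIn_mem_set_of_isCrystal_of_isRed ⟨α, hα⟩ ⟨β, hβ⟩
    simp only [mem_insert_iff, mem_singleton_iff, Prod.mk.injEq] at this
    omega
  · intro α hα β hβ k hk
    have e1 := hpairInt ⟨α, hα⟩ ⟨β, hβ⟩
    have e2 := hpairInt ⟨β, hβ⟩ ⟨α, hα⟩
    have f1 := LinearMap.congr_fun hk α
    have f2 := LinearMap.congr_fun hk β
    simp only [LinearMap.smul_apply, hco2 α hα, hco2 β hβ, smul_eq_mul, ← e1, ← e2] at f1 f2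
    have := P.pairingIn_pairingIn_mem_set_of_isCrystal_of_isRed ⟨α, hα⟩ ⟨β, hβ⟩
    set m := P.pairingIn ℤ ⟨α, hα⟩ ⟨β, hβ⟩
    set m' := P.pairingIn ℤ ⟨β, hβ⟩ ⟨α, hα⟩
    have g1 : 2 * 2 = k * m := by exact_mod_cast f1
    have g2 : 2 * m' = k * 2 := by exact_mod_cast f2
    obtain rfl : m' = k := by omega
    simp only [mem_insert_iff, mem_singleton_iff, Prod.mk.injEq] at this
    rcases this with h | h | h | h | h | h | h | h | h | h | h | h | h <;>
      · obtain ⟨h1, h2⟩ := h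
        rw [h1, h2] at g1
        omega

omit [FiniteDimensional ℂ V] in
/-- A vector off all the real hyperplanes `Re ⟨·, α^∨⟩ = 0`. -/
lemma exists_regular (hco2 : ∀ α ∈ R, coroot α α = 2) :
    ∃ ρ : V, ∀ α ∈ R, (coroot α ρ).re ≠ 0 := by
  let f : R → Dual ℝ V := fun α => Complex.reLm ∘ₗ (coroot α).restrictScalars ℝ
  obtain ⟨ρ, hρ⟩ := Module.Dual.exists_forall_ne_zero_of_forall_exists f (fun α => ⟨α, by
    simp [f, hco2 α α.2]⟩)
  exact ⟨ρ, fun α hα => hρ ⟨α, hα⟩⟩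

end Finite

/-! ### The affine reflection group -/

section Affine

/-- Permutations of `V` act on complex-valued functions by `g • a = a ∘ g⁻¹`. -/
local instance permAction (V : Type*) : DistribMulAction (Equiv.Perm V) (V → ℂ) where
  smul g a := fun x => a (g⁻¹ x)
  one_smul a := rfl
  mul_smul g h a := by
    funext x
    change a ((g * h)⁻¹ x) = a (h⁻¹ (g⁻¹ x))
    rw [mul_inv_rev]; rfl
  smul_zero g := rfl
  smul_add g a b := rfl

lemma perm_smul_apply {V : Type*} (g : Equiv.Perm V) (a : V → ℂ) (x : V) :
    (g • a) x = a (g⁻¹ x) := rfl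

variable {V : Type*} [AddCommGroup V] [Module ℂ V]

/-- The affine root `x ↦ ⟨x, α^∨⟩ - k`. -/
def affFun (coroot : V → (V →ₗ[ℂ] ℂ)) (α : V) (k : ℤ) : V → ℂ := fun x => coroot α x - k

/-- The set of all affine roots. -/
def affRoots (R : Finset V) (coroot : V → (V →ₗ[ℂ] ℂ)) : Set (V → ℂ) :=
  {a | ∃ α ∈ R, ∃ k : ℤ, a = affFun coroot α k}

/-- The group generated by the affine reflections `x ↦ x - (⟨x, α^∨⟩ - k) α`. -/
def affGroup (R : Finset V) (coroot : V → (V →ₗ[ℂ] ℂ)) : Subgroup (Equiv.Perm V) :=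
  Subgroup.closure {g | ∃ α ∈ R, ∃ k : ℤ, ∀ x, g x = x - affFun coroot α k x • α}

variable {R : Finset V} {coroot : V → (V →ₗ[ℂ] ℂ)}

namespace CorootFacts

lemma exists_affRefl (h : CorootFacts R coroot) {α : V} (hα : α ∈ R) (k : ℤ) :
    ∃ g : affGroup R coroot, ∀ x, g.1 x = x - affFun coroot α k x • α := by
  have hinv : Function.Involutive (fun x : V => x - affFun coroot α k x • α) := by
    intro x
    simp only [affFun, map_sub, map_smul, h.two α hα, smul_eq_mul]
    module
  exact ⟨⟨hinv.toPerm, Subgroup.subset_closure ⟨α, hα, k, fun x => rfl⟩⟩, fun x => rfl⟩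

lemma affFun_inj (h : CorootFacts R coroot) {α β : V} (hα : α ∈ R) (hβ : β ∈ R) {k l : ℤ}
    (he : affFun coroot α k = affFun coroot β l) : α = β ∧ k = l := by
  have h0 := congrFun he 0
  simp only [affFun, map_zero, zero_sub, neg_inj, Int.cast_inj] at h0
  refine ⟨h.inj α hα β hβ (LinearMap.ext fun x => ?_), h0⟩
  have hx := congrFun he x
  simp only [affFun, h0] at hx
  exact sub_left_injective hx

lemma neg_root (h : CorootFacts R coroot) {α : V} (hα : α ∈ R) :
    -α ∈ R ∧ coroot (-α) = -coroot α := by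
  have e : α - coroot α α • α = -α := by rw [h.two α hα]; module
  have h1 := h.refl α hα α hα
  have h2 := h.corefl α hα α hα
  rw [e] at h1 h2
  refine ⟨h1, ?_⟩
  rw [h2, h.two α hα]; module

/-- The finite root underlying an affine root; zero on other functions. -/
noncomputable def rootOf (R : Finset V) (coroot : V → (V →ₗ[ℂ] ℂ)) (a : V → ℂ) : V :=
  open Classical in if ha : a ∈ affRoots R coroot then ha.choose else 0

lemma rootOf_affFun (h : CorootFacts R coroot) {α : V} (hα : α ∈ R) (k : ℤ) :
    rootOf R coroot (affFun coroot α k) = α := by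
  have ha : affFun coroot α k ∈ affRoots R coroot := ⟨α, hα, k, rfl⟩
  rw [rootOf, dif_pos ha]
  obtain ⟨hR, l, hl⟩ := ha.choose_spec
  exact (h.affFun_inj hα hR hl).1.symm

lemma exists_r (h : CorootFacts R coroot) (a : V → ℂ) : ∃ g : affGroup R coroot,
    a ∈ affRoots R coroot → ∀ x, g.1 x = x - a x • rootOf R coroot a := by
  by_cases ha : a ∈ affRoots R coroot
  · obtain ⟨α, hα, k, rfl⟩ := ha
    obtain ⟨g, hg⟩ := h.exists_affRefl hα k
    exact ⟨g, fun _ => by rw [h.rootOf_affFun hα]; exact hg⟩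
  · exact ⟨1, fun h => absurd h ha⟩

/-- The reflection attached to an affine root. -/
noncomputable def r (h : CorootFacts R coroot) (a : V → ℂ) : affGroup R coroot :=
  (h.exists_r a).choose

lemma r_apply (h : CorootFacts R coroot) {α : V} (hα : α ∈ R) (k : ℤ) (x : V) :
    (h.r (affFun coroot α k)).1 x = x - affFun coroot α k x • α := by
  have e : (h.r (affFun coroot α k)).1 x =
      x - affFun coroot α k x • rootOf R coroot (affFun coroot α k) :=
    (h.exists_r (affFun coroot α k)).choose_spec ⟨α, hα, k, rfl⟩ x
  rw [e, h.rootOf_affFun hα]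

lemma r_mul_self (h : CorootFacts R coroot) {α : V} (hα : α ∈ R) (k : ℤ) :
    h.r (affFun coroot α k) * h.r (affFun coroot α k) = 1 := by
  apply Subtype.ext
  ext x
  rw [Subgroup.coe_mul, Equiv.Perm.mul_apply, h.r_apply hα, h.r_apply hα]
  simp only [affFun, map_sub, map_smul, h.two α hα, smul_eq_mul, Subgroup.coe_one,
    Equiv.Perm.coe_one, id_eq]
  module

lemma r_inv (h : CorootFacts R coroot) {α : V} (hα : α ∈ R) (k : ℤ) :
    (h.r (affFun coroot α k))⁻¹ = h.r (affFun coroot α k) :=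
  inv_eq_of_mul_eq_one_left (h.r_mul_self hα k)

lemma eq_r (h : CorootFacts R coroot) {α : V} (hα : α ∈ R) (k : ℤ) {g : affGroup R coroot}
    (hg : ∀ x, g.1 x = x - affFun coroot α k x • α) : g = h.r (affFun coroot α k) :=
  Subtype.ext (Equiv.ext fun x => by rw [hg, h.r_apply hα])

lemma gen (h : CorootFacts R coroot) :
    Subgroup.closure (h.r '' affRoots R coroot) = ⊤ := by
  rw [eq_top_iff]
  rintro ⟨g, hg⟩ -
  induction hg using Subgroup.closure_induction with
  | mem x hx =>
    obtain ⟨α, hα, k, hx'⟩ := hx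
    refine Subgroup.subset_closure ⟨affFun coroot α k, ⟨α, hα, k, rfl⟩, ?_⟩
    exact (h.eq_r hα k hx').symm
  | one => exact one_mem _
  | mul x y hx hy ihx ihy => exact mul_mem ihx ihy
  | inv x hx ih => exact inv_mem ih

lemma r_smul (h : CorootFacts R coroot) {α β : V} (hα : α ∈ R) (k l : ℤ) :
    h.r (affFun coroot α k) • affFun coroot β l =
      affFun coroot β l - coroot β α • affFun coroot α k := by
  funext x
  change affFun coroot β l ((h.r (affFun coroot α k)).1⁻¹ x) = _
  rw [← Subgroup.coe_inv, h.r_inv hα, h.r_apply hα]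
  simp only [affFun, map_sub, map_smul, Pi.sub_apply, Pi.smul_apply, smul_eq_mul]
  ring

lemma smul_mem_and_conj (h : CorootFacts R coroot) (g : affGroup R coroot) :
    ∀ a ∈ affRoots R coroot, g • a ∈ affRoots R coroot ∧ h.r (g • a) = g * h.r a * g⁻¹ := by
  have hg : g ∈ Subgroup.closure (h.r '' affRoots R coroot) := h.gen ▸ Subgroup.mem_top g
  have step : ∀ b ∈ affRoots R coroot, ∀ a ∈ affRoots R coroot,
      h.r b • a ∈ affRoots R coroot ∧ h.r (h.r b • a) = h.r b * h.r a * (h.r b)⁻¹ := by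
    rintro _ ⟨β, hβ, l, rfl⟩ _ ⟨α, hα, k, rfl⟩
    obtain ⟨m, hm⟩ := h.crys α hα β hβ
    have hα' := h.refl β hβ α hα
    have e : h.r (affFun coroot β l) • affFun coroot α k =
        affFun coroot (α - coroot β α • β) (k - m * l) := by
      rw [h.r_smul hβ]
      funext x
      simp only [affFun, h.corefl β hβ α hα, hm, Pi.sub_apply, Pi.smul_apply, smul_eq_mul,
        LinearMap.sub_apply, LinearMap.smul_apply]
      push_cast
      ring
    rw [e]
    refine ⟨⟨_, hα', _, rfl⟩, (h.eq_r hα' _ fun x => ?_).symm⟩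
    rw [h.r_inv hβ, Subgroup.coe_mul, Subgroup.coe_mul, Equiv.Perm.mul_apply,
      Equiv.Perm.mul_apply, h.r_apply hβ, h.r_apply hα, h.r_apply hβ]
    simp only [affFun, h.corefl β hβ α hα, hm, map_sub, map_smul, smul_eq_mul,
        LinearMap.sub_apply, LinearMap.smul_apply, h.two β hβ]
    push_cast
    module
  induction hg using Subgroup.closure_induction_left with
  | one => intro a ha; simpa using ha
  | mul_left x hx y _ ih =>
    obtain ⟨b, hb, rfl⟩ := hx
    intro a ha
    have h1 := ih a ha
    have h2 := step b hb _ h1.1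
    rw [mul_smul]
    refine ⟨h2.1, ?_⟩
    rw [h2.2, h1.2]; group
  | inv_mul_cancel x hx y _ ih =>
    obtain ⟨b, hb, rfl⟩ := hx
    intro a ha
    have h1 := ih a ha
    have h2 := step b hb _ h1.1
    have e : (h.r b)⁻¹ = h.r b := by
      obtain ⟨β, hβ, l, rfl⟩ := hb
      exact h.r_inv hβ l
    rw [e, mul_smul]
    refine ⟨h2.1, ?_⟩
    rw [h2.2, h1.2]; group

/-- The value of a function at a point infinitesimally close to `γ`, displaced in the direction
`ρ`: the real part of the value at `γ` dominates its imaginary part, which dominates the variation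
along `ρ`. -/
noncomputable def lexVal (γ ρ : V) : (V → ℂ) →+ ℝ ×ₗ ℝ ×ₗ ℝ where
  toFun a := toLex ((a γ).re, toLex ((a γ).im, (a (γ + ρ) - a γ).re))
  map_zero' := by simp
  map_add' a b := by
    rw [← toLex_add, Prod.mk_add_mk, ← toLex_add, Prod.mk_add_mk]
    simp only [Pi.add_apply, Complex.add_re, Complex.add_im, Complex.sub_re]
    congr 4
    ring

omit [Module ℂ V] in
lemma lexVal_pos {γ ρ : V} {a : V → ℂ} : 0 < lexVal γ ρ a ↔
    0 < (a γ).re ∨ ((a γ).re = 0 ∧ (0 < (a γ).im ∨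
      ((a γ).im = 0 ∧ 0 < (a (γ + ρ) - a γ).re))) := by
  change toLex ((0 : ℝ), toLex ((0 : ℝ), (0 : ℝ))) < toLex (_, toLex (_, _)) ↔ _
  rw [Prod.Lex.toLex_lt_toLex, Prod.Lex.toLex_lt_toLex]
  simp only [eq_comm]

omit [Module ℂ V] in
lemma lexVal_eq_zero {γ ρ : V} {a : V → ℂ} : lexVal γ ρ a = 0 ↔
    (a γ).re = 0 ∧ (a γ).im = 0 ∧ (a (γ + ρ) - a γ).re = 0 := by
  change toLex (_, toLex (_, _)) = toLex ((0 : ℝ), toLex ((0 : ℝ), (0 : ℝ))) ↔ _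
  simp

/-- The affine reflection group, with positivity tested next to `γ`. -/
noncomputable def reflData (h : CorootFacts R coroot) (γ ρ : V)
    (hρ : ∀ α ∈ R, (coroot α ρ).re ≠ 0) :
    ReflData (affGroup R coroot) (V → ℂ) (ℝ ×ₗ ℝ ×ₗ ℝ) where
  Φ := affRoots R coroot
  r := h.r
  n a b := ⌊(b (rootOf R coroot a) - b 0).re⌋
  val := lexVal γ ρ
  smul_mem g a ha := (h.smul_mem_and_conj g a ha).1
  r_smul := by
    rintro _ ⟨α, hα, k, rfl⟩ _ ⟨β, hβ, l, rfl⟩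
    obtain ⟨m, hm⟩ := h.crys β hβ α hα
    rw [h.r_smul hα, h.rootOf_affFun hα]
    funext x
    simp [affFun, hm]
  n_self := by
    rintro _ ⟨α, hα, k, rfl⟩
    rw [h.rootOf_affFun hα]
    simp [affFun, h.two α hα]
  n_le := by
    rintro _ ⟨α, hα, k, rfl⟩ _ ⟨β, hβ, l, rfl⟩
    obtain ⟨m, hm⟩ := h.crys β hβ α hα
    rw [h.rootOf_affFun hα]
    have := h.le_three α hα β hβ m hm
    simpa [affFun, hm] using this
  r_conj g a ha := (h.smul_mem_and_conj g a ha).2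
  r_mul_self := by
    rintro _ ⟨α, hα, k, rfl⟩
    exact h.r_mul_self hα k
  r_neg := by
    rintro _ ⟨α, hα, k, rfl⟩
    obtain ⟨h1, h2⟩ := h.neg_root hα
    have e : -affFun coroot α k = affFun coroot (-α) (-k) := by
      funext x
      simp only [affFun, h2, Pi.neg_apply, LinearMap.neg_apply]
      push_cast; ring
    rw [e]
    refine (h.eq_r h1 _ fun x => ?_).symm
    rw [h.r_apply hα, ← e]
    simp
  gen := h.gen
  red := by
    rintro _ ⟨α, hα, k, rfl⟩ _ ⟨β, hβ, l, rfl⟩ m hm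
    have e0 := congrFun hm 0
    have e : (2 : ℂ) • coroot α = (m : ℂ) • coroot β := by
      ext x
      have := congrFun hm x
      simp only [affFun, Pi.smul_apply, map_zero, zsmul_eq_mul, LinearMap.smul_apply,
        smul_eq_mul, Int.cast_ofNat] at this e0 ⊢
      linear_combination this - e0
    rcases h.red α hα β hβ m e with rfl | rfl
    · left
      funext x
      have := congrFun hm x
      simp only [Pi.smul_apply, zsmul_eq_mul] at this
      push_cast at this
      linear_combination this / 2
    · right
      funext x
      have := congrFun hm x
      simp only [Pi.smul_apply, zsmul_eq_mul] at this
      push_cast at this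
      simp only [Pi.neg_apply]
      linear_combination this / 2
  val_ne := by
    rintro _ ⟨α, hα, k, rfl⟩ h0
    rw [lexVal_eq_zero] at h0
    apply hρ α hα
    have := h0.2.2
    simpa [affFun] using this
  str := by
    rintro _ ⟨α, hα, k, rfl⟩ _ ⟨β, hβ, l, rfl⟩ hn hne
    obtain ⟨m, hm⟩ := h.crys β hβ α hα
    rw [h.rootOf_affFun hα] at hn
    have hm0 : 0 < m := by simpa [affFun, hm] using hn
    by_cases hαβ : α = β
    · -- parallel hyperplanes: the difference is a nonzero constant
      right
      subst hαβ
      have e : affFun coroot α l - affFun coroot α k = fun _ => ((k - l : ℤ) : ℂ) := by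
        funext x
        simp [affFun]
      rw [e]
      refine ⟨fun h0 => ?_, fun g => rfl⟩
      rw [lexVal_eq_zero] at h0
      have h1 := h0.1
      rw [Complex.intCast_re, Int.cast_eq_zero, sub_eq_zero] at h1
      exact hne (by rw [h1])
    · left
      obtain ⟨δ, hδ, hδ'⟩ := h.str α hα β hβ m hm hm0 hαβ
      refine ⟨δ, hδ, l - k, ?_⟩
      funext x
      simp only [affFun, hδ', Pi.sub_apply, LinearMap.sub_apply]
      push_cast; ring
  fin g := by
    set B : V → ℤ := fun α => ⌈|(coroot α γ).re| + |(coroot α (g.1 γ)).re|⌉ with hB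
    have hfin : (⋃ α ∈ R, (affFun coroot α) '' Set.Icc (-B α) (B α)).Finite :=
      R.finite_toSet.biUnion fun α _ => (Set.finite_Icc _ _).image _
    refine hfin.subset ?_
    rintro _ ⟨⟨α, hα, k, rfl⟩, hk⟩
    simp only [Set.mem_iUnion]
    refine ⟨α, hα, k, ?_, rfl⟩
    have hv : (g⁻¹ • affFun coroot α k) γ = affFun coroot α k (g.1 γ) := by
      change affFun coroot α k ((g⁻¹).1⁻¹ γ) = _
      simp
    rw [lexVal_pos, lexVal_pos, hv] at hk
    simp only [affFun, Complex.sub_re, Complex.intCast_re] at hk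
    have hB1 : |(coroot α γ).re| + |(coroot α (g.1 γ)).re| ≤ (B α : ℝ) := Int.le_ceil _
    have a1 := neg_abs_le (coroot α γ).re
    have a2 := le_abs_self (coroot α γ).re
    have a3 := neg_abs_le (coroot α (g.1 γ)).re
    have a4 := le_abs_self (coroot α (g.1 γ)).re
    have a5 := abs_nonneg (coroot α γ).re
    have a6 := abs_nonneg (coroot α (g.1 γ)).re
    constructor
    · by_contra hc
      have hc' : (k : ℝ) < -(B α : ℝ) := by exact_mod_cast not_le.1 hc
      exact hk ⟨fun _ => Or.inl (by linarith), fun _ => Or.inl (by linarith)⟩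
    · by_contra hc
      have hc' : (B α : ℝ) < (k : ℝ) := by exact_mod_cast not_le.1 hc
      refine hk ⟨fun h => ?_, fun h => ?_⟩
      · exfalso; rcases h with h | ⟨h, -⟩ <;> linarith
      · exfalso; rcases h with h | ⟨h, -⟩ <;> linarith

/-- An element of the affine reflection group fixing `γ` has its linear part in `W(γ)`: with
positivity tested next to `γ`, a separating hyperplane of such an element passes through `γ`. -/
lemma stabilizer (h : CorootFacts R coroot) {γ ρ : V}
    (hρ : ∀ α ∈ R, (coroot α ρ).re ≠ 0) {g : Equiv.Perm V} (hg : g ∈ affGroup R coroot)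
    (hgγ : g γ = γ) : ∃ w ∈ intWeylGroup R coroot γ, ∀ x, g x = w (x - γ) + γ := by
  set D := h.reflData γ ρ hρ
  let S : Subgroup (affGroup R coroot) :=
    (MulAction.stabilizer (Equiv.Perm V) γ).comap (affGroup R coroot).subtype
  let K : Subgroup (affGroup R coroot) :=
    Subgroup.closure (h.r '' {a | a ∈ affRoots R coroot ∧ a γ = 0})
  have hKS : K ≤ S := by
    rw [Subgroup.closure_le]
    rintro _ ⟨_, ⟨⟨α, hα, k, rfl⟩, h0⟩, rfl⟩
    change (h.r (affFun coroot α k)).1 γ = γ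
    rw [h.r_apply hα, h0]
    simp
  have hSK : S ≤ K := by
    refine D.le_of_forall_mem_N hKS fun g hg a ha => Subgroup.subset_closure ⟨a, ⟨ha.1, ?_⟩, rfl⟩
    have hgγ : g.1 γ = γ := hg
    have hv : (g⁻¹ • a) γ = a γ := by
      change a ((g⁻¹).1⁻¹ γ) = _
      simp [hgγ]
    have hN : ¬ (0 < lexVal γ ρ a ↔ 0 < lexVal γ ρ (g⁻¹ • a)) := ha.2
    rw [lexVal_pos, lexVal_pos, hv] at hN
    by_contra hne
    apply hN
    have : (a γ).re = 0 → (a γ).im ≠ 0 := fun h1 h2 => hne (Complex.ext h1 h2)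
    tauto
  have hgK : (⟨g, hg⟩ : affGroup R coroot) ∈ K := hSK hgγ
  suffices ∀ g ∈ K, ∃ w ∈ intWeylGroup R coroot γ, ∀ x, g.1 x = w (x - γ) + γ from
    this _ hgK
  clear hgK hgγ hg g
  intro g hg
  induction hg using Subgroup.closure_induction with
  | mem x hx =>
    obtain ⟨_, ⟨⟨α, hα, k, rfl⟩, h0⟩, rfl⟩ := hx
    have hk : coroot α γ = k := sub_eq_zero.1 h0
    refine ⟨Module.reflection (h.two α hα), Subgroup.subset_closure ⟨α, hα, ⟨k, hk⟩, fun x => ?_⟩,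
      fun x => ?_⟩
    · rw [Module.reflection_apply]
    · rw [h.r_apply hα, Module.reflection_apply, map_sub, hk]
      simp only [affFun]
      abel
  | one => exact ⟨1, one_mem _, fun x => by simp⟩
  | mul x y _ _ ihx ihy =>
    obtain ⟨w, hw, hx⟩ := ihx
    obtain ⟨v, hv, hy⟩ := ihy
    exact ⟨w * v, mul_mem hw hv, fun z => by
      rw [Subgroup.coe_mul, Equiv.Perm.mul_apply, hx, hy, add_sub_cancel_right]; rfl⟩
  | inv x _ ih =>
    obtain ⟨w, hw, hx⟩ := ih
    refine ⟨w⁻¹, inv_mem hw, fun z => ?_⟩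
    rw [Subgroup.coe_inv, Equiv.Perm.inv_eq_iff_eq, hx, add_sub_cancel_right]
    change z = (w * w⁻¹) (z - γ) + γ
    rw [mul_inv_cancel]
    simp

lemma exists_of_mem_weylGroup {w : V ≃ₗ[ℂ] V} (hw : w ∈ weylGroup R coroot) :
    ∃ g ∈ affGroup R coroot, ∀ x, g x = w x := by
  refine ⟨w.toEquiv, ?_, fun x => rfl⟩
  induction hw using Subgroup.closure_induction with
  | mem x hx =>
    obtain ⟨α, hα, hx⟩ := hx
    exact Subgroup.subset_closure ⟨α, hα, 0, fun y => by simpa [affFun] using hx y⟩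
  | one => exact one_mem _
  | mul x y _ _ ihx ihy => exact mul_mem ihx ihy
  | inv x _ ih => exact inv_mem ih

lemma exists_translation (h : CorootFacts R coroot) {μ : V}
    (hμ : μ ∈ Submodule.span ℤ (R : Set V)) :
    ∃ g ∈ affGroup R coroot, ∀ x, g x = x + μ := by
  have hμ' : μ ∈ AddSubgroup.closure (R : Set V) := by
    rwa [← Submodule.mem_toAddSubgroup, Submodule.span_int_eq_addSubgroupClosure] at hμ
  clear hμ
  induction hμ' using AddSubgroup.closure_induction with
  | mem α hα =>
    -- the product of the reflections in two consecutive parallel hyperplanes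
    refine ⟨_, mul_mem (h.r (affFun coroot α 1)).2 (h.r (affFun coroot α 0)).2, fun x => ?_⟩
    rw [Equiv.Perm.mul_apply, h.r_apply hα, h.r_apply hα]
    simp only [affFun, map_sub, map_smul, h.two α hα, smul_eq_mul]
    push_cast
    module
  | zero => exact ⟨1, one_mem _, fun x => by simp⟩
  | add μ ν _ _ ih1 ih2 =>
    obtain ⟨g, hg, hg'⟩ := ih1
    obtain ⟨k, hk, hk'⟩ := ih2
    exact ⟨g * k, mul_mem hg hk, fun x => by rw [Equiv.Perm.mul_apply, hg', hk']; abel⟩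
  | neg μ _ ih =>
    obtain ⟨g, hg, hg'⟩ := ih
    exact ⟨g⁻¹, inv_mem hg, fun x => by rw [Equiv.Perm.inv_eq_iff_eq, hg']; abel⟩

/-- The lattice condition defines a subgroup containing the generators of `W(γ)`. -/
lemma mem_of_mem_intWeylGroup (h : CorootFacts R coroot) {γ : V} {w : V ≃ₗ[ℂ] V}
    (hw : w ∈ intWeylGroup R coroot γ) :
    w ∈ weylGroup R coroot ∧ w γ - γ ∈ Submodule.span ℤ (R : Set V) := by
  have hle : intWeylGroup R coroot γ ≤ weylGroup R coroot :=
    Subgroup.closure_mono fun w ⟨α, hα, _, hw⟩ => ⟨α, hα, hw⟩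
  refine ⟨hle hw, ?_⟩
  -- the Weyl group preserves the root lattice
  have step : ∀ x ∈ {w : V ≃ₗ[ℂ] V | ∃ α ∈ R, (∃ n : ℤ, coroot α γ = (n : ℂ)) ∧
      ∀ x : V, w x = x - coroot α x • α}, ∀ μ ∈ Submodule.span ℤ (R : Set V),
      x μ ∈ Submodule.span ℤ (R : Set V) := by
    rintro x ⟨α, hα, -, hx⟩ μ hμ
    induction hμ using Submodule.span_induction with
    | mem β hβ => rw [hx]; exact Submodule.subset_span (h.refl α hα β hβ)
    | zero => simp
    | add μ ν _ _ h1 h2 => rw [map_add]; exact add_mem h1 h2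
    | smul c μ _ h1 => rw [map_zsmul]; exact Submodule.smul_mem _ _ h1
  have step2 : ∀ x ∈ {w : V ≃ₗ[ℂ] V | ∃ α ∈ R, (∃ n : ℤ, coroot α γ = (n : ℂ)) ∧
      ∀ x : V, w x = x - coroot α x • α}, ∀ y : V ≃ₗ[ℂ] V,
      y γ - γ ∈ Submodule.span ℤ (R : Set V) →
      (x * y) γ - γ ∈ Submodule.span ℤ (R : Set V) := by
    intro x hx y hy
    have e : (x * y) γ - γ = x (y γ - γ) + (x γ - γ) := by
      rw [map_sub, LinearEquiv.mul_apply]; abel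
    rw [e]
    refine add_mem (step x hx _ hy) ?_
    obtain ⟨α, hα, ⟨n, hn⟩, hx⟩ := hx
    have e2 : x γ - γ = (-n) • α := by
      rw [hx, hn, neg_smul, Int.cast_smul_eq_zsmul]; abel
    rw [e2]
    exact Submodule.smul_mem _ _ (Submodule.subset_span hα)
  induction hw using Subgroup.closure_induction_left with
  | one => simp
  | mul_left x hx y hy ih => exact step2 x hx y ih
  | inv_mul_cancel x hx y hy ih =>
    have e : x⁻¹ = x := by
      apply inv_eq_of_mul_eq_one_left
      obtain ⟨α, hα, -, hx⟩ := hx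
      ext z
      rw [LinearEquiv.mul_apply, hx, hx, map_sub, map_smul, h.two α hα, smul_eq_mul]
      simp only [LinearEquiv.coe_one, id_eq]
      module
    rw [e]
    exact step2 x hx y ih

end CorootFacts

end Affine

/-- The integral Weyl group `W(γ)` equals `{w ∈ W : wγ − γ ∈ ℤR}`, where `ℤR` is the
root lattice. -/
theorem stmt_16 {V : Type*} [AddCommGroup V] [Module ℂ V] [FiniteDimensional ℂ V]
    (R : Finset V) (coroot : V → (V →ₗ[ℂ] ℂ))
    -- R is a finite reduced crystallographic root system spanning V
    (hspan : Submodule.span ℂ (R : Set V) = ⊤)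
    (hco2 : ∀ α ∈ R, coroot α α = 2)
    (hcrys : ∀ α ∈ R, ∀ β ∈ R, ∃ n : ℤ, coroot α β = (n : ℂ))
    (hrefl : ∀ α ∈ R, ∀ β ∈ R, β - coroot α β • α ∈ R)
    (hred : ∀ α ∈ R, ∀ c : ℂ, c • α ∈ R → c = 1 ∨ c = -1) :
    ∀ γ : V, ∀ w : V ≃ₗ[ℂ] V,
      w ∈ intWeylGroup R coroot γ ↔
        (w ∈ weylGroup R coroot ∧ w γ - γ ∈ Submodule.span ℤ (R : Set V)) := by
  intro γ w
  have h : CorootFacts R coroot := corootFacts hspan hco2 hcrys hrefl hred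
  refine ⟨h.mem_of_mem_intWeylGroup, fun ⟨hw, hμ⟩ => ?_⟩
  obtain ⟨ρ, hρ⟩ := exists_regular hco2
  obtain ⟨g, hg, hgw⟩ := CorootFacts.exists_of_mem_weylGroup hw
  obtain ⟨t, ht, htμ⟩ := h.exists_translation (neg_mem hμ)
  -- the affine transformation with linear part `w` fixing `γ`
  have hfix : ∀ x, (t * g) x = w (x - γ) + γ := fun x => by
    rw [Equiv.Perm.mul_apply, htμ, hgw, map_sub]; abel
  obtain ⟨v, hv, hv'⟩ := h.stabilizer (γ := γ) hρ (mul_mem ht hg) (by rw [hfix]; simp)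
  have : w = v := by
    ext x
    have h1 := (hfix (x + γ)).symm.trans (hv' (x + γ))
    simpa using h1
  rwa [this]
end

section
/- Suppose α, β ∈ M and α^∨, β^∨ ∈ L satisfy ⟨α,α^∨⟩ = ⟨β,β^∨⟩ = 2 and ⟨α,β^∨⟩ = ⟨β,α^∨⟩ = 0. For μ ∈ M write μ_α = ⟨μ,α^∨⟩, μ_β = ⟨μ,β^∨⟩, define s_α on M by s_αμ = μ − μ_α·α; for x ∈ L write x_α = ⟨α,x⟩, x_β = ⟨β,x⟩, and define s_α on L by s_αx = x − x_α·α^∨. Fix integers γ_α and g_α. Let λ, τ ∈ M and ℓ, t ∈ L satisfy: λ_α + λ_β = 2(γ_α − 1); λ_α − λ_β = τ_β − τ_α; τ_α + τ_β is even; ℓ_α = ℓ_β; and t_α = −t_β. Define the '2Ci Cayley transform' (λ₁, τ₁, ℓ₁, t₁) by λ₁ = s_αλ + (γ_α−1)α, τ₁ = τ − ((τ_α+τ_β)/2)·α, ℓ₁ = s_αℓ + (g_α−1)α^∨, t₁ = s_αt + (ℓ_α − g_α + 1)α^∨. Then (t₁)_α + (t₁)_β is even, and applying the '2Cr Cayley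 transform' to (λ₁,τ₁,ℓ₁,t₁), namely λ₂ = s_αλ₁ + (γ_α−1)α, τ₂ = s_ατ₁ + ((λ₁)_α − γ_α + 1)·α, ℓ₂ = s_αℓ₁ + (g_α−1)α^∨, t₂ = t₁ − (((t₁)_α + (t₁)_β)/2)·α^∨, yields (λ₂, τ₂, ℓ₂, t₂) = (λ, τ, ℓ, t). -/
/-!
Both transforms change `λ, τ` only by multiples of `α` and `ℓ, t` only by multiples of `α^∨`, so
the claim amounts to the vanishing of four integer coefficients. For `λ` and `ℓ` this is
`⟨α, α^∨⟩ = 2` alone: each transform is the same affine reflection, hence an involution.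
For `τ` it is `λ_α = γ_α - 1 + (τ_β - τ_α) / 2`, and for `t` it is `t_α = -t_β`.
-/

/-- The `2Cr` Cayley transform inverts the `2Ci` Cayley transform on extended
parameters: starting from a parameter `(λ,τ,ℓ,t)` of type `2Ci` for the orthogonal
pair `{α,β}`, applying the `2Ci` transform and then the `2Cr` transform returns the
original parameter. -/
theorem stmt_18 {L : Type*} [AddCommGroup L] [Module ℤ L]
    [Module.Free ℤ L] [Module.Finite ℤ L]
    (α β : Module.Dual ℤ L) (αv βv : L)
    (hαα : α αv = 2) (hββ : β βv = 2) (hαβ : α βv = 0) (hβα : β αv = 0)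
    (γa ga : ℤ)
    (lam tau : Module.Dual ℤ L) (ℓ t : L)
    -- conditions for a δ₀-fixed extended parameter of type 2Ci
    (h1 : lam αv + lam βv = 2 * (γa - 1))
    (h2 : lam αv - lam βv = tau βv - tau αv)
    (k : ℤ) (hk : tau αv + tau βv = 2 * k)
    (h3 : α ℓ = β ℓ)
    (h4 : α t = -β t) :
    -- (λ₁,τ₁,ℓ₁,t₁) is the 2Ci Cayley transform of (λ,τ,ℓ,t)
    ∀ lam₁ tau₁ ell₁ t₁,
      lam₁ = lam - lam αv • α + (γa - 1) • α →
      tau₁ = tau - k • α →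
      ell₁ = ℓ - α ℓ • αv + (ga - 1) • αv →
      t₁ = (t - α t • αv) + (α ℓ - ga + 1) • αv →
      -- (t₁)_α + (t₁)_β is even, and the 2Cr Cayley transform of (λ₁,τ₁,ℓ₁,t₁)
      -- is the original parameter (λ,τ,ℓ,t)
      Even (α t₁ + β t₁) ∧
      ∀ m : ℤ, α t₁ + β t₁ = 2 * m →
        lam₁ - lam₁ αv • α + (γa - 1) • α = lam ∧
        (tau₁ - tau₁ αv • α) + (lam₁ αv - γa + 1) • α = tau ∧
        ell₁ - α ell₁ • αv + (ga - 1) • αv = ℓ ∧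
        t₁ - m • αv = t := by
  -- Scalar multiples in `L` elaborate to the additive group's `zsmul`; identifying the given
  -- `ℤ`-module structure with the canonical one makes the two scalar actions agree.
  rename_i iG iM _ _
  obtain rfl : iM = AddCommGroup.toIntModule L := Subsingleton.elim _ _
  rintro _ _ _ _ rfl rfl rfl rfl
  -- With `c = ℓ_α - g_α + 1`, one has `(t₁)_α = 2c - t_α` and `(t₁)_β = t_β = -t_α`.
  have ht : α ((t - α t • αv) + (α ℓ - ga + 1) • αv)
      + β ((t - α t • αv) + (α ℓ - ga + 1) • αv) = 2 * (α ℓ - ga + 1 - α t) := by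
    simp only [map_add, map_sub, map_zsmul, smul_eq_mul, hαα, hβα]
    linarith
  refine ⟨⟨α ℓ - ga + 1 - α t, by rw [ht]; ring⟩, fun m hm => ?_⟩
  obtain rfl : m = α ℓ - ga + 1 - α t := by linarith
  -- The conditions on `λ` and `τ` combine to this value of `λ_α`, which cancels
  -- the coefficient of `α` in `τ₂ - τ`.
  have hl : lam αv = γa - 1 + k - tau αv := by linarith
  refine ⟨?_, ?_, ?_, ?_⟩
  · simp only [LinearMap.add_apply, LinearMap.sub_apply, LinearMap.smul_apply, smul_eq_mul, hαα]
    module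
  · simp only [LinearMap.add_apply, LinearMap.sub_apply, LinearMap.smul_apply, smul_eq_mul, hαα, hl]
    module
  · simp only [map_add, map_sub, map_zsmul, smul_eq_mul, hαα]
    module
  · module
end
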